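/- arXiv:1601.00145 — 4 statements merged into one kernel-verified Lean document; each statement's English description precedes it below -/
import Mathlib

section
/- For every packing of n ≥ 2 non-overlapping unit disks in the Euclidean plane, the number of pairs of disks that touch each other is at most ⌊3n − √(12n − 3)⌋. -/
open scoped Classical

noncomputable section

/-- Twice the contact number: the number of ordered pairs of distinct centers in `P`
at distance exactly `2`. -/
def contactsOrdered {d : ℕ} (P : Finset (EuclideanSpace ℝ (Fin d))) : ℕ :=
  (P.offDiag.filter fun p => dist p.1 p.2 = 2).card

/-!
Harborth's induction peels the outer boundary off the contact graph. With `n` disks, `d` ordered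
contacts and `b` disks on the outer boundary, the claim is `48 n - 12 ≤ (6 n - d) ^ 2`. At every
disk the angles between consecutive contacts are at least `π / 3` and sum to `2 π`, while on an
outer boundary walk of length `m ≥ b` the angles on the outer side sum to at least `π (m + 2)`.
Summing over all disks gives `d + 2 b + 6 ≤ 6 n`. Summing over the boundary disks gives
`d + 12 ≤ d' + 6 b`, where `d'` counts the ordered contacts that remain when these are removed.
A disk with at most one contact is removed directly.

The Jordan curve theorem is not needed to find the outer face. After a rotation no two centers have
the same height; each edge then stands for the region immediately to its left, `none` stands for
the region on the right of everything, and a vertex links the regions on its left just above and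
just below it. The outer face is the component of `none`. Growing a spanning tree of it counts the
regions against the links, and rotating darts around vertices turns that count into the angle sum.
-/

namespace Harborth

/-- Applied to `O = {none}`, this grows a spanning tree of a connected component. -/
theorem exists_superset_closed_of_card_le {N L : Type*} (links : Finset L) (u d : L → N)
    (O : Finset N) (hO : O.card ≤ (links.filter fun x => u x ∈ O ∧ d x ∈ O).card + 1) :
    ∃ O' : Finset N, O ⊆ O' ∧ (∀ x ∈ links, u x ∈ O' ↔ d x ∈ O') ∧
      O'.card ≤ (links.filter fun x => u x ∈ O' ∧ d x ∈ O').card + 1 := by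
  by_cases hclosed : ∀ x ∈ links, u x ∈ O ↔ d x ∈ O
  · exact ⟨O, Finset.Subset.rfl, hclosed, hO⟩
  push Not at hclosed
  obtain ⟨x, hx, hux⟩ := hclosed
  obtain ⟨O₁, hO₁⟩ : ∃ O₁, O₁ = insert (u x) (insert (d x) O) := ⟨_, rfl⟩
  have hsub : O ⊆ O₁ :=
    hO₁ ▸ (Finset.subset_insert _ _).trans (Finset.subset_insert _ _)
  have hcard : O₁.card ≤ O.card + 1 := by
    rcases hux with ⟨hu, -⟩ | ⟨-, hd⟩
    · rw [hO₁, Finset.insert_eq_of_mem (Finset.mem_insert_of_mem hu)]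
      exact Finset.card_insert_le _ _
    · rw [hO₁, Finset.insert_eq_of_mem hd]
      exact Finset.card_insert_le _ _
  have hlinks : (links.filter fun y => u y ∈ O ∧ d y ∈ O).card <
      (links.filter fun y => u y ∈ O₁ ∧ d y ∈ O₁).card := by
    apply Finset.card_lt_card
    rw [Finset.ssubset_iff_of_subset
      (Finset.monotone_filter_right _ fun y _ h => ⟨hsub h.1, hsub h.2⟩)]
    exact ⟨x, by simp [hx, hO₁], by simp only [Finset.mem_filter]; tauto⟩
  obtain ⟨O', hO', h⟩ := exists_superset_closed_of_card_le links u d O₁ (by lia)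
  exact ⟨O', hsub.trans hO', h⟩
termination_by links.card - (links.filter fun x => u x ∈ O ∧ d x ∈ O).card
decreasing_by
  have := Finset.card_filter_le links fun y => u y ∈ O₁ ∧ d y ∈ O₁
  lia

/-- `b` follows `a` in the cyclic order on `s` induced by `k`. -/
def IsCyclicSucc {α β : Type*} [LinearOrder β] (s : Finset α) (k : α → β) (a b : α) : Prop :=
  b ∈ s ∧ ((k a < k b ∧ ∀ c ∈ s, k a < k c → k b ≤ k c) ∨
    ((∀ c ∈ s, k c ≤ k a) ∧ ∀ c ∈ s, k b ≤ k c))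

theorem exists_isCyclicSucc {α β : Type*} [LinearOrder β] {s : Finset α} (k : α → β) (a : α)
    (hs : s.Nonempty) : ∃ b, IsCyclicSucc s k a b := by
  by_cases h : (s.filter fun c => k a < k c).Nonempty
  · obtain ⟨b, hb, hmin⟩ := Finset.exists_min_image _ k h
    rw [Finset.mem_filter] at hb
    exact ⟨b, hb.1, .inl ⟨hb.2, fun c hc hac => hmin c (Finset.mem_filter.2 ⟨hc, hac⟩)⟩⟩
  · obtain ⟨b, hb, hmin⟩ := Finset.exists_min_image _ k hs
    rw [Finset.not_nonempty_iff_eq_empty, Finset.filter_eq_empty_iff] at h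
    exact ⟨b, hb, .inr ⟨fun c hc => not_lt.1 (h hc), hmin⟩⟩

theorem IsCyclicSucc.left_unique {α β : Type*} [LinearOrder β] {s : Finset α} {k : α → β}
    (hk : Set.InjOn k s) {a b c : α} (ha : a ∈ s) (hb : b ∈ s) (hac : IsCyclicSucc s k a c)
    (hbc : IsCyclicSucc s k b c) : a = b := by
  apply hk ha hb
  obtain ⟨-, ⟨hlt, hnext⟩ | ⟨hmax, hmin⟩⟩ := hac <;>
    obtain ⟨-, ⟨hlt', hnext'⟩ | ⟨hmax', hmin'⟩⟩ := hbc
  · exact le_antisymm (not_lt.1 fun h => (hnext' a ha h).not_gt hlt)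
      (not_lt.1 fun h => (hnext b hb h).not_gt hlt')
  · exact absurd (hmin' a ha) hlt.not_ge
  · exact absurd (hmin b hb) hlt'.not_ge
  · exact le_antisymm (hmax' a ha) (hmax b hb)

/-- `F r` and `B r` describe the situation just after and just before `r`, in a sweep with finitely
many events `H`. -/
theorem iff_of_sweep {α : Type*} [LinearOrder α] (H : Finset α) {F B : α → Prop} {a b : α}
    (hab : a < b)
    (gap : ∀ r r', a ≤ r → r < r' → r' ≤ b → (∀ h ∈ H, h ≤ r ∨ r' ≤ h) → (F r ↔ B r'))
    (cross : ∀ h ∈ H, a < h → h < b → (B h ↔ F h)) : F a ↔ B b := by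
  by_cases hH : (H.filter fun h => a < h ∧ h < b).Nonempty
  · obtain ⟨h, hmem, hmin⟩ := Finset.exists_min_image _ id hH
    obtain ⟨hh, hah, hhb⟩ := Finset.mem_filter.1 hmem
    have hrest : F h ↔ B b := iff_of_sweep H hhb
      (fun r r' hr => gap r r' (hah.le.trans hr)) fun h' hh' hr => cross h' hh' (hah.trans hr)
    rw [gap a h le_rfl hah hhb.le, cross h hh hah hhb, hrest]
    intro h' hh'
    by_contra! hcon
    exact (hmin h' (Finset.mem_filter.2 ⟨hh', hcon.1, hcon.2.trans hhb⟩)).not_gt hcon.2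
  · rw [Finset.not_nonempty_iff_eq_empty, Finset.filter_eq_empty_iff] at hH
    refine gap a b le_rfl hab le_rfl fun h hh => ?_
    have := hH hh
    grind
termination_by (H.filter fun h => a < h ∧ h < b).card
decreasing_by
  apply Finset.card_lt_card
  rw [Finset.ssubset_iff_of_subset
    (Finset.monotone_filter_right _ fun y _ h => ⟨hah.trans h.1, h.2⟩)]
  exact ⟨h, hmem, by simp⟩

theorem sum_comp_of_injOn {α : Type*} {s : Finset α} {g : α → α} (hmaps : ∀ a ∈ s, g a ∈ s)
    (hinj : Set.InjOn g s) (f : α → ℝ) : ∑ a ∈ s, f (g a) = ∑ a ∈ s, f a :=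
  Finset.sum_nbij g hmaps hinj (Finset.surjOn_of_injOn_of_card_le g hmaps hinj le_rfl)
    fun _ _ => rfl

theorem arg_eq_of_im_pos {z : ℂ} (hz : 0 < z.im) :
    z.arg = Real.pi / 2 - Real.arctan (z.re / z.im) := by
  have hpos : 0 < z.arg := lt_of_le_of_ne (Complex.arg_nonneg_iff.2 hz.le)
    fun h => hz.ne' (Complex.arg_eq_zero_iff.1 h.symm).2
  have hlt : z.arg < Real.pi := lt_of_le_of_ne (Complex.arg_le_pi z)
    fun h => hz.ne' (Complex.arg_eq_pi_iff.1 h).2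
  have htan : Real.tan (Real.pi / 2 - z.arg) = z.re / z.im := by
    rw [Real.tan_pi_div_two_sub, Complex.tan_arg, inv_div]
  rw [← htan, Real.arctan_tan (by linarith) (by linarith), sub_sub_cancel]

theorem arg_eq_of_im_neg {z : ℂ} (hz : z.im < 0) :
    z.arg = -(Real.pi / 2) - Real.arctan (z.re / z.im) := by
  have h := arg_eq_of_im_pos (z := -z) (by simpa using hz)
  rw [Complex.arg_neg_eq_arg_add_pi_of_im_neg hz, Complex.neg_re, Complex.neg_im,
    neg_div_neg_eq] at h
  linarith

/-! ### Darts and sweep order -/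

section Darts

/-- The reciprocal slope of the segment from `a.1` to `a.2`; it is `0` by the junk value of
division if the segment is horizontal. -/
def slant (a : ℂ × ℂ) : ℝ := (a.2.re - a.1.re) / (a.2.im - a.1.im)

/-- The real part of the point at height `t` on the line through `a.1` and `a.2`. -/
def xAt (a : ℂ × ℂ) (t : ℝ) : ℝ := a.1.re + (t - a.1.im) * slant a

/-- The height `t` lies strictly between the heights of `a.1` and `a.2`. -/
def Spans (a : ℂ × ℂ) (t : ℝ) : Prop := 0 < (t - a.1.im) * (a.2.im - t)

/-- The vertical direction of the dart `a`: `1` if it goes up, `-1` otherwise. -/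
def dir (a : ℂ × ℂ) : ℝ := if a.1.im < a.2.im then 1 else -1

/-- Compares darts at a height just beyond `r` in the vertical direction `σ`: by the position at
height `r`, then by the slope. -/
def key (r σ : ℝ) (a : ℂ × ℂ) : ℝ ×ₗ ℝ := toLex (xAt a r, σ * slant a)

/-- The underlying edge of the dart `a`. -/
def edge (a : ℂ × ℂ) : Sym2 ℂ := s(a.1, a.2)

/-- The angle of the dart `a` to the horizontal, in `(-π, π]`. -/
def dirAngle (a : ℂ × ℂ) : ℝ := (a.2 - a.1).arg

variable {a b : ℂ × ℂ} {r σ t : ℝ}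

theorem edge_swap (a : ℂ × ℂ) : edge a.swap = edge a := Sym2.eq_swap

theorem slant_swap (a : ℂ × ℂ) : slant a.swap = slant a := by
  rw [slant, slant, Prod.fst_swap, Prod.snd_swap, ← neg_sub a.2.re, ← neg_sub a.2.im,
    neg_div_neg_eq]

theorem xAt_fst_im (a : ℂ × ℂ) : xAt a a.1.im = a.1.re := by simp [xAt]

theorem xAt_eq_add (a : ℂ × ℂ) (r t : ℝ) : xAt a t = xAt a r + (t - r) * slant a := by
  rw [xAt, xAt]; ring

theorem xAt_swap (h : a.1.im ≠ a.2.im) (t : ℝ) : xAt a.swap t = xAt a t := by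
  have : a.2.im - a.1.im ≠ 0 := sub_ne_zero.2 h.symm
  rw [xAt, xAt, slant_swap, Prod.fst_swap, slant]
  field_simp
  ring

theorem spans_swap : Spans a.swap t ↔ Spans a t := by
  rw [Spans, Spans, Prod.fst_swap, Prod.snd_swap]
  constructor <;> intro h <;> linear_combination h

theorem Spans.im_ne (h : Spans a t) : a.1.im ≠ a.2.im := by
  intro he
  rw [Spans, he] at h
  nlinarith [sq_nonneg (t - a.2.im)]

theorem spans_of_mul_lt (h₁ : σ * a.1.im < σ * t) (h₂ : σ * t < σ * a.2.im) : Spans a t := by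
  have h : 0 < σ ^ 2 * ((t - a.1.im) * (a.2.im - t)) := by
    linear_combination mul_pos (sub_pos.2 h₁) (sub_pos.2 h₂)
  exact pos_of_mul_pos_right h (sq_nonneg σ)

theorem Spans.mem_openSegment (h : Spans a t) : (⟨xAt a t, t⟩ : ℂ) ∈ openSegment ℝ a.1 a.2 := by
  have hne : a.2.im - a.1.im ≠ 0 := sub_ne_zero.2 h.im_ne.symm
  have hs : 0 < (t - a.1.im) / (a.2.im - a.1.im) ∧ 0 < (a.2.im - t) / (a.2.im - a.1.im) := by
    rcases mul_pos_iff.1 h with ⟨h₁, h₂⟩ | ⟨h₁, h₂⟩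
    · exact ⟨div_pos h₁ (by linarith), div_pos h₂ (by linarith)⟩
    · exact ⟨div_pos_of_neg_of_neg h₁ (by linarith), div_pos_of_neg_of_neg h₂ (by linarith)⟩
  refine ⟨_, _, hs.2, hs.1, by field_simp; ring, Complex.ext ?_ ?_⟩ <;>
    simp only [xAt, slant, Complex.add_re, Complex.add_im, Complex.real_smul, Complex.re_ofReal_mul,
      Complex.im_ofReal_mul] <;> field_simp <;> ring

theorem dir_of_lt (h : a.1.im < a.2.im) : dir a = 1 := if_pos h

theorem dir_of_gt (h : a.2.im < a.1.im) : dir a = -1 := if_neg h.not_gt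

theorem dir_swap (h : a.1.im ≠ a.2.im) : dir a.swap = -dir a := by
  rcases lt_or_gt_of_ne h with h | h
  · rw [dir_of_lt h, dir_of_gt (a := a.swap) h]
  · rw [dir_of_gt h, dir_of_lt (a := a.swap) h, neg_neg]

theorem dir_mul_lt (h : a.1.im ≠ a.2.im) : dir a * a.1.im < dir a * a.2.im := by
  rcases lt_or_gt_of_ne h with h | h
  · simpa [dir_of_lt h] using h
  · simpa [dir_of_gt h] using h

theorem sum_dir (S : Finset (ℂ × ℂ)) :
    ∑ a ∈ S, dir a = 2 * (S.filter fun a => a.1.im < a.2.im).card - S.card := by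
  have h : ∀ a : ℂ × ℂ, dir a = 2 * (if a.1.im < a.2.im then 1 else 0) - 1 := fun a => by
    rw [dir]; split <;> norm_num
  simp only [h, Finset.sum_sub_distrib, ← Finset.mul_sum, Finset.sum_boole, Finset.sum_const,
    nsmul_eq_mul, mul_one]

theorem key_lt_key : key r σ a < key r σ b ↔
    xAt a r < xAt b r ∨ xAt a r = xAt b r ∧ σ * slant a < σ * slant b :=
  Prod.Lex.toLex_lt_toLex

theorem dirAngle_eq (h : a.1.im ≠ a.2.im) :
    dirAngle a = dir a * (Real.pi / 2) - Real.arctan (slant a) := by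
  rcases lt_or_gt_of_ne h with h | h
  · rw [dir_of_lt h, one_mul]
    exact arg_eq_of_im_pos (by simpa using h)
  · rw [dir_of_gt h, neg_one_mul]
    exact arg_eq_of_im_neg (by simpa using h)

theorem dirAngle_swap (h : a.1.im ≠ a.2.im) :
    dirAngle a.swap = dirAngle a - dir a * Real.pi := by
  rw [dirAngle_eq h, dirAngle_eq (a := a.swap) h.symm, dir_swap h, slant_swap]
  ring

theorem dirAngle_pos_iff (h : a.1.im ≠ a.2.im) : 0 < dirAngle a ↔ a.1.im < a.2.im := by
  rw [dirAngle_eq h]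
  have h₁ := Real.arctan_lt_pi_div_two (slant a)
  have h₂ := Real.neg_pi_div_two_lt_arctan (slant a)
  rcases lt_or_gt_of_ne h with h | h
  · simp [dir_of_lt h, h, h₁]
  · simp only [dir_of_gt h, h.not_gt, iff_false]; linarith

theorem key_lt_key_iff_dirAngle_lt (ha : a.1.im < a.2.im) (hb : b.1.im < b.2.im)
    (hab : a.1 = b.1) : key a.1.im 1 a < key a.1.im 1 b ↔ dirAngle b < dirAngle a := by
  rw [key_lt_key, dirAngle_eq ha.ne, dirAngle_eq hb.ne, dir_of_lt ha, dir_of_lt hb, xAt_fst_im,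
    hab, xAt_fst_im]
  simp [Real.arctan_lt_arctan_iff]

theorem key_lt_key_iff_dirAngle_gt (ha : a.2.im < a.1.im) (hb : b.2.im < b.1.im)
    (hab : a.1 = b.1) : key a.1.im (-1) a < key a.1.im (-1) b ↔ dirAngle a < dirAngle b := by
  rw [key_lt_key, dirAngle_eq ha.ne', dirAngle_eq hb.ne', dir_of_gt ha, dir_of_gt hb, xAt_fst_im,
    hab, xAt_fst_im]
  simp [Real.arctan_lt_arctan_iff]

end Darts

/-! ### Plane straight-line drawings -/

/-- A straight-line drawing of a finite graph in `ℂ` without crossings, whose vertices have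
pairwise distinct heights. An edge is stored as its two darts, the ordered pairs of its ends. -/
structure PlaneDrawing where
  verts : Finset ℂ
  darts : Finset (ℂ × ℂ)
  im_injOn : Set.InjOn Complex.im verts
  swap_mem : ∀ {a}, a ∈ darts → a.swap ∈ darts
  fst_mem : ∀ {a}, a ∈ darts → a.1 ∈ verts
  fst_ne_snd : ∀ {a}, a ∈ darts → a.1 ≠ a.2
  notMem_openSegment : ∀ {a x}, a ∈ darts → x ∈ verts → x ∉ openSegment ℝ a.1 a.2
  eq_or_eq_swap : ∀ {a b z}, a ∈ darts → b ∈ darts → z ∈ openSegment ℝ a.1 a.2 →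
    z ∈ openSegment ℝ b.1 b.2 → a = b ∨ a = b.swap

namespace PlaneDrawing

variable (G : PlaneDrawing) {a b e : ℂ × ℂ} {r r' σ σ' : ℝ}

theorem snd_mem (ha : a ∈ G.darts) : a.2 ∈ G.verts := G.fst_mem (G.swap_mem ha)

theorem im_ne (ha : a ∈ G.darts) : a.1.im ≠ a.2.im :=
  fun h => G.fst_ne_snd ha (G.im_injOn (G.fst_mem ha) (G.snd_mem ha) h)

theorem xAt_ne_re {x : ℂ} (ha : a ∈ G.darts) (hx : x ∈ G.verts) (h : Spans a x.im) :
    xAt a x.im ≠ x.re := by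
  intro he
  have := h.mem_openSegment
  rw [he] at this
  exact G.notMem_openSegment ha hx this

/-- The darts that cross the heights just beyond `r` in the vertical direction `σ`, all of them
running in that direction. -/
def out (r σ : ℝ) : Finset (ℂ × ℂ) :=
  G.darts.filter fun a => σ * a.1.im ≤ σ * r ∧ σ * r < σ * a.2.im

theorem mem_out : a ∈ G.out r σ ↔ a ∈ G.darts ∧ σ * a.1.im ≤ σ * r ∧ σ * r < σ * a.2.im :=
  Finset.mem_filter

theorem mem_out_of_spans (ha : a ∈ G.darts) (h : Spans a r) : a ∈ G.out r (dir a) := by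
  refine G.mem_out.2 ⟨ha, ?_⟩
  rcases lt_or_gt_of_ne (G.im_ne ha) with hlt | hlt
  · rw [dir_of_lt hlt]; rw [Spans] at h; constructor <;> nlinarith
  · rw [dir_of_gt hlt]; rw [Spans] at h; constructor <;> nlinarith

theorem mem_out_dir (ha : a ∈ G.darts) : a ∈ G.out a.1.im (dir a) :=
  G.mem_out.2 ⟨ha, le_rfl, dir_mul_lt (G.im_ne ha)⟩

theorem fst_eq_or_spans {x : ℂ} (hx : x ∈ G.verts) (ha : a ∈ G.out x.im σ) :
    a.1 = x ∨ Spans a x.im := by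
  obtain ⟨had, h₁, h₂⟩ := G.mem_out.1 ha
  rcases h₁.lt_or_eq with h | h
  · exact .inr (spans_of_mul_lt h h₂)
  · have hσ : σ ≠ 0 := by rintro rfl; simp at h₂
    exact .inl (G.im_injOn (G.fst_mem had) hx (mul_left_cancel₀ hσ h))

theorem swap_mem_out_neg (hr : Spans a r) (ha : a ∈ G.out r σ) : a.swap ∈ G.out r (-σ) := by
  obtain ⟨had, h₁, h₂⟩ := G.mem_out.1 ha
  have hne : σ * a.1.im ≠ σ * r := by
    intro he
    have hσ : σ ≠ 0 := by rintro rfl; simp at h₂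
    rw [Spans, mul_left_cancel₀ hσ he, sub_self, zero_mul] at hr
    exact lt_irrefl _ hr
  refine G.mem_out.2 ⟨G.swap_mem had, ?_, ?_⟩
  · simpa using h₂.le
  · simpa using h₁.lt_of_ne hne

theorem eq_of_xAt_eq {t : ℝ} (ha : a ∈ G.out r σ) (hb : b ∈ G.out r σ) (hat : Spans a t)
    (hbt : Spans b t) (h : xAt a t = xAt b t) : a = b := by
  obtain ⟨had, ha₁, ha₂⟩ := G.mem_out.1 ha
  obtain ⟨hbd, hb₁, hb₂⟩ := G.mem_out.1 hb
  refine (G.eq_or_eq_swap had hbd hat.mem_openSegment (h ▸ hbt.mem_openSegment)).resolve_right ?_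
  rintro rfl
  exact lt_irrefl _ ((ha₁.trans_lt ha₂).trans_le (hb₁.trans hb₂.le))

theorem key_injOn : Set.InjOn (key r σ) (G.out r σ) := by
  intro a ha b hb h
  obtain ⟨-, ha₁, ha₂⟩ := G.mem_out.1 ha
  obtain ⟨-, hb₁, hb₂⟩ := G.mem_out.1 hb
  obtain ⟨hx, hs⟩ := Prod.mk.inj (toLex.injective h)
  have hσ : σ ≠ 0 := by rintro rfl; simp at ha₂
  obtain ⟨τ, hrτ, hτ⟩ := exists_between (lt_min ha₂ hb₂)
  rw [← mul_div_cancel₀ τ hσ] at hrτ hτ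
  refine G.eq_of_xAt_eq ha hb (spans_of_mul_lt (ha₁.trans_lt hrτ) (lt_min_iff.1 hτ).1)
    (spans_of_mul_lt (hb₁.trans_lt hrτ) (lt_min_iff.1 hτ).2) ?_
  rw [xAt_eq_add a r, xAt_eq_add b r, hx, mul_left_cancel₀ hσ hs]

/-- The leftmost edge crossing the heights just beyond `r` in the direction `σ` among those whose
dart satisfies `p`. An edge stands for the region on its left, `none` for the unbounded region on
the right. -/
def firstEdge (r σ : ℝ) (p : ℂ × ℂ → Prop) : Option (Sym2 ℂ) :=
  if h : ((G.out r σ).filter p).Nonempty then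
    some (edge (Finset.exists_min_image _ (key r σ) h).choose)
  else none

variable {p q : ℂ × ℂ → Prop}

theorem firstEdge_eq_none (h : ∀ a ∈ G.out r σ, ¬p a) : G.firstEdge r σ p = none :=
  dif_neg (by rwa [Finset.not_nonempty_iff_eq_empty, Finset.filter_eq_empty_iff])

theorem firstEdge_eq_some (ha : a ∈ G.out r σ) (hpa : p a)
    (hmin : ∀ b ∈ G.out r σ, p b → key r σ a ≤ key r σ b) :
    G.firstEdge r σ p = some (edge a) := by
  have h : ((G.out r σ).filter p).Nonempty := ⟨a, Finset.mem_filter.2 ⟨ha, hpa⟩⟩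
  obtain ⟨hc, hcmin⟩ := (Finset.exists_min_image _ (key r σ) h).choose_spec
  have hc' := Finset.mem_filter.1 hc
  rw [firstEdge, dif_pos h]
  exact congrArg (some ∘ edge) (G.key_injOn hc'.1 ha
    (le_antisymm (hcmin a (Finset.mem_filter.2 ⟨ha, hpa⟩)) (hmin _ hc'.1 hc'.2)))

theorem exists_min_of_mem_out (ha : a ∈ G.out r σ) (hpa : p a) :
    ∃ c ∈ G.out r σ, p c ∧ ∀ b ∈ G.out r σ, p b → key r σ c ≤ key r σ b := by
  obtain ⟨c, hc, hmin⟩ := Finset.exists_min_image ((G.out r σ).filter p) (key r σ)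
    ⟨a, Finset.mem_filter.2 ⟨ha, hpa⟩⟩
  obtain ⟨hco, hpc⟩ := Finset.mem_filter.1 hc
  exact ⟨c, hco, hpc, fun b hb hpb => hmin b (Finset.mem_filter.2 ⟨hb, hpb⟩)⟩

theorem firstEdge_congr (h : ∀ a ∈ G.out r σ, (p a ↔ q a)) :
    G.firstEdge r σ p = G.firstEdge r σ q := by
  rw [firstEdge, firstEdge]; simp only [Finset.filter_congr h]

theorem firstEdge_eq_of_swap
    (hpq : ∀ a, a ∈ G.out r σ ∧ p a ↔ a.swap ∈ G.out r' σ' ∧ q a.swap)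
    (hkey : ∀ a ∈ G.out r σ, p a → ∀ b ∈ G.out r σ, p b → key r σ a < key r σ b →
      key r' σ' a.swap < key r' σ' b.swap) :
    G.firstEdge r σ p = G.firstEdge r' σ' q := by
  by_cases h : ∃ a ∈ G.out r σ, p a
  · obtain ⟨a₀, ha₀, hpa₀⟩ := h
    obtain ⟨a, ha, hpa, hmin⟩ := G.exists_min_of_mem_out ha₀ hpa₀
    rw [G.firstEdge_eq_some ha hpa hmin, ← edge_swap]
    refine (G.firstEdge_eq_some ((hpq a).1 ⟨ha, hpa⟩).1 ((hpq a).1 ⟨ha, hpa⟩).2 ?_).symm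
    intro b hb hqb
    obtain ⟨hb', hpb⟩ := (hpq b.swap).2 (by simpa using ⟨hb, hqb⟩)
    rcases (hmin _ hb' hpb).lt_or_eq with hlt | heq
    · simpa using (hkey a ha hpa _ hb' hpb hlt).le
    · rw [G.key_injOn ha hb' heq, Prod.swap_swap]
  · push Not at h
    rw [G.firstEdge_eq_none h, G.firstEdge_eq_none]
    intro b hb hqb
    obtain ⟨hb', hpb⟩ := (hpq b.swap).2 (by simpa using ⟨hb, hqb⟩)
    exact h _ hb' hpb

/-- The region immediately to the left of `x`, just above (`σ = 1`) or just below (`σ = -1`) the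
height of `x`. -/
def side (x : ℂ) (σ : ℝ) : Option (Sym2 ℂ) :=
  G.firstEdge x.im σ fun a => x.re ≤ xAt a x.im

/-- A set of regions that is a union of faces: at every vertex it does not separate the regions on
the left of the vertex just above and just below it. -/
def IsFaceUnion (O : Finset (Option (Sym2 ℂ))) : Prop :=
  ∀ x ∈ G.verts, G.side x 1 ∈ O ↔ G.side x (-1) ∈ O

theorem out_swap_of_gap (hr : r < r') (hgap : ∀ x ∈ G.verts, x.im ≤ r ∨ r' ≤ x.im) :
    a ∈ G.out r 1 ↔ a.swap ∈ G.out r' (-1) := by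
  simp only [mem_out, one_mul, Prod.fst_swap, Prod.snd_swap, neg_one_mul, neg_le_neg_iff,
    neg_lt_neg_iff]
  constructor
  · rintro ⟨ha, h₁, h₂⟩
    exact ⟨G.swap_mem ha, (hgap _ (G.snd_mem ha)).resolve_left h₂.not_ge, h₁.trans_lt hr⟩
  · rintro ⟨ha, h₁, h₂⟩
    have had := G.swap_mem ha
    rw [Prod.swap_swap] at had
    exact ⟨had, (hgap _ (G.fst_mem had)).resolve_right h₂.not_ge, hr.trans_le h₁⟩

theorem spans_of_gap {t : ℝ} (hgap : ∀ x ∈ G.verts, x.im ≤ r ∨ r' ≤ x.im) (ha : a ∈ G.out r 1)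
    (hrt : r < t) (htr' : t < r') : Spans a t := by
  have h₁ := (G.mem_out.1 ha).2.1
  have h₂ := (G.mem_out.1 ((G.out_swap_of_gap (hrt.trans htr') hgap).1 ha)).2.1
  rw [Prod.fst_swap] at h₂
  exact spans_of_mul_lt (σ := 1) (by linarith) (by linarith)

theorem key_swap_lt_of_gap (hr : r < r') (hgap : ∀ x ∈ G.verts, x.im ≤ r ∨ r' ≤ x.im)
    (ha : a ∈ G.out r 1) (hb : b ∈ G.out r 1) (h : key r 1 a < key r 1 b) :
    key r' (-1) a.swap < key r' (-1) b.swap := by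
  have hxa := xAt_eq_add a r r'
  have hxb := xAt_eq_add b r r'
  have hrr := sub_pos.2 hr
  rw [key_lt_key] at h
  rw [key_lt_key, xAt_swap (G.im_ne (G.mem_out.1 ha).1), xAt_swap (G.im_ne (G.mem_out.1 hb).1),
    slant_swap, slant_swap]
  by_contra! hcon
  obtain ⟨hle, heq⟩ := hcon
  have hlt : xAt a r < xAt b r := by
    rcases h with h | ⟨h, hs⟩
    · exact h
    · nlinarith
  have hslant : slant b < slant a := by nlinarith
  have hlt' : xAt b r' < xAt a r' := by
    refine hle.lt_of_ne fun he => ?_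
    linarith [heq he.symm]
  -- The order of `a` and `b` is reversed between `r` and `r'`, so they meet at height `t`.
  set t := r + (xAt b r - xAt a r) / (slant a - slant b) with ht
  have hs := sub_pos.2 hslant
  have hrt : r < t := lt_add_of_pos_right _ (div_pos (sub_pos.2 hlt) hs)
  have htr' : t < r' := by
    rw [ht, ← lt_sub_iff_add_lt', div_lt_iff₀ hs]; linarith
  have hmeet : xAt a t = xAt b t := by
    rw [xAt_eq_add a r, xAt_eq_add b r, ht]; field_simp; ring
  rw [G.eq_of_xAt_eq ha hb (G.spans_of_gap hgap ha hrt htr')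
    (G.spans_of_gap hgap hb hrt htr') hmeet] at hlt
  exact lt_irrefl _ hlt

theorem key_swap_lt_iff_of_gap (hr : r < r') (hgap : ∀ x ∈ G.verts, x.im ≤ r ∨ r' ≤ x.im)
    (ha : a ∈ G.out r 1) (hb : b ∈ G.out r 1) :
    key r' (-1) a.swap < key r' (-1) b.swap ↔ key r 1 a < key r 1 b := by
  refine ⟨fun h => ?_, G.key_swap_lt_of_gap hr hgap ha hb⟩
  rcases lt_trichotomy (key r 1 a) (key r 1 b) with hlt | heq | hlt
  · exact hlt
  · rw [G.key_injOn ha hb heq] at h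
    exact absurd h (lt_irrefl _)
  · exact absurd h (G.key_swap_lt_of_gap hr hgap hb ha hlt).not_gt

theorem firstEdge_eq_of_gap (hr : r < r') (hgap : ∀ x ∈ G.verts, x.im ≤ r ∨ r' ≤ x.im)
    (hpq : ∀ a ∈ G.out r 1, (p a ↔ q a.swap)) : G.firstEdge r 1 p = G.firstEdge r' (-1) q := by
  refine G.firstEdge_eq_of_swap (fun a => ?_)
    fun a ha _ b hb _ => G.key_swap_lt_of_gap hr hgap ha hb
  rw [← G.out_swap_of_gap hr hgap]
  exact and_congr_right (hpq a)

theorem firstEdge_or (h : ∀ a ∈ G.out r σ, p a → ∀ b ∈ G.out r σ, q b → key r σ a ≤ key r σ b) :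
    G.firstEdge r σ (fun a => p a ∨ q a) = (G.firstEdge r σ p).or (G.firstEdge r σ q) := by
  by_cases hp : ∃ a ∈ G.out r σ, p a
  · obtain ⟨a₀, ha₀, hpa₀⟩ := hp
    obtain ⟨a, ha, hpa, hmin⟩ := G.exists_min_of_mem_out ha₀ hpa₀
    rw [G.firstEdge_eq_some ha hpa hmin, Option.some_or]
    exact G.firstEdge_eq_some ha (.inl hpa) fun b hb hpq =>
      hpq.elim (hmin b hb) (h a ha hpa b hb)
  · push Not at hp
    rw [G.firstEdge_eq_none hp, Option.none_or]
    exact G.firstEdge_congr fun a ha => or_iff_right (hp a ha)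

section Vertex

variable {x : ℂ} (hx : x ∈ G.verts)

include hx

theorem xAt_eq_re_iff (ha : a ∈ G.out x.im σ) : xAt a x.im = x.re ↔ a.1 = x := by
  constructor
  · intro h
    exact (G.fst_eq_or_spans hx ha).resolve_right
      fun hs => G.xAt_ne_re (G.mem_out.1 ha).1 hx hs h
  · rintro rfl
    exact xAt_fst_im a

theorem firstEdge_neg_of_not {q : ℝ → Prop} (hq : ¬q x.re) :
    G.firstEdge x.im σ (fun a => q (xAt a x.im)) =
      G.firstEdge x.im (-σ) fun a => q (xAt a x.im) := by
  have spans : ∀ {τ a}, a ∈ G.out x.im τ → q (xAt a x.im) → Spans a x.im := fun {τ a} ha hqa =>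
    (G.fst_eq_or_spans hx ha).resolve_left fun h =>
      hq ((G.xAt_eq_re_iff hx ha).2 h ▸ hqa)
  have swap : ∀ {τ a}, a ∈ G.out x.im τ → q (xAt a x.im) →
      a.swap ∈ G.out x.im (-τ) ∧ q (xAt a.swap x.im) := fun {τ a} ha hqa =>
    ⟨G.swap_mem_out_neg (spans ha hqa) ha, by rwa [xAt_swap (spans ha hqa).im_ne]⟩
  refine G.firstEdge_eq_of_swap (fun a => ⟨fun h => swap h.1 h.2, fun h => ?_⟩)
    fun a ha hqa b hb hqb hab => ?_
  · simpa using swap h.1 h.2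
  · rw [key_lt_key, xAt_swap (spans ha hqa).im_ne, xAt_swap (spans hb hqb).im_ne]
    refine .inl ((Prod.Lex.toLex_lt_toLex.1 hab).resolve_right fun h => ?_)
    rw [G.eq_of_xAt_eq ha hb (spans ha hqa) (spans hb hqb) h.1] at hab
    exact lt_irrefl _ hab

/-- If `q` fails at `x` the two regions coincide. Otherwise an edge to the left of `x` satisfying
`q` is crossed both above and below, and without such an edge the two regions are the sides of `x`,
which `O` does not separate. -/
theorem firstEdge_mem_iff_of_monotone {O : Finset (Option (Sym2 ℂ))}
    (hO : G.side x 1 ∈ O ↔ G.side x (-1) ∈ O) {q : ℝ → Prop} (hq : Monotone q) :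
    G.firstEdge x.im 1 (fun a => q (xAt a x.im)) ∈ O ↔
      G.firstEdge x.im (-1) (fun a => q (xAt a x.im)) ∈ O := by
  by_cases hqx : q x.re
  · have split : ∀ σ, G.firstEdge x.im σ (fun a => q (xAt a x.im)) =
        (G.firstEdge x.im σ fun a => q (xAt a x.im) ∧ xAt a x.im < x.re).or (G.side x σ) := by
      intro σ
      rw [side, ← G.firstEdge_or]
      · refine G.firstEdge_congr fun a _ => ?_
        have : x.re ≤ xAt a x.im → q (xAt a x.im) := fun h => hq h hqx
        grind
      · intro a _ hqa b _ hb
        exact (key_lt_key.2 (.inl (hqa.2.trans_le hb))).le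
    rw [split, split, G.firstEdge_neg_of_not hx (q := fun s => q s ∧ s < x.re) (by simp)]
    cases G.firstEdge x.im (-1) fun a => q (xAt a x.im) ∧ xAt a x.im < x.re with
    | none => simpa using hO
    | some _ => simp
  · rw [G.firstEdge_neg_of_not hx hqx]

theorem key_lt_key_iff_of_spans (he : e ∈ G.out x.im σ) (hex : Spans e x.im)
    (ha : a ∈ G.out x.im σ) : key x.im σ e < key x.im σ a ↔ xAt e x.im < xAt a x.im := by
  rw [key_lt_key, or_iff_left]
  rintro ⟨heq, hlt⟩
  rcases G.fst_eq_or_spans hx ha with h | h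
  · exact G.xAt_ne_re (G.mem_out.1 he).1 hx hex (heq.trans ((G.xAt_eq_re_iff hx ha).2 h))
  · rw [G.eq_of_xAt_eq he ha hex h heq] at hlt
    exact lt_irrefl _ hlt

theorem key_lt_key_iff_re_lt (ha : a ∈ G.out x.im σ) (hax : a.1 = x) (hb : b ∈ G.out x.im σ)
    (hbx : b.1 ≠ x) : key x.im σ a < key x.im σ b ↔ x.re < xAt b x.im := by
  rw [key_lt_key, (G.xAt_eq_re_iff hx ha).2 hax, or_iff_left]
  exact fun h => hbx ((G.xAt_eq_re_iff hx hb).1 h.1.symm)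

end Vertex

/-- The region immediately to the right of the dart `a` near its start, with the direction of `a`
taken as up. -/
def rightOf (a : ℂ × ℂ) : Option (Sym2 ℂ) :=
  G.firstEdge a.1.im (dir a) fun b => key a.1.im (dir a) a < key a.1.im (dir a) b

variable {O : Finset (Option (Sym2 ℂ))} (hO : G.IsFaceUnion O)

include hO in
theorem rightOf_mem_iff_of_up (he : e ∈ G.darts) (hup : e.1.im < e.2.im) :
    G.rightOf e ∈ O ↔ G.rightOf e.swap ∈ O := by
  rw [rightOf, rightOf, dir_swap hup.ne, dir_of_lt hup]
  refine iff_of_sweep (G.verts.image Complex.im)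
    (F := fun r => G.firstEdge r 1 (fun b => key r 1 e < key r 1 b) ∈ O)
    (B := fun r => G.firstEdge r (-1) (fun b => key r (-1) e.swap < key r (-1) b) ∈ O)
    hup (fun r r' her hrr' hr'e hgap => ?_) (Finset.forall_mem_image.2 fun x hx h₁ h₂ => ?_)
  · have heo : e ∈ G.out r 1 := by
      rw [mem_out, one_mul, one_mul, one_mul]
      exact ⟨he, her, hrr'.trans_le hr'e⟩
    rw [Finset.forall_mem_image] at hgap
    rw [G.firstEdge_eq_of_gap hrr' hgap (q := fun b => key r' (-1) e.swap < key r' (-1) b)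
      fun a ha => (G.key_swap_lt_iff_of_gap hrr' hgap heo ha).symm]
  · have hex : Spans e x.im := mul_pos (sub_pos.2 h₁) (sub_pos.2 h₂)
    have heo := G.mem_out_of_spans he hex
    rw [dir_of_lt hup] at heo
    rw [G.firstEdge_congr fun a => G.key_lt_key_iff_of_spans hx heo hex,
      G.firstEdge_congr fun a =>
        G.key_lt_key_iff_of_spans hx (G.swap_mem_out_neg hex heo) (spans_swap.2 hex),
      xAt_swap hup.ne]
    exact (G.firstEdge_mem_iff_of_monotone hx (hO x hx) fun s t hst h => lt_of_lt_of_le h hst).symm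

include hO in
theorem rightOf_mem_iff_swap (he : e ∈ G.darts) : G.rightOf e ∈ O ↔ G.rightOf e.swap ∈ O := by
  rcases lt_or_gt_of_ne (G.im_ne he) with h | h
  · exact G.rightOf_mem_iff_of_up hO he h
  · simpa using (G.rightOf_mem_iff_of_up hO (G.swap_mem he) h).symm

theorem side_one_mem_iff_none_mem {x₁ : ℂ} (hx₁ : x₁ ∈ G.verts)
    (hmin : ∀ x ∈ G.verts, x₁.im ≤ x.im)
    (hO : ∀ x ∈ G.verts.erase x₁, G.side x 1 ∈ O ↔ G.side x (-1) ∈ O) :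
    G.side x₁ 1 ∈ O ↔ none ∈ O := by
  obtain ⟨x₂, hx₂, hmax⟩ := Finset.exists_max_image G.verts Complex.im ⟨x₁, hx₁⟩
  have hlow : G.side x₁ 1 = G.firstEdge x₁.im 1 fun _ => True := by
    refine G.firstEdge_congr fun a ha => iff_true_intro (le_of_eq ?_)
    obtain ⟨had, h, -⟩ := G.mem_out.1 ha
    rw [one_mul, one_mul] at h
    exact ((G.xAt_eq_re_iff hx₁ ha).2
      (G.im_injOn (G.fst_mem had) hx₁ (h.antisymm (hmin _ (G.fst_mem had))))).symm
  have hhigh : G.firstEdge (x₂.im + 1) (-1) (fun _ => True) = none := by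
    refine G.firstEdge_eq_none fun a ha => absurd (G.mem_out.1 ha).2.1 (not_le.2 ?_)
    linarith [hmax _ (G.fst_mem (G.mem_out.1 ha).1)]
  rw [hlow, ← hhigh]
  refine iff_of_sweep (G.verts.image Complex.im)
    (F := fun r => G.firstEdge r 1 (fun _ => True) ∈ O)
    (B := fun r => G.firstEdge r (-1) (fun _ => True) ∈ O)
    (by linarith [hmin _ hx₂]) (fun r r' _ hrr' _ hgap => ?_)
    (Finset.forall_mem_image.2 fun x hx h _ => ?_)
  · rw [G.firstEdge_eq_of_gap hrr' (Finset.forall_mem_image.1 hgap) (q := fun _ => True)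
      fun _ _ => Iff.rfl]
  · have hne : x ≠ x₁ := by rintro rfl; exact lt_irrefl _ h
    exact (G.firstEdge_mem_iff_of_monotone hx (hO x (Finset.mem_erase.2 ⟨hne, hx⟩))
      (q := fun _ => True) fun _ _ _ h => h).symm

theorem side_neg_one_eq_none {x₁ : ℂ} (hmin : ∀ x ∈ G.verts, x₁.im ≤ x.im) :
    G.side x₁ (-1) = none := by
  refine G.firstEdge_eq_none fun a ha => absurd (G.mem_out.1 ha).2.2 (not_lt.2 ?_)
  linarith [hmin _ (G.snd_mem (G.mem_out.1 ha).1)]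

/-- A spanning tree has one link fewer than regions; the link at the lowest vertex is one more,
since the sweep connects its two regions through the other vertices. -/
theorem exists_outer_isFaceUnion (hne : G.verts.Nonempty) :
    ∃ O, none ∈ O ∧ G.IsFaceUnion O ∧ O.card ≤ (G.verts.filter fun x => G.side x 1 ∈ O).card := by
  obtain ⟨x₁, hx₁, hmin⟩ := Finset.exists_min_image G.verts Complex.im hne
  obtain ⟨O, hnone, hO, hcard⟩ := exists_superset_closed_of_card_le (G.verts.erase x₁)
    (fun x => G.side x 1) (fun x => G.side x (-1)) {none} (by simp)
  rw [Finset.singleton_subset_iff] at hnone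
  have hx₁O : G.side x₁ 1 ∈ O := (G.side_one_mem_iff_none_mem hx₁ hmin hO).2 hnone
  refine ⟨O, hnone, fun x hx => ?_, hcard.trans ?_⟩
  · by_cases hxx : x = x₁
    · rw [hxx, G.side_neg_one_eq_none hmin]
      exact iff_of_true hx₁O hnone
    · exact hO x (Finset.mem_erase.2 ⟨hxx, hx⟩)
  · refine Finset.card_lt_card ((Finset.ssubset_iff_of_subset fun x hx => ?_).2 ⟨x₁, ?_, ?_⟩)
    · simp only [Finset.mem_filter, Finset.mem_erase] at hx ⊢
      exact ⟨hx.1.2, hx.2.1⟩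
    · exact Finset.mem_filter.2 ⟨hx₁, hx₁O⟩
    · simp

/-- The region on the left of the dart `a` as seen when walking along it. An edge stands for the
region to its west, so this is the edge of `a` itself if `a` goes up. -/
def leftRegion (a : ℂ × ℂ) : Option (Sym2 ℂ) :=
  if a.1.im < a.2.im then some (edge a) else G.rightOf a

theorem leftRegion_of_up (ha : a.1.im < a.2.im) : G.leftRegion a = some (edge a) := if_pos ha

theorem leftRegion_of_down (ha : a.2.im < a.1.im) : G.leftRegion a = G.rightOf a :=
  if_neg ha.not_gt

include hO in
theorem leftRegion_swap_mem_iff_of_up (ha : a ∈ G.darts) (hup : a.1.im < a.2.im) :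
    G.leftRegion a.swap ∈ O ↔ G.rightOf a ∈ O := by
  rw [G.leftRegion_of_down (a := a.swap) hup, G.rightOf_mem_iff_swap hO ha]

theorem leftRegion_swap_of_down (hdown : a.2.im < a.1.im) :
    G.leftRegion a.swap = some (edge a) := by
  rw [G.leftRegion_of_up (a := a.swap) hdown, edge_swap]

/-- The darts leaving `x`. -/
def star (x : ℂ) : Finset (ℂ × ℂ) := G.darts.filter fun a => a.1 = x

variable {x : ℂ}

theorem mem_star : a ∈ G.star x ↔ a ∈ G.darts ∧ a.1 = x := Finset.mem_filter

theorem mem_out_one_iff (hax : a.1 = x) :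
    a ∈ G.out x.im 1 ↔ a ∈ G.star x ∧ a.1.im < a.2.im := by
  subst hax; simp [mem_out, mem_star]

theorem mem_out_neg_one_iff (hax : a.1 = x) :
    a ∈ G.out x.im (-1) ↔ a ∈ G.star x ∧ a.2.im < a.1.im := by
  subst hax; simp [mem_out, mem_star]

theorem firstEdge_eq_some_of_fst_eq (hx : x ∈ G.verts) (ha : a ∈ G.out x.im σ) (hax : a.1 = x)
    (hpa : p a) (hmin : ∀ c ∈ G.out x.im σ, c.1 = x → p c → key x.im σ a ≤ key x.im σ c)
    (hright : ∀ c ∈ G.out x.im σ, c.1 ≠ x → p c → x.re < xAt c x.im) :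
    G.firstEdge x.im σ p = some (edge a) := by
  refine G.firstEdge_eq_some ha hpa fun c hc hpc => ?_
  by_cases hcx : c.1 = x
  · exact hmin c hc hcx hpc
  · exact ((G.key_lt_key_iff_re_lt hx ha hax hc hcx).2 (hright c hc hcx hpc)).le

theorem side_eq_some (ha : a ∈ G.out x.im σ) (hax : a.1 = x)
    (hmin : ∀ c ∈ G.out x.im σ, c.1 = x → key x.im σ a ≤ key x.im σ c) :
    G.side x σ = some (edge a) := by
  have hx : x ∈ G.verts := hax ▸ G.fst_mem (G.mem_out.1 ha).1
  refine G.firstEdge_eq_some_of_fst_eq hx ha hax ((G.xAt_eq_re_iff hx ha).2 hax).ge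
    (fun c hc hcx _ => hmin c hc hcx) fun c hc hcx hle => ?_
  exact hle.lt_of_ne fun h => hcx ((G.xAt_eq_re_iff hx hc).1 h.symm)

theorem side_eq_of_forall_fst_ne (hx : x ∈ G.verts) (h : ∀ c ∈ G.out x.im σ, c.1 ≠ x) :
    G.side x σ = G.firstEdge x.im σ fun c => x.re < xAt c x.im :=
  G.firstEdge_congr fun c hc =>
    ⟨fun hle => hle.lt_of_ne fun he => h c hc ((G.xAt_eq_re_iff hx hc).1 he.symm), le_of_lt⟩

theorem dirAngle_injOn_star : Set.InjOn dirAngle (G.star x) := by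
  intro a ha b hb h
  obtain ⟨had, hax⟩ := G.mem_star.1 ha
  obtain ⟨hbd, hbx⟩ := G.mem_star.1 hb
  have hdir : dir a = dir b := by
    simp only [dir, ← dirAngle_pos_iff (G.im_ne had), ← dirAngle_pos_iff (G.im_ne hbd), h]
  rw [dirAngle_eq (G.im_ne had), dirAngle_eq (G.im_ne hbd), hdir, sub_right_inj,
    Real.arctan_injective.eq_iff] at h
  have hao := G.mem_out_dir had
  have hbo := G.mem_out_dir hbd
  rw [hax, hdir] at hao
  rw [hbx] at hbo
  refine G.key_injOn hao hbo ?_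
  rw [key, key, h, ← hax, xAt_fst_im, hax, ← hbx, xAt_fst_im]

theorem rightOf_eq_some_of_up (ha : a ∈ G.darts) (hup : a.1.im < a.2.im) (hb : b ∈ G.star a.1)
    (hbup : b.1.im < b.2.im) (hba : dirAngle b < dirAngle a)
    (hprev : ∀ c ∈ G.star a.1, dirAngle c < dirAngle a → dirAngle c ≤ dirAngle b) :
    G.rightOf a = some (edge b) := by
  have hao := G.mem_out_dir ha
  have hba₁ := (G.mem_star.1 hb).2
  rw [rightOf]
  rw [dir_of_lt hup] at hao ⊢
  refine G.firstEdge_eq_some_of_fst_eq (G.fst_mem ha) ((G.mem_out_one_iff hba₁).2 ⟨hb, hbup⟩) hba₁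
    ((key_lt_key_iff_dirAngle_lt hup hbup hba₁.symm).2 hba) (fun c hc hca hac => ?_)
    fun c hc hca => (G.key_lt_key_iff_re_lt (G.fst_mem ha) hao rfl hc hca).1
  obtain ⟨hcs, hcup⟩ := (G.mem_out_one_iff hca).1 hc
  rw [key_lt_key_iff_dirAngle_lt hup hcup hca.symm] at hac
  rw [← not_lt, ← hca, key_lt_key_iff_dirAngle_lt hcup hbup (hca.trans hba₁.symm), not_lt]
  exact hprev c hcs hac

theorem rightOf_eq_some_of_down (ha : a ∈ G.darts) (hdown : a.2.im < a.1.im)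
    (hb : b ∈ G.star a.1) (hbdown : b.2.im < b.1.im) (hab : dirAngle a < dirAngle b)
    (hnext : ∀ c ∈ G.star a.1, dirAngle a < dirAngle c → dirAngle b ≤ dirAngle c) :
    G.rightOf a = some (edge b) := by
  have hao := G.mem_out_dir ha
  have hba₁ := (G.mem_star.1 hb).2
  rw [rightOf]
  rw [dir_of_gt hdown] at hao ⊢
  refine G.firstEdge_eq_some_of_fst_eq (G.fst_mem ha)
    ((G.mem_out_neg_one_iff hba₁).2 ⟨hb, hbdown⟩) hba₁
    ((key_lt_key_iff_dirAngle_gt hdown hbdown hba₁.symm).2 hab) (fun c hc hca hac => ?_)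
    fun c hc hca => (G.key_lt_key_iff_re_lt (G.fst_mem ha) hao rfl hc hca).1
  obtain ⟨hcs, hcdown⟩ := (G.mem_out_neg_one_iff hca).1 hc
  rw [key_lt_key_iff_dirAngle_gt hdown hcdown hca.symm] at hac
  rw [← not_lt, ← hca, key_lt_key_iff_dirAngle_gt hcdown hbdown (hca.trans hba₁.symm), not_lt]
  exact hnext c hcs hac

theorem rightOf_eq_firstEdge_of_up (ha : a ∈ G.darts) (hup : a.1.im < a.2.im)
    (hmin : ∀ c ∈ G.star a.1, c.1.im < c.2.im → dirAngle a ≤ dirAngle c) :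
    G.rightOf a = G.firstEdge a.1.im 1 fun c => a.1.re < xAt c a.1.im := by
  have hao := G.mem_out_dir ha
  rw [rightOf]
  rw [dir_of_lt hup] at hao ⊢
  refine G.firstEdge_congr fun c hc => ?_
  by_cases hca : c.1 = a.1
  · obtain ⟨hcs, hcup⟩ := (G.mem_out_one_iff hca).1 hc
    rw [(G.xAt_eq_re_iff (G.fst_mem ha) hc).2 hca, key_lt_key_iff_dirAngle_lt hup hcup hca.symm]
    exact iff_of_false (hmin c hcs hcup).not_gt (lt_irrefl _)
  · exact G.key_lt_key_iff_re_lt (G.fst_mem ha) hao rfl hc hca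

theorem rightOf_eq_firstEdge_of_down (ha : a ∈ G.darts) (hdown : a.2.im < a.1.im)
    (hmax : ∀ c ∈ G.star a.1, c.2.im < c.1.im → dirAngle c ≤ dirAngle a) :
    G.rightOf a = G.firstEdge a.1.im (-1) fun c => a.1.re < xAt c a.1.im := by
  have hao := G.mem_out_dir ha
  rw [rightOf]
  rw [dir_of_gt hdown] at hao ⊢
  refine G.firstEdge_congr fun c hc => ?_
  by_cases hca : c.1 = a.1
  · obtain ⟨hcs, hcdown⟩ := (G.mem_out_neg_one_iff hca).1 hc
    rw [(G.xAt_eq_re_iff (G.fst_mem ha) hc).2 hca,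
      key_lt_key_iff_dirAngle_gt hdown hcdown hca.symm]
    exact iff_of_false (hmax c hcs hcdown).not_gt (lt_irrefl _)
  · exact G.key_lt_key_iff_re_lt (G.fst_mem ha) hao rfl hc hca

theorem leftRegion_eq_side_one (ha : a ∈ G.darts)
    (hlast : ∀ c ∈ G.star a.1, dirAngle c ≤ dirAngle a) : G.leftRegion a = G.side a.1 1 := by
  rcases lt_or_gt_of_ne (G.im_ne ha) with hup | hdown
  · rw [G.leftRegion_of_up hup, G.side_eq_some (dir_of_lt hup ▸ G.mem_out_dir ha) rfl]
    intro c hc hca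
    obtain ⟨hcs, hcup⟩ := (G.mem_out_one_iff hca).1 hc
    rw [← not_lt, ← hca, key_lt_key_iff_dirAngle_lt hcup hup hca, not_lt]
    exact hlast c hcs
  · rw [G.leftRegion_of_down hdown,
      G.rightOf_eq_firstEdge_of_down ha hdown fun c hc _ => hlast c hc,
      G.side_eq_of_forall_fst_ne (G.fst_mem ha), ← G.firstEdge_neg_of_not (G.fst_mem ha)
        (q := fun s => a.1.re < s) (lt_irrefl _)]
    intro c hc hca
    obtain ⟨hcs, hcup⟩ := (G.mem_out_one_iff hca).1 hc
    have hcpos := (dirAngle_pos_iff hcup.ne).2 hcup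
    exact ((dirAngle_pos_iff hdown.ne').1 (hcpos.trans_le (hlast c hcs))).not_gt hdown

include hO in
theorem leftRegion_swap_mem_iff_side_neg_one (ha : a ∈ G.darts)
    (hfirst : ∀ c ∈ G.star a.1, dirAngle a ≤ dirAngle c) :
    G.leftRegion a.swap ∈ O ↔ G.side a.1 (-1) ∈ O := by
  rcases lt_or_gt_of_ne (G.im_ne ha) with hup | hdown
  · rw [G.leftRegion_swap_mem_iff_of_up hO ha hup,
      G.rightOf_eq_firstEdge_of_up ha hup fun c hc _ => hfirst c hc,
      G.side_eq_of_forall_fst_ne (G.fst_mem ha), G.firstEdge_neg_of_not (G.fst_mem ha)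
        (q := fun s => a.1.re < s) (lt_irrefl _)]
    intro c hc hca
    obtain ⟨hcs, hcdown⟩ := (G.mem_out_neg_one_iff hca).1 hc
    have hapos := (dirAngle_pos_iff hup.ne).2 hup
    exact ((dirAngle_pos_iff hcdown.ne').1 (hapos.trans_le (hfirst c hcs))).not_gt hcdown
  · rw [G.leftRegion_swap_of_down hdown,
      G.side_eq_some (dir_of_gt hdown ▸ G.mem_out_dir ha) rfl]
    intro c hc hca
    obtain ⟨hcs, hcdown⟩ := (G.mem_out_neg_one_iff hca).1 hc
    rw [← not_lt, ← hca, key_lt_key_iff_dirAngle_gt hcdown hdown hca, not_lt]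
    exact hfirst c hcs

include hO in
theorem leftRegion_swap_mem_iff_of_lt (ha : a ∈ G.darts) (hb : b ∈ G.star a.1)
    (hab : dirAngle a < dirAngle b)
    (hnext : ∀ c ∈ G.star a.1, dirAngle a < dirAngle c → dirAngle b ≤ dirAngle c) :
    G.leftRegion b.swap ∈ O ↔ G.leftRegion a ∈ O := by
  obtain ⟨hbd, hba⟩ := G.mem_star.1 hb
  have hprev : ∀ c ∈ G.star b.1, dirAngle c < dirAngle b → dirAngle c ≤ dirAngle a :=
    fun c hc hcb => not_lt.1 fun hac => (hnext c (hba ▸ hc) hac).not_gt hcb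
  have has : a ∈ G.star b.1 := G.mem_star.2 ⟨ha, hba.symm⟩
  rcases lt_or_gt_of_ne (G.im_ne ha) with ha' | ha' <;>
    rcases lt_or_gt_of_ne (G.im_ne hbd) with hb' | hb'
  · rw [G.leftRegion_swap_mem_iff_of_up hO hbd hb', G.leftRegion_of_up ha',
      G.rightOf_eq_some_of_up hbd hb' has ha' hab hprev]
  · have hapos := (dirAngle_pos_iff ha'.ne).2 ha'
    exact absurd hb' ((dirAngle_pos_iff hb'.ne').1 (hapos.trans hab)).not_gt
  · have haneg : dirAngle a ≤ 0 := not_lt.1 fun h => ha'.not_gt ((dirAngle_pos_iff ha'.ne').1 h)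
    have hbpos := (dirAngle_pos_iff hb'.ne).2 hb'
    rw [G.leftRegion_swap_mem_iff_of_up hO hbd hb', G.leftRegion_of_down ha',
      G.rightOf_eq_firstEdge_of_up hbd hb', G.rightOf_eq_firstEdge_of_down ha ha', hba,
      ← G.firstEdge_neg_of_not (G.fst_mem ha) (q := fun s => a.1.re < s) (lt_irrefl _)]
    · intro c hc hc'
      exact not_lt.1 fun hac => hc'.not_gt
        ((dirAngle_pos_iff hc'.ne').1 (hbpos.trans_le (hnext c hc hac)))
    · intro c hc hc'
      exact not_lt.1 fun hcb =>
        (haneg.trans_lt ((dirAngle_pos_iff hc'.ne).2 hc')).not_ge (hprev c hc hcb)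
  · rw [G.leftRegion_swap_of_down hb', G.leftRegion_of_down ha',
      G.rightOf_eq_some_of_down ha ha' hb hb' hab hnext]

/-- The dart following `a` counterclockwise among the darts leaving the same vertex. -/
def next (a : ℂ × ℂ) : ℂ × ℂ := Classical.epsilon (IsCyclicSucc (G.star a.1) dirAngle a)

theorem isCyclicSucc_next (ha : a ∈ G.darts) :
    IsCyclicSucc (G.star a.1) dirAngle a (G.next a) :=
  Classical.epsilon_spec (exists_isCyclicSucc dirAngle a ⟨a, G.mem_star.2 ⟨ha, rfl⟩⟩)

theorem next_mem_star (ha : a ∈ G.star x) : G.next a ∈ G.star x := by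
  obtain ⟨had, rfl⟩ := G.mem_star.1 ha
  exact (G.isCyclicSucc_next had).1

theorem next_injOn : Set.InjOn G.next G.darts := by
  intro a ha b hb h
  have hsucc := G.isCyclicSucc_next ha
  have hstar : G.star b.1 = G.star a.1 := by
    rw [← (G.mem_star.1 hsucc.1).2, h, (G.mem_star.1 (G.isCyclicSucc_next hb).1).2]
  refine hsucc.left_unique G.dirAngle_injOn_star (G.mem_star.2 ⟨ha, rfl⟩)
    (hstar ▸ G.mem_star.2 ⟨hb, rfl⟩) ?_
  rw [h, ← hstar]
  exact G.isCyclicSucc_next hb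

/-- The dart preceding `a` on the boundary of the face on the left of `a`. -/
def facePred (a : ℂ × ℂ) : ℂ × ℂ := (G.next a).swap

theorem facePred_mem (ha : a ∈ G.darts) : G.facePred a ∈ G.darts :=
  G.swap_mem (G.mem_star.1 (G.isCyclicSucc_next ha).1).1

include hO in
theorem leftRegion_facePred_mem_iff (ha : a ∈ G.darts) :
    G.leftRegion (G.facePred a) ∈ O ↔ G.leftRegion a ∈ O := by
  obtain ⟨hmem, ⟨hlt, hnext⟩ | ⟨hlast, hfirst⟩⟩ := G.isCyclicSucc_next ha
  · exact G.leftRegion_swap_mem_iff_of_lt hO ha hmem hlt hnext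
  · obtain ⟨hd, heq⟩ := G.mem_star.1 hmem
    rw [G.leftRegion_eq_side_one ha hlast, hO a.1 (G.fst_mem ha), ← heq]
    exact G.leftRegion_swap_mem_iff_side_neg_one hO hd (heq ▸ hfirst)

/-- `a` is the last dart leaving its vertex in the order of `dirAngle`. -/
def IsLast (a : ℂ × ℂ) : Prop := ∀ c ∈ G.star a.1, dirAngle c ≤ dirAngle a

/-- The angle swept when rotating `a` counterclockwise to `next a`, which is `2 * π` if `a` is the
only dart leaving its vertex. -/
def cornerAngle (a : ℂ × ℂ) : ℝ :=
  dirAngle (G.next a) - dirAngle a + if G.IsLast a then 2 * Real.pi else 0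

theorem existsUnique_isLast (hx : (G.star x).Nonempty) : ∃! a, a ∈ G.star x ∧ G.IsLast a := by
  obtain ⟨a, ha, hmax⟩ := Finset.exists_max_image (G.star x) dirAngle hx
  have hax := (G.mem_star.1 ha).2
  refine ⟨a, ⟨ha, by rwa [IsLast, hax]⟩, fun b ⟨hb, hblast⟩ => ?_⟩
  rw [IsLast, (G.mem_star.1 hb).2] at hblast
  exact G.dirAngle_injOn_star hb ha (le_antisymm (hmax b hb) (hblast a ha))

theorem sum_cornerAngle_star (hx : (G.star x).Nonempty) :
    ∑ a ∈ G.star x, G.cornerAngle a = 2 * Real.pi := by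
  obtain ⟨a, ⟨ha, halast⟩, huniq⟩ := G.existsUnique_isLast hx
  have hsum : ∑ a ∈ G.star x, dirAngle (G.next a) = ∑ a ∈ G.star x, dirAngle a :=
    sum_comp_of_injOn (fun _ => G.next_mem_star)
      (G.next_injOn.mono fun a ha => (G.mem_star.1 ha).1) dirAngle
  simp only [cornerAngle, Finset.sum_add_distrib, Finset.sum_sub_distrib, hsum, sub_self, zero_add]
  rw [Finset.sum_eq_single_of_mem a ha fun b hb hba => if_neg fun h => hba (huniq b ⟨hb, h⟩),
    if_pos halast]

theorem sum_cornerAngle_of_facePred_mem {S : Finset (ℂ × ℂ)} (hS : S ⊆ G.darts)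
    (hface : ∀ a ∈ S, G.facePred a ∈ S) :
    ∑ a ∈ S, G.cornerAngle a = Real.pi * (S.card - 2 * (S.filter fun a => a.1.im < a.2.im).card) +
      2 * Real.pi * (S.filter G.IsLast).card := by
  have hinj : Set.InjOn G.facePred S := Prod.swap_injective.comp_injOn (G.next_injOn.mono hS)
  have hsum : ∑ a ∈ S, dirAngle (G.next a) = ∑ a ∈ S, (dirAngle a - dir a * Real.pi) :=
    calc ∑ a ∈ S, dirAngle (G.next a)
        = ∑ a ∈ S, dirAngle (G.facePred a).swap := by simp only [facePred, Prod.swap_swap]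
      _ = ∑ a ∈ S, dirAngle a.swap := sum_comp_of_injOn hface hinj fun a => dirAngle a.swap
      _ = ∑ a ∈ S, (dirAngle a - dir a * Real.pi) :=
        Finset.sum_congr rfl fun a ha => dirAngle_swap (G.im_ne (hS ha))
  simp only [cornerAngle, Finset.sum_add_distrib, Finset.sum_sub_distrib, hsum, ← Finset.sum_mul,
    sum_dir, ← Finset.sum_filter, Finset.sum_const, nsmul_eq_mul]
  ring

theorem card_up_le (S : Finset (ℂ × ℂ)) (hS : ∀ a ∈ S, G.leftRegion a ∈ O) :
    (S.filter fun a => a.1.im < a.2.im).card ≤ (O.erase none).card := by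
  refine Finset.card_le_card_of_injOn (fun a => some (edge a)) (fun a ha => ?_) ?_
  · obtain ⟨haS, hup⟩ := Finset.mem_filter.1 ha
    have haO := hS a haS
    rw [G.leftRegion_of_up hup] at haO
    exact Finset.mem_erase.2 ⟨Option.some_ne_none _, haO⟩
  · intro a ha b hb h
    refine (Sym2.mk_eq_mk_iff.1 (Option.some.inj h)).resolve_right ?_
    rintro rfl
    exact (Finset.mem_filter.1 ha).2.not_gt (Finset.mem_filter.1 hb).2

theorem card_side_one_mem_le (hstar : ∀ x ∈ G.verts, (G.star x).Nonempty) :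
    (G.verts.filter fun x => G.side x 1 ∈ O).card ≤
      ((G.darts.filter fun a => G.leftRegion a ∈ O).filter G.IsLast).card := by
  refine Finset.card_le_card_of_surjOn Prod.fst fun x hx => ?_
  obtain ⟨hxv, hxO⟩ := Finset.mem_filter.1 hx
  obtain ⟨a, ⟨ha, halast⟩, -⟩ := G.existsUnique_isLast (hstar x hxv)
  obtain ⟨had, rfl⟩ := G.mem_star.1 ha
  refine ⟨a, ?_, rfl⟩
  rw [Finset.mem_coe, Finset.mem_filter, Finset.mem_filter, G.leftRegion_eq_side_one had halast]
  exact ⟨⟨had, hxO⟩, halast⟩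

/-- For a connected drawing, `S` is the outer boundary walk: its total turning is `2 * π`, whence
`S.card + 2`. Every further boundary component of the outer face increases the sum. -/
theorem exists_outer_face (hne : G.verts.Nonempty) (hstar : ∀ x ∈ G.verts, (G.star x).Nonempty) :
    ∃ S ⊆ G.darts, S.Nonempty ∧ (∀ a ∈ S, G.facePred a ∈ S) ∧
      Real.pi * (S.card + 2) ≤ ∑ a ∈ S, G.cornerAngle a := by
  obtain ⟨O, hnone, hO, hcard⟩ := G.exists_outer_isFaceUnion hne
  set S := G.darts.filter fun a => G.leftRegion a ∈ O with hS
  have hface : ∀ a ∈ S, G.facePred a ∈ S := fun a ha => by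
    rw [hS, Finset.mem_filter] at ha ⊢
    exact ⟨G.facePred_mem ha.1, (G.leftRegion_facePred_mem_iff hO ha.1).2 ha.2⟩
  have hup := G.card_up_le S fun a ha => (Finset.mem_filter.1 ha).2
  have hlast := hcard.trans (G.card_side_one_mem_le hstar)
  rw [Finset.card_erase_of_mem hnone] at hup
  have hpos : 0 < O.card := Finset.card_pos.2 ⟨none, hnone⟩
  have hle : (S.filter fun a => a.1.im < a.2.im).card + 1 ≤ (S.filter G.IsLast).card := by lia
  refine ⟨S, Finset.filter_subset _ _, ?_, hface, ?_⟩
  · exact (Finset.card_pos.1 (hpos.trans_le hlast)).mono (Finset.filter_subset _ _)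
  · rw [G.sum_cornerAngle_of_facePred_mem (Finset.filter_subset _ _) hface]
    have hle' : ((S.filter fun a => a.1.im < a.2.im).card : ℝ) + 1 ≤ (S.filter G.IsLast).card := by
      exact_mod_cast hle
    nlinarith [mul_le_mul_of_nonneg_left hle' Real.pi_pos.le]

section Boundary

/-- The darts leaving a vertex of `V`. -/
def dartsFrom (V : Finset ℂ) : Finset (ℂ × ℂ) := G.darts.filter fun a => a.1 ∈ V

variable {V : Finset ℂ} {S : Finset (ℂ × ℂ)}

theorem mem_dartsFrom : a ∈ G.dartsFrom V ↔ a ∈ G.darts ∧ a.1 ∈ V := Finset.mem_filter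

theorem sum_cornerAngle_dartsFrom (hV : ∀ x ∈ V, (G.star x).Nonempty) :
    ∑ a ∈ G.dartsFrom V, G.cornerAngle a = 2 * Real.pi * V.card := by
  rw [← Finset.sum_fiberwise_of_maps_to (t := V) (g := Prod.fst)
    fun a ha => (G.mem_dartsFrom.1 ha).2]
  have hstar : ∀ x ∈ V, (G.dartsFrom V).filter (fun a => a.1 = x) = G.star x := by
    intro x hx
    ext a
    rw [Finset.mem_filter, mem_dartsFrom, mem_star]
    exact ⟨fun h => ⟨h.1.1, h.2⟩, fun h => ⟨⟨h.1, h.2 ▸ hx⟩, h.2⟩⟩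
  rw [Finset.sum_congr rfl fun x hx => by rw [hstar x hx, G.sum_cornerAngle_star (hV x hx)],
    Finset.sum_const, nsmul_eq_mul, mul_comm]

theorem next_ne_self (ha : a ∈ G.darts) (hdeg : 2 ≤ (G.star a.1).card) : G.next a ≠ a := by
  intro h
  have hself : a ∈ G.star a.1 := G.mem_star.2 ⟨ha, rfl⟩
  obtain ⟨-, hlt | ⟨hlast, hfirst⟩⟩ := G.isCyclicSucc_next ha
  · exact hlt.1.ne (congrArg dirAngle h.symm)
  · obtain ⟨b, hb, hba⟩ := Finset.exists_mem_ne hdeg a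
    exact hba (G.dirAngle_injOn_star hb hself (le_antisymm (hlast b hb) (h ▸ hfirst b hb)))

theorem le_cornerAngle {θ : ℝ} (ha : a ∈ G.darts) (hθ : θ ≤ 2 * Real.pi)
    (hsep : ∀ b ∈ G.star a.1, ∀ c ∈ G.star a.1, dirAngle b < dirAngle c →
      θ ≤ dirAngle c - dirAngle b ∧ dirAngle c - dirAngle b ≤ 2 * Real.pi - θ) :
    θ ≤ G.cornerAngle a := by
  have hself : a ∈ G.star a.1 := G.mem_star.2 ⟨ha, rfl⟩
  obtain ⟨hmem, ⟨hlt, -⟩ | ⟨hlast, -⟩⟩ := G.isCyclicSucc_next ha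
  · have hnot : ¬ G.IsLast a := fun h => (h _ hmem).not_gt hlt
    rw [cornerAngle, if_neg hnot, add_zero]
    exact (hsep _ hself _ hmem hlt).1
  · have hisLast : G.IsLast a := hlast
    rw [cornerAngle, if_pos hisLast]
    rcases (hlast _ hmem).lt_or_eq with hlt | heq
    · linarith [(hsep _ hmem _ hself hlt).2]
    · linarith

theorem two_mul_card_add_card_dartsFrom_le
    (hangle : ∀ a ∈ G.darts, Real.pi / 3 ≤ G.cornerAngle a)
    (hS : S ⊆ G.dartsFrom V) (hsum : Real.pi * (S.card + 2) ≤ ∑ a ∈ S, G.cornerAngle a)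
    (hV : ∀ x ∈ V, (G.star x).Nonempty) :
    2 * S.card + 6 + (G.dartsFrom V).card ≤ 6 * V.card := by
  have htotal := G.sum_cornerAngle_dartsFrom hV
  rw [← Finset.sum_sdiff hS] at htotal
  have hrest : (G.dartsFrom V \ S).card • (Real.pi / 3) ≤
      ∑ a ∈ G.dartsFrom V \ S, G.cornerAngle a :=
    Finset.card_nsmul_le_sum _ _ _ fun a ha =>
      hangle a (G.mem_dartsFrom.1 (Finset.mem_sdiff.1 ha).1).1
  rw [nsmul_eq_mul, Finset.cast_card_sdiff hS] at hrest
  have hpi : Real.pi * (2 * S.card + 6 + (G.dartsFrom V).card) ≤ Real.pi * (6 * V.card) := by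
    linarith
  exact_mod_cast le_of_mul_le_mul_left hpi Real.pi_pos

theorem snd_mem_image_fst_of_facePred_mem (hS : S ⊆ G.darts) (hface : ∀ a ∈ S, G.facePred a ∈ S)
    (ha : a ∈ S) : a.2 ∈ S.image Prod.fst := by
  have hinj : Set.InjOn G.facePred S := Prod.swap_injective.comp_injOn (G.next_injOn.mono hS)
  obtain ⟨b, hb, rfl⟩ := Finset.surjOn_of_injOn_of_card_le G.facePred hface hinj le_rfl ha
  exact Finset.mem_image.2 ⟨b, hb, (G.mem_star.1 (G.isCyclicSucc_next (hS hb)).1).2.symm⟩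

theorem two_mul_card_image_fst_le (hS : S ⊆ G.darts) (hface : ∀ a ∈ S, G.facePred a ∈ S)
    (hdeg : ∀ x ∈ G.verts, 2 ≤ (G.star x).card) :
    2 * (S.image Prod.fst).card ≤
      ((G.dartsFrom (S.image Prod.fst)).filter fun a => a.2 ∈ S.image Prod.fst).card := by
  set B := S.image Prod.fst
  have hfst : ∀ {a}, a ∈ S → a.1 ∈ B := fun ha => Finset.mem_image_of_mem _ ha
  rw [mul_comm, Finset.card_eq_sum_card_fiberwise (f := Prod.fst) (t := B)
    fun a ha => (G.mem_dartsFrom.1 (Finset.mem_filter.1 ha).1).2, ← smul_eq_mul]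
  refine Finset.card_nsmul_le_sum _ _ _ fun x hx => ?_
  obtain ⟨a, ha, rfl⟩ := Finset.mem_image.1 hx
  obtain ⟨hnd, hn₁⟩ := G.mem_star.1 (G.isCyclicSucc_next (hS ha)).1
  have hn₂ : (G.next a).2 ∈ B := hfst (hface a ha)
  rw [← Finset.card_pair (G.next_ne_self (hS ha) (hdeg _ (G.fst_mem (hS ha))))]
  refine Finset.card_le_card fun b hb => ?_
  rw [Finset.mem_filter, Finset.mem_filter, mem_dartsFrom]
  rw [Finset.mem_insert, Finset.mem_singleton] at hb
  rcases hb with rfl | rfl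
  · exact ⟨⟨⟨hnd, hn₁ ▸ hfst ha⟩, hn₂⟩, hn₁⟩
  · exact ⟨⟨⟨hS ha, hfst ha⟩, G.snd_mem_image_fst_of_facePred_mem hS hface ha⟩, rfl⟩

theorem card_incident_add_card_between (V : Finset ℂ) :
    (G.darts.filter fun a => a.1 ∈ V ∨ a.2 ∈ V).card +
      ((G.dartsFrom V).filter fun a => a.2 ∈ V).card = 2 * (G.dartsFrom V).card := by
  have hto : (G.darts.filter fun a => a.2 ∈ V).card = (G.dartsFrom V).card := by
    refine Finset.card_nbij' Prod.swap Prod.swap ?_ ?_ (fun _ _ => rfl) fun _ _ => rfl <;>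
      · intro a ha
        exact Finset.mem_filter.2
          ⟨G.swap_mem (Finset.mem_filter.1 ha).1, (Finset.mem_filter.1 ha).2⟩
  rw [Finset.filter_or, dartsFrom, Finset.filter_filter, Finset.filter_and,
    Finset.card_union_add_card_inter, hto, dartsFrom, two_mul]

theorem exists_boundary (hne : G.verts.Nonempty) (hdeg : ∀ x ∈ G.verts, 2 ≤ (G.star x).card)
    (hangle : ∀ a ∈ G.darts, Real.pi / 3 ≤ G.cornerAngle a) :
    ∃ B ⊆ G.verts, B.Nonempty ∧ G.darts.card + 2 * B.card + 6 ≤ 6 * G.verts.card ∧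
      (G.darts.filter fun a => a.1 ∈ B ∨ a.2 ∈ B).card + 12 ≤ 6 * B.card := by
  have hstar : ∀ x ∈ G.verts, (G.star x).Nonempty := fun x hx =>
    Finset.card_pos.1 (two_pos.trans_le (hdeg x hx))
  obtain ⟨S, hS, hSne, hface, hsum⟩ := G.exists_outer_face hne hstar
  set B := S.image Prod.fst
  have hBV : B ⊆ G.verts := Finset.image_subset_iff.2 fun a ha => G.fst_mem (hS ha)
  have hSB : S ⊆ G.dartsFrom B := fun a ha =>
    G.mem_dartsFrom.2 ⟨hS ha, Finset.mem_image_of_mem _ ha⟩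
  have hfrom : G.dartsFrom G.verts = G.darts := Finset.filter_true_of_mem fun a => G.fst_mem
  have hBS : B.card ≤ S.card := Finset.card_image_le
  have hall := G.two_mul_card_add_card_dartsFrom_le hangle (hfrom ▸ hS) hsum hstar
  have hbdry := G.two_mul_card_add_card_dartsFrom_le hangle hSB hsum fun x hx => hstar x (hBV hx)
  have hbetween := G.two_mul_card_image_fst_le hS hface hdeg
  have hincident := G.card_incident_add_card_between B
  rw [hfrom] at hall
  exact ⟨B, hBV, hSne.image _, by lia, by lia⟩

end Boundary

end PlaneDrawing

/-! ### Contact graphs -/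

section Contacts

variable {α : Type*} [PseudoMetricSpace α] {P Q : Finset α}

/-- The points of `P` are the centers of non-overlapping unit balls, which may touch. -/
def IsPacking (P : Finset α) : Prop := (P : Set α).Pairwise fun x y => 2 ≤ dist x y

/-- The contact graph of the unit balls centered at the points of `P`, as the set of its darts. -/
def contacts (P : Finset α) : Finset (α × α) := P.offDiag.filter fun a => dist a.1 a.2 = 2

variable {a : α × α}

theorem mem_contacts : a ∈ contacts P ↔ a.1 ∈ P ∧ a.2 ∈ P ∧ dist a.1 a.2 = 2 := by
  rw [contacts, Finset.mem_filter, Finset.mem_offDiag]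
  refine ⟨fun ⟨⟨h₁, h₂, _⟩, h⟩ => ⟨h₁, h₂, h⟩, fun ⟨h₁, h₂, h⟩ => ⟨⟨h₁, h₂, fun he => ?_⟩, h⟩⟩
  rw [he, dist_self] at h
  exact two_ne_zero h.symm

theorem fst_ne_snd_of_mem_contacts (ha : a ∈ contacts P) : a.1 ≠ a.2 :=
  (Finset.mem_offDiag.1 (Finset.mem_filter.1 ha).1).2.2

theorem swap_mem_contacts (ha : a ∈ contacts P) : a.swap ∈ contacts P := by
  obtain ⟨h₁, h₂, h⟩ := mem_contacts.1 ha
  exact mem_contacts.2 ⟨h₂, h₁, dist_comm a.1 a.2 ▸ h⟩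

theorem IsPacking.mono (hP : IsPacking P) (hQ : Q ⊆ P) : IsPacking Q :=
  Set.Pairwise.mono (Finset.coe_subset.2 hQ) hP

theorem even_card_contacts (P : Finset α) : Even (contacts P).card := by
  rw [← ZMod.natCast_eq_zero_iff_even, ← nsmul_one, ← Finset.sum_const]
  exact Finset.sum_involution (fun a _ => a.swap) (fun _ _ => by decide)
    (fun a ha _ h => fst_ne_snd_of_mem_contacts ha (congrArg Prod.snd h))
    (fun a ha => swap_mem_contacts ha) fun a _ => a.swap_swap

theorem contacts_eq_empty_of_card_le_one (hP : P.card ≤ 1) : contacts P = ∅ :=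
  Finset.eq_empty_of_forall_notMem fun _ ha => fst_ne_snd_of_mem_contacts ha
    (Finset.card_le_one.1 hP _ (mem_contacts.1 ha).1 _ (mem_contacts.1 ha).2.1)

theorem card_contacts_sdiff_add (P Q : Finset α) :
    (contacts (P \ Q)).card + ((contacts P).filter fun a => a.1 ∈ Q ∨ a.2 ∈ Q).card =
      (contacts P).card := by
  have hsdiff : contacts (P \ Q) = (contacts P).filter fun a => ¬ (a.1 ∈ Q ∨ a.2 ∈ Q) := by
    ext a
    simp only [Finset.mem_filter, mem_contacts, Finset.mem_sdiff]
    tauto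
  rw [hsdiff, add_comm, Finset.card_filter_add_card_filter_not]

theorem card_incident_singleton_le (P : Finset α) (x : α) :
    ((contacts P).filter fun a => a.1 ∈ ({x} : Finset α) ∨ a.2 ∈ ({x} : Finset α)).card ≤
      2 * ((contacts P).filter fun a => a.1 = x).card := by
  have hto : ((contacts P).filter fun a => a.2 = x).card ≤
      ((contacts P).filter fun a => a.1 = x).card :=
    Finset.card_le_card_of_injOn Prod.swap (fun a ha => Finset.mem_filter.2
      ⟨swap_mem_contacts (Finset.mem_filter.1 ha).1, (Finset.mem_filter.1 ha).2⟩)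
      Prod.swap_injective.injOn
  simp only [Finset.mem_singleton, Finset.filter_or]
  exact (Finset.card_union_le _ _).trans (by lia)

variable {β : Type*} [PseudoMetricSpace β] {f : α → β}

theorem IsPacking.image (hP : IsPacking P) (hf : Isometry f) : IsPacking (P.image f) := by
  rw [IsPacking, Finset.coe_image]
  rintro _ ⟨x, hx, rfl⟩ _ ⟨y, hy, rfl⟩ hxy
  exact (hf.dist_eq x y).symm ▸ hP hx hy (ne_of_apply_ne f hxy)

theorem card_contacts_image (P : Finset α) (hf : Isometry f) (hinj : Function.Injective f) :
    (contacts (P.image f)).card = (contacts P).card := by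
  have himage : contacts (P.image f) = (contacts P).image (Prod.map f f) := by
    ext ⟨u, v⟩
    simp only [mem_contacts, Finset.mem_image, Prod.exists, Prod.map_apply, Prod.mk.injEq]
    constructor
    · rintro ⟨⟨x, hx, rfl⟩, ⟨y, hy, rfl⟩, h⟩
      exact ⟨x, y, ⟨hx, hy, hf.dist_eq x y ▸ h⟩, rfl, rfl⟩
    · rintro ⟨x, y, ⟨hx, hy, h⟩, rfl, rfl⟩
      exact ⟨⟨x, hx, rfl⟩, ⟨y, hy, rfl⟩, (hf.dist_eq x y).trans h⟩
  rw [himage, Finset.card_image_of_injective _ (hinj.prodMap hinj)]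

end Contacts

section Segments

variable {E : Type*} [NormedAddCommGroup E]

theorem one_lt_dist_of_mem_openSegment [InnerProductSpace ℝ E] {p q w z : E}
    (hpq : dist p q = 2) (hp : 2 ≤ dist w p) (hq : 2 ≤ dist w q) (hz : z ∈ openSegment ℝ p q) :
    1 < dist w z := by
  have hne : p ≠ q := fun h => two_ne_zero (hpq.symm.trans (dist_eq_zero.2 h))
  have hsbtw : Sbtw ℝ p z q := by
    refine ⟨mem_segment_iff_wbtw.1 (openSegment_subset_segment ℝ p q hz), ?_, ?_⟩ <;> rintro rfl
    · exact hne (left_mem_openSegment_iff.1 hz)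
    · exact hne (right_mem_openSegment_iff.1 hz)
  have hsum : dist p z + dist q z = 2 := by rw [dist_comm q, hsbtw.wbtw.dist_add_dist, hpq]
  have hstewart := EuclideanGeometry.dist_sq_mul_dist_add_dist_sq_mul_dist w p q z
    (EuclideanGeometry.angle_eq_pi_iff_sbtw.2 hsbtw)
  rw [hpq] at hstewart
  have hp' : 4 ≤ dist w p ^ 2 := by nlinarith
  have hq' : 4 ≤ dist w q ^ 2 := by nlinarith
  have hfar : 3 ≤ dist w z ^ 2 := by
    nlinarith [mul_le_mul_of_nonneg_right hp' (dist_nonneg (x := q) (y := z)),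
      mul_le_mul_of_nonneg_right hq' (dist_nonneg (x := p) (y := z)),
      sq_nonneg (dist p z - dist q z)]
  nlinarith [dist_nonneg (x := w) (y := z)]

theorem eq_of_mem_openSegment_of_dist_eq [NormedSpace ℝ E] {p q q' z : E}
    (hz : z ∈ openSegment ℝ p q) (hz' : z ∈ openSegment ℝ p q') (hd : dist p q = dist p q') :
    q = q' := by
  rw [openSegment_eq_image_lineMap] at hz hz'
  obtain ⟨s, ⟨hs, -⟩, rfl⟩ := hz
  obtain ⟨t, ⟨ht, -⟩, h⟩ := hz'
  by_cases hpq : p = q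
  · rw [← hpq, dist_self, eq_comm, dist_eq_zero] at hd
    rw [← hpq, hd]
  have hst : s = t := by
    have hdist := congrArg (dist p) h
    rw [dist_left_lineMap, dist_left_lineMap, ← hd, Real.norm_of_nonneg hs.le,
      Real.norm_of_nonneg ht.le] at hdist
    exact (mul_right_cancel₀ (dist_ne_zero.2 hpq) hdist).symm
  subst hst
  rw [AffineMap.lineMap_apply_module', AffineMap.lineMap_apply_module', add_left_inj,
    smul_right_inj hs.ne', sub_left_inj] at h
  exact h.symm

variable [InnerProductSpace ℝ E] {P : Finset E} {a b : E × E} {z : E}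

theorem IsPacking.eq_or_eq_of_dist_le_one {x : E} (hP : IsPacking P) (ha : a ∈ contacts P)
    (hx : x ∈ P) (hz : z ∈ openSegment ℝ a.1 a.2) (hxz : dist x z ≤ 1) : x = a.1 ∨ x = a.2 := by
  obtain ⟨h₁, h₂, h⟩ := mem_contacts.1 ha
  by_contra! hne
  exact (one_lt_dist_of_mem_openSegment h (hP hx h₁ hne.1) (hP hx h₂ hne.2) hz).not_ge hxz

theorem IsPacking.notMem_openSegment {x : E} (hP : IsPacking P) (ha : a ∈ contacts P)
    (hx : x ∈ P) : x ∉ openSegment ℝ a.1 a.2 := by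
  intro hz
  have hne := fst_ne_snd_of_mem_contacts ha
  rcases hP.eq_or_eq_of_dist_le_one ha hx hz (by simp) with rfl | rfl
  · exact hne (left_mem_openSegment_iff.1 hz)
  · exact hne (right_mem_openSegment_iff.1 hz)

theorem IsPacking.eq_or_eq_swap_of_dist_le_one (hP : IsPacking P) (ha : a ∈ contacts P)
    (hb : b ∈ contacts P) (hza : z ∈ openSegment ℝ a.1 a.2) (hzb : z ∈ openSegment ℝ b.1 b.2)
    (hdist : dist b.1 z ≤ 1) : a = b ∨ a = b.swap := by
  obtain ⟨-, -, hla⟩ := mem_contacts.1 ha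
  obtain ⟨hb₁, -, hlb⟩ := mem_contacts.1 hb
  rcases hP.eq_or_eq_of_dist_le_one ha hb₁ hza hdist with h | h <;> rw [h] at hzb hlb
  · exact .inl (Prod.ext h.symm (eq_of_mem_openSegment_of_dist_eq hza hzb (hla.trans hlb.symm)))
  · rw [openSegment_symm] at hza
    rw [dist_comm] at hla
    exact .inr (Prod.ext (eq_of_mem_openSegment_of_dist_eq hza hzb (hla.trans hlb.symm)) h.symm)

theorem IsPacking.eq_or_eq_swap (hP : IsPacking P) (ha : a ∈ contacts P) (hb : b ∈ contacts P)
    (hza : z ∈ openSegment ℝ a.1 a.2) (hzb : z ∈ openSegment ℝ b.1 b.2) : a = b ∨ a = b.swap := by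
  have hsum := dist_add_dist_of_mem_segment (openSegment_subset_segment ℝ _ _ hzb)
  rw [(mem_contacts.1 hb).2.2] at hsum
  rcases le_or_gt (dist b.1 z) 1 with h | h
  · exact hP.eq_or_eq_swap_of_dist_le_one ha hb hza hzb h
  · rw [openSegment_symm] at hzb
    have hnear : dist b.swap.1 z ≤ 1 := by rw [Prod.fst_swap, dist_comm]; linarith
    exact (hP.eq_or_eq_swap_of_dist_le_one ha (swap_mem_contacts hb) hza hzb hnear).symm

end Segments

theorem Icc_of_cos_le_half {x : ℝ} (hx₀ : 0 ≤ x) (hx : x ≤ 2 * Real.pi)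
    (hcos : Real.cos x ≤ 1 / 2) : Real.pi / 3 ≤ x ∧ x ≤ 2 * Real.pi - Real.pi / 3 := by
  have hlt : ∀ {y}, 0 ≤ y → y < Real.pi / 3 → 1 / 2 < Real.cos y := fun hy₀ hy => by
    rw [← Real.cos_pi_div_three]
    exact Real.cos_lt_cos_of_nonneg_of_le_pi hy₀ (by linarith [Real.pi_pos]) hy
  refine ⟨not_lt.1 fun h => (hlt hx₀ h).not_ge hcos, not_lt.1 fun h => ?_⟩
  rw [← Real.cos_two_pi_sub] at hcos
  exact (hlt (by linarith) (by linarith)).not_ge hcos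

theorem cos_arg_sub_arg_le_half {z w : ℂ} {r : ℝ} (hr : 0 < r) (hz : ‖z‖ = r) (hw : ‖w‖ = r)
    (hzw : r ≤ dist z w) : Real.cos (z.arg - w.arg) ≤ 1 / 2 := by
  have hlaw : dist z w ^ 2 = 2 * r ^ 2 * (1 - Real.cos (z.arg - w.arg)) := by
    rw [Complex.dist_eq, ← Complex.normSq_eq_norm_sq, Complex.normSq_apply, Complex.sub_re,
      Complex.sub_im, Real.cos_sub, ← Complex.norm_mul_cos_arg z, ← Complex.norm_mul_sin_arg z,
      ← Complex.norm_mul_cos_arg w, ← Complex.norm_mul_sin_arg w, hz, hw]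
    linear_combination r ^ 2 * Real.sin_sq_add_cos_sq z.arg + r ^ 2 * Real.sin_sq_add_cos_sq w.arg
  have hsq : r ^ 2 ≤ dist z w ^ 2 := by gcongr
  rw [hlaw] at hsq
  nlinarith [pow_pos hr 2]

section ContactDrawing

variable {P : Finset ℂ} {a : ℂ × ℂ}

/-- The contact graph of a packing in which no two centers have the same height, drawn with
segments between the centers. -/
def contactDrawing (hP : IsPacking P) (him : Set.InjOn Complex.im P) : PlaneDrawing where
  verts := P
  darts := contacts P
  im_injOn := him
  swap_mem := swap_mem_contacts
  fst_mem ha := (mem_contacts.1 ha).1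
  fst_ne_snd := fst_ne_snd_of_mem_contacts
  notMem_openSegment := hP.notMem_openSegment
  eq_or_eq_swap := hP.eq_or_eq_swap

theorem pi_div_three_le_cornerAngle (hP : IsPacking P) (him : Set.InjOn Complex.im P)
    (ha : a ∈ contacts P) : Real.pi / 3 ≤ (contactDrawing hP him).cornerAngle a := by
  refine (contactDrawing hP him).le_cornerAngle ha (by linarith [Real.pi_pos])
    fun b hb c hc hbc => ?_
  obtain ⟨hb, hba⟩ := (contactDrawing hP him).mem_star.1 hb
  obtain ⟨hc, hca⟩ := (contactDrawing hP him).mem_star.1 hc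
  obtain ⟨-, hb₂, hblen⟩ := mem_contacts.1 hb
  obtain ⟨-, hc₂, hclen⟩ := mem_contacts.1 hc
  have hne : c.2 ≠ b.2 := fun h => hbc.ne (by rw [dirAngle, dirAngle, h, hba, hca])
  have hfar : 2 ≤ dist (c.2 - c.1) (b.2 - b.1) := by
    rw [hba, hca, dist_sub_right]
    exact hP hc₂ hb₂ hne
  rw [dist_comm, dist_eq_norm] at hblen hclen
  refine Icc_of_cos_le_half (sub_nonneg.2 hbc.le) ?_
    (cos_arg_sub_arg_le_half two_pos hclen hblen hfar)
  rw [dirAngle, dirAngle]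
  linarith [Complex.arg_le_pi (c.2 - c.1), Complex.neg_pi_lt_arg (b.2 - b.1)]

theorem le_sq_of_removed_boundary {n b d d' : ℤ} (hd : d + 2 * b + 6 ≤ 6 * n)
    (hd' : d + 12 ≤ d' + 6 * b) (hle : d' ≤ 6 * (n - b))
    (hsq : 48 * (n - b) - 12 ≤ (6 * (n - b) - d') ^ 2) : 48 * n - 12 ≤ (6 * n - d) ^ 2 := by
  have hdrop : 6 * (n - b) - d' ≤ (6 * n - d) - 12 := by linarith
  nlinarith [mul_self_le_mul_self (sub_nonneg.2 hle) hdrop]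

theorem le_sq_of_removed_vertex {n d d' : ℤ} (hn : 2 ≤ n) (hd : d ≤ d' + 2)
    (hle : d' ≤ 6 * (n - 1)) (hsq : 48 * (n - 1) - 12 ≤ (6 * (n - 1) - d') ^ 2) :
    d ≤ 6 * n ∧ 48 * n - 12 ≤ (6 * n - d) ^ 2 := by
  have hslack : 4 ≤ 6 * (n - 1) - d' := by nlinarith
  have hdrop : 6 * (n - 1) - d' ≤ (6 * n - d) - 4 := by linarith
  exact ⟨by linarith, by nlinarith [mul_self_le_mul_self (sub_nonneg.2 hle) hdrop]⟩

/-- Remove the outer boundary of the contact graph, or a vertex with at most one contact. -/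
theorem card_contacts_le_of_injOn_im (hP : IsPacking P) (him : Set.InjOn Complex.im P) :
    ((contacts P).card : ℤ) ≤ 6 * P.card ∧
      (48 * P.card - 12 : ℤ) ≤ (6 * P.card - (contacts P).card) ^ 2 := by
  induction P using Finset.strongInduction with
  | H P ih =>
    rcases le_or_gt P.card 1 with hcard | hcard
    · rw [contacts_eq_empty_of_card_le_one hcard, Finset.card_empty]
      interval_cases P.card <;> norm_num
    have hremove : ∀ B ⊆ P, B.Nonempty →
        ((contacts (P \ B)).card : ℤ) ≤ 6 * (P.card - B.card) ∧
          (48 * (P.card - B.card) - 12 : ℤ) ≤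
            (6 * (P.card - B.card) - (contacts (P \ B)).card) ^ 2 := fun B hBP hB => by
      rw [← Finset.cast_card_sdiff hBP]
      exact ih _ (Finset.sdiff_ssubset hBP hB) (hP.mono Finset.sdiff_subset)
        (him.mono (Finset.coe_subset.2 Finset.sdiff_subset))
    by_cases hdeg : ∀ x ∈ P, 2 ≤ ((contacts P).filter fun a => a.1 = x).card
    · obtain ⟨B, hBP, hB, hinner, hbdry⟩ := (contactDrawing hP him).exists_boundary
        (Finset.card_pos.1 (one_pos.trans hcard)) hdeg fun a => pi_div_three_le_cornerAngle hP him
      obtain ⟨hle, hsq⟩ := hremove B hBP hB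
      have hsplit := card_contacts_sdiff_add P B
      simp only [contactDrawing] at hinner hbdry
      exact ⟨by lia, le_sq_of_removed_boundary (by lia) (by lia) hle hsq⟩
    · push Not at hdeg
      obtain ⟨x, hx, hlt⟩ := hdeg
      obtain ⟨hle, hsq⟩ := hremove {x} (Finset.singleton_subset_iff.2 hx) ⟨x, by simp⟩
      have hsplit := card_contacts_sdiff_add P {x}
      have hincident := card_incident_singleton_le P x
      rw [Finset.card_singleton, Nat.cast_one] at hle hsq
      exact le_sq_of_removed_vertex (by lia) (by lia) hle hsq

end ContactDrawing

theorem exists_isometry_injOn_im (P : Finset ℂ) :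
    ∃ f : ℂ → ℂ, Isometry f ∧ Set.InjOn Complex.im (P.image f) := by
  obtain ⟨r, hr⟩ := Infinite.exists_notMem_finset
    (P.offDiag.image fun a => -(a.1 - a.2).im / (a.1 - a.2).re)
  set u : ℂ := ⟨1, r⟩
  have hu : u ≠ 0 := fun h => one_ne_zero (congrArg Complex.re h)
  refine ⟨fun z => u / ‖u‖ * z, Isometry.of_dist_eq fun z w => ?_, ?_⟩
  · rw [dist_eq_norm, ← mul_sub, norm_mul, norm_div, Complex.norm_real, norm_norm,
      div_self (norm_ne_zero_iff.2 hu), one_mul, dist_eq_norm]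
  rw [Finset.coe_image]
  rintro _ ⟨z, hz, rfl⟩ _ ⟨w, hw, rfl⟩ h
  by_contra hne
  have hzw : z ≠ w := fun h => hne (by rw [h])
  have hlevel : (z - w).im + r * (z - w).re = 0 := by
    rw [← sub_eq_zero, ← Complex.sub_im, ← mul_sub, div_mul_eq_mul_div, Complex.div_ofReal_im,
      div_eq_zero_iff,
      or_iff_left (norm_ne_zero_iff.2 hu), Complex.mul_im] at h
    simpa [u] using h
  by_cases hre : (z - w).re = 0
  · rw [hre, mul_zero, add_zero] at hlevel
    exact hzw (sub_eq_zero.1 (Complex.ext hre hlevel))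
  · refine hr (Finset.mem_image.2 ⟨(z, w), Finset.mem_offDiag.2 ⟨hz, hw, hzw⟩, ?_⟩)
    rw [div_eq_iff hre]
    linarith

theorem card_contacts_le {P : Finset ℂ} (hP : IsPacking P) :
    ((contacts P).card : ℤ) ≤ 6 * P.card ∧
      (48 * P.card - 12 : ℤ) ≤ (6 * P.card - (contacts P).card) ^ 2 := by
  obtain ⟨f, hf, him⟩ := exists_isometry_injOn_im P
  have h := card_contacts_le_of_injOn_im (hP.image hf) him
  rwa [card_contacts_image P hf hf.injective, Finset.card_image_of_injective P hf.injective] at h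

end Harborth

/-- Harborth's theorem (upper bound): any packing of `n ≥ 2` unit disks in the plane
has at most `⌊3n - √(12n - 3)⌋` touching pairs. -/
theorem contact_upper_bound_plane (n : ℕ) (hn : 2 ≤ n)
    (P : Finset (EuclideanSpace ℝ (Fin 2))) (hcard : P.card = n)
    (hpack : ∀ x ∈ P, ∀ y ∈ P, x ≠ y → 2 ≤ dist x y) :
    (contactsOrdered P : ℤ) ≤ 2 * ⌊(3 * n - Real.sqrt (12 * n - 3) : ℝ)⌋ := by
  have hP : Harborth.IsPacking P := fun x hx y hy => hpack x hx y hy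
  have hf := Complex.orthonormalBasisOneI.repr.symm.isometry
  obtain ⟨hle, hsq⟩ := Harborth.card_contacts_le (hP.image hf)
  rw [Harborth.card_contacts_image P hf hf.injective, Finset.card_image_of_injective P hf.injective,
    hcard] at hle hsq
  obtain ⟨k, hk⟩ := Harborth.even_card_contacts P
  have hkn : (0 : ℝ) ≤ 3 * n - k := by
    rw [sub_nonneg]
    exact_mod_cast (by lia : k ≤ 3 * n)
  have hsqrt : √(12 * n - 3) ≤ (3 * n - k : ℝ) := by
    refine Real.sqrt_le_iff.2 ⟨hkn, ?_⟩
    rw [hk] at hsq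
    have hsq' : (48 * n - 12 : ℝ) ≤ (6 * n - (k + k : ℕ)) ^ 2 := by exact_mod_cast hsq
    push_cast at hsq'
    linarith
  have hfloor : (k : ℤ) ≤ ⌊(3 * n - √(12 * n - 3) : ℝ)⌋ := Int.le_floor.2 (by push_cast; linarith)
  have hcontacts : contactsOrdered P = k + k := hk
  lia
end
end

section
/- For every n ≥ 2 there exists a packing of n non-overlapping unit disks in the Euclidean plane whose contact number equals ⌊3n − √(12n − 3)⌋. -/
open scoped Classical

noncomputable section

/-!
A finite set `S` of points of the triangular lattice that meets every line of each of the three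
lattice directions in consecutive points has `3 |S| - (a + b + c)` contacts, where `a`, `b`, `c`
are the numbers of lines of each direction meeting `S`: on each line there is one contact fewer
than there are points. So it suffices to find such an `S` with `n` points and
`a + b + c = ⌈√(12n - 3)⌉`. A nearly regular hexagon from which a few points of one side have been
removed does this.
-/

section ConsecutivePoints

open Finset

variable {G H : Type*} [AddCommGroup G] [AddGroup H]

/-- `S` meets every translate of the line `ℤ v` in consecutive points: the discrete convexity of
`S` in the direction `v`. -/
def IsConvexAlong (v : G) (S : Finset G) : Prop :=
  ∀ p ∈ S, ∀ k : ℕ, p + (k + 1) • v ∈ S → p + v ∈ S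

lemma exists_add_nsmul_mem_add_notMem {v : G} (hv : ¬IsOfFinAddOrder v) {S : Finset G} {p : G}
    (hp : p ∈ S) : ∃ k : ℕ, p + k • v ∈ S ∧ p + k • v + v ∉ S := by
  by_contra! h
  have hall (k : ℕ) : p + k • v ∈ S := by
    induction k with
    | zero => simpa using hp
    | succ k ih => simpa [succ_nsmul, add_assoc] using h k ih
  exact Set.infinite_of_injective_forall_mem
    ((add_right_injective p).comp (injective_nsmul_iff_not_isOfFinAddOrder.2 hv)) hall
    S.finite_toSet

lemma IsConvexAlong.eq_of_add_notMem {v : G} {S : Finset G} (hS : IsConvexAlong v S) {p q : G}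
    (hp : p ∈ S) (hpv : p + v ∉ S) (hq : q ∈ S) (hqv : q + v ∉ S)
    (hpq : q - p ∈ AddSubgroup.zmultiples v) : p = q := by
  obtain ⟨k, hk⟩ := AddSubgroup.mem_zmultiples_iff.1 hpq
  obtain ⟨j, rfl | rfl⟩ := k.eq_nat_or_neg
  · obtain rfl : q = p + j • v := by rw [← natCast_zsmul, hk]; abel
    cases j with
    | zero => simp
    | succ j => exact absurd (hS p hp j hq) hpv
  · obtain rfl : p = q + j • v := by
      rw [← natCast_zsmul, ← neg_neg ((j : ℤ) • v), ← neg_zsmul, hk]; abel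
    cases j with
    | zero => simp
    | succ j => exact absurd (hS q hq j hp) hqv

variable [DecidableEq G] [DecidableEq H]

lemma IsConvexAlong.card_filter_add_mem_add_card_image {v : G} (hv : ¬IsOfFinAddOrder v)
    {S : Finset G} (hS : IsConvexAlong v S) (π : G →+ H)
    (hπ : π.ker = AddSubgroup.zmultiples v) :
    #{p ∈ S | p + v ∈ S} + #(S.image π) = #S := by
  -- each line meeting `S` contains exactly one point of `S` not followed by another one
  have hlast : #{p ∈ S | p + v ∉ S} = #(S.image π) := by
    refine card_nbij π (fun p hp ↦ mem_image_of_mem π (mem_filter.1 hp).1) ?_ ?_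
    · intro p hp q hq hpq
      rw [mem_coe, mem_filter] at hp hq
      refine hS.eq_of_add_notMem hp.1 hp.2 hq.1 hq.2 ?_
      rw [← hπ, AddMonoidHom.mem_ker, map_sub, hpq, sub_self]
    · intro x hx
      obtain ⟨p, hp, rfl⟩ := mem_image.1 (mem_coe.1 hx)
      obtain ⟨k, hk, hkv⟩ := exists_add_nsmul_mem_add_notMem hv hp
      have hπv : π v = 0 := by
        rw [← AddMonoidHom.mem_ker, hπ]
        exact AddSubgroup.mem_zmultiples v
      exact ⟨p + k • v, mem_coe.2 (mem_filter.2 ⟨hk, hkv⟩), by simp [hπv]⟩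
  rw [← hlast, card_filter_add_card_filter_not]

lemma card_filter_sub_mem (S V : Finset G) :
    #{p ∈ S ×ˢ S | p.2 - p.1 ∈ V} = ∑ v ∈ V, #{p ∈ S | p + v ∈ S} := by
  have hmaps : Set.MapsTo (fun p : G × G ↦ p.2 - p.1)
      ({p ∈ S ×ˢ S | p.2 - p.1 ∈ V} : Finset (G × G)) V := fun p hp ↦ (mem_filter.1 hp).2
  rw [card_eq_sum_card_fiberwise hmaps]
  refine sum_congr rfl fun v hv ↦ ?_
  refine card_nbij' Prod.fst (fun p ↦ (p, p + v)) ?_ ?_ ?_ ?_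
  · rintro ⟨p, q⟩ h
    simp only [coe_filter, mem_filter, mem_product, Set.mem_ofPred_eq, sub_eq_iff_eq_add'] at h ⊢
    exact ⟨h.1.1.1, h.2 ▸ h.1.1.2⟩
  · intro p h
    simpa [hv] using h
  · rintro ⟨p, q⟩ h
    simp only [coe_filter, mem_filter, Set.mem_ofPred_eq, sub_eq_iff_eq_add'] at h
    simp [h.2]
  · intro p _
    rfl

lemma card_filter_sub_mem_or_sub_mem (S : Finset G) {V : Finset G} (hV : ∀ v ∈ V, -v ∉ V) :
    #{p ∈ S ×ˢ S | p.2 - p.1 ∈ V ∨ p.1 - p.2 ∈ V} = 2 * ∑ v ∈ V, #{p ∈ S | p + v ∈ S} := by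
  have hdisj : Disjoint {p ∈ S ×ˢ S | p.2 - p.1 ∈ V} {p ∈ S ×ˢ S | p.1 - p.2 ∈ V} :=
    disjoint_filter.2 fun p _ h ↦ by simpa using hV _ h
  have hswap : #{p ∈ S ×ˢ S | p.1 - p.2 ∈ V} = #{p ∈ S ×ˢ S | p.2 - p.1 ∈ V} := by
    refine card_nbij' Prod.swap Prod.swap ?_ ?_ (fun _ _ ↦ rfl) fun _ _ ↦ rfl <;>
    · intro p
      simp +contextual
  rw [filter_or, card_union_of_disjoint hdisj, hswap, card_filter_sub_mem, two_mul]

end ConsecutivePoints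

section TriangularLattice

open Finset

/-- One representative of each pair `±v` of shortest vectors of the triangular lattice, in
coordinates with respect to a basis of two shortest vectors at angle `π / 3`. -/
def latticeDirections : Finset (ℤ × ℤ) := {(1, 0), (0, 1), (1, -1)}

/-- The quadratic form of the triangular lattice, scaled so that shortest vectors have value
`1`. -/
def latticeForm (v : ℤ × ℤ) : ℤ := v.1 ^ 2 + v.1 * v.2 + v.2 ^ 2

lemma latticeForm_pos {v : ℤ × ℤ} (hv : v ≠ 0) : 0 < latticeForm v := by
  obtain ⟨x, y⟩ := v
  have hform : 4 * latticeForm (x, y) = (2 * x + y) ^ 2 + 3 * y ^ 2 := by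
    simp only [latticeForm]; ring
  rcases eq_or_ne y 0 with rfl | hy
  · have hx : x ≠ 0 := by rintro rfl; exact hv rfl
    have : 0 < x ^ 2 := by positivity
    linarith
  · have : 0 < y ^ 2 := by positivity
    nlinarith

lemma latticeForm_eq_one_iff (v : ℤ × ℤ) :
    latticeForm v = 1 ↔ v ∈ latticeDirections ∨ -v ∈ latticeDirections := by
  obtain ⟨x, y⟩ := v
  simp only [latticeForm, latticeDirections, mem_insert, mem_singleton, Prod.neg_mk, Prod.mk.injEq]
  constructor
  · intro h
    have hx : x ^ 2 ≤ 1 := by nlinarith [sq_nonneg (x + 2 * y)]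
    have hy : y ^ 2 ≤ 1 := by nlinarith [sq_nonneg (y + 2 * x)]
    obtain ⟨hx₁, hx₂⟩ := abs_le.1 ((sq_le_one_iff_abs_le_one x).1 hx)
    obtain ⟨hy₁, hy₂⟩ := abs_le.1 ((sq_le_one_iff_abs_le_one y).1 hy)
    interval_cases x <;> interval_cases y <;> simp_all
  · rintro ((⟨rfl, rfl⟩ | ⟨rfl, rfl⟩ | ⟨rfl, rfl⟩) | ⟨hx, hy⟩ | ⟨hx, hy⟩ | ⟨hx, hy⟩) <;> grind

lemma neg_notMem_latticeDirections : ∀ v ∈ latticeDirections, -v ∉ latticeDirections := by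
  decide

/-- The triangular lattice with minimal distance `2`, that is, the centers of the densest packing of
unit disks. -/
def latticePoint (p : ℤ × ℤ) : EuclideanSpace ℝ (Fin 2) := !₂[2 * p.1 + p.2, √3 * p.2]

lemma dist_latticePoint (p q : ℤ × ℤ) :
    dist (latticePoint p) (latticePoint q) = 2 * √(latticeForm (p - q)) := by
  have hsq : dist (latticePoint p) (latticePoint q) ^ 2 = 2 ^ 2 * latticeForm (p - q) := by
    rw [EuclideanSpace.dist_eq, Real.sq_sqrt (sum_nonneg fun _ _ ↦ sq_nonneg _)]
    simp only [Fin.sum_univ_two, latticePoint, latticeForm, Real.dist_eq, sq_abs, PiLp.toLp_apply,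
      Matrix.cons_val_zero, Matrix.cons_val_one, Prod.fst_sub, Prod.snd_sub]
    push_cast
    linear_combination ((p.2 : ℝ) - q.2) ^ 2 * Real.sq_sqrt (zero_le_three (α := ℝ))
  rw [← Real.sqrt_sq dist_nonneg, hsq, Real.sqrt_mul (by positivity), Real.sqrt_sq zero_le_two]

lemma dist_latticePoint_eq_two_iff (p q : ℤ × ℤ) :
    dist (latticePoint p) (latticePoint q) = 2 ↔ latticeForm (p - q) = 1 := by
  simp [dist_latticePoint, Real.sqrt_eq_one]

lemma two_le_dist_latticePoint {p q : ℤ × ℤ} (hpq : p ≠ q) :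
    2 ≤ dist (latticePoint p) (latticePoint q) := by
  have h : (1 : ℝ) ≤ latticeForm (p - q) := mod_cast latticeForm_pos (sub_ne_zero.2 hpq)
  rw [dist_latticePoint]
  linarith [Real.one_le_sqrt.2 h]

lemma latticePoint_injective : Function.Injective latticePoint := by
  intro p q h
  by_contra hpq
  have := two_le_dist_latticePoint hpq
  rw [h, dist_self] at this
  norm_num at this

lemma contactsOrdered_image_latticePoint (S : Finset (ℤ × ℤ)) :
    contactsOrdered (S.image latticePoint) =
      2 * ∑ v ∈ latticeDirections, #{p ∈ S | p + v ∈ S} := by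
  have hdist (p q : ℤ × ℤ) : dist (latticePoint p) (latticePoint q) = 2 ↔
      q - p ∈ latticeDirections ∨ p - q ∈ latticeDirections := by
    rw [dist_latticePoint_eq_two_iff, latticeForm_eq_one_iff, neg_sub, or_comm]
  rw [← card_filter_sub_mem_or_sub_mem S neg_notMem_latticeDirections, contactsOrdered,
    ← card_image_of_injective _ (latticePoint_injective.prodMap latticePoint_injective)]
  congr 1
  ext ⟨x, y⟩
  simp only [mem_filter, mem_offDiag, mem_image, mem_product, ← hdist]
  constructor
  · rintro ⟨⟨⟨p, hp, rfl⟩, ⟨q, hq, rfl⟩, -⟩, h⟩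
    exact ⟨(p, q), ⟨⟨hp, hq⟩, h⟩, rfl⟩
  · rintro ⟨⟨p, q⟩, ⟨⟨hp, hq⟩, h⟩, heq⟩
    obtain ⟨rfl, rfl⟩ := Prod.mk.inj heq
    refine ⟨⟨⟨p, hp, rfl⟩, ⟨q, hq, rfl⟩, fun hpq ↦ ?_⟩, h⟩
    rw [hpq, dist_self] at h
    norm_num at h

open AddMonoidHom in
lemma contactsOrdered_add_card_images {S : Finset (ℤ × ℤ)}
    (hS : ∀ v ∈ latticeDirections, IsConvexAlong v S) :
    contactsOrdered (S.image latticePoint) + 2 * (#(S.image (fst ℤ ℤ)) + #(S.image (snd ℤ ℤ)) +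
      #(S.image (fst ℤ ℤ + snd ℤ ℤ))) = 6 * #S := by
  have hker₁ : (snd ℤ ℤ).ker = AddSubgroup.zmultiples (1, 0) := by
    ext ⟨x, y⟩
    simp [AddMonoidHom.mem_ker, -ker_fst, -ker_snd, AddSubgroup.mem_zmultiples_iff, eq_comm]
  have hker₂ : (fst ℤ ℤ).ker = AddSubgroup.zmultiples (0, 1) := by
    ext ⟨x, y⟩
    simp [AddMonoidHom.mem_ker, -ker_fst, -ker_snd, AddSubgroup.mem_zmultiples_iff, eq_comm]
  have hker₃ : (fst ℤ ℤ + snd ℤ ℤ).ker = AddSubgroup.zmultiples (1, -1) := by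
    ext ⟨x, y⟩
    simp [AddSubgroup.mem_zmultiples_iff, add_eq_zero_iff_neg_eq]
  have hline {v : ℤ × ℤ} (hv : v ∈ latticeDirections) {π : ℤ × ℤ →+ ℤ}
      (hπ : π.ker = AddSubgroup.zmultiples v) :
      #{p ∈ S | p + v ∈ S} + #(S.image π) = #S := by
    have hv0 : v ≠ 0 := by
      rintro rfl
      exact absurd hv (by decide)
    exact (hS v hv).card_filter_add_mem_add_card_image
      (not_isOfFinAddOrder_of_isAddTorsionFree hv0) π hπ
  have h₁ := hline (by decide) hker₁
  have h₂ := hline (by decide) hker₂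
  have h₃ := hline (by decide) hker₃
  rw [contactsOrdered_image_latticePoint]
  simp only [latticeDirections]
  rw [sum_insert (by decide), sum_insert (by decide), sum_singleton]
  omega

end TriangularLattice

section Hexagon

open Finset

lemma card_filter_add_eq_and_lt {w h s r : ℤ} (hr : 0 ≤ r) (hrs : r ≤ s + 1) (hrw : r ≤ w)
    (hsh : s < h) : (#{p ∈ Ico 0 w ×ˢ Ico 0 h | p.1 + p.2 = s ∧ p.1 < r} : ℤ) = r := by
  have himage : {p ∈ Ico 0 w ×ˢ Ico 0 h | p.1 + p.2 = s ∧ p.1 < r} =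
      (Ico 0 r).image fun x ↦ (x, s - x) := by
    ext ⟨x, y⟩
    simp only [mem_filter, mem_product, mem_Ico, mem_image, Prod.mk.injEq]
    constructor
    · intro
      exact ⟨x, by omega⟩
    · rintro ⟨z, hz⟩
      omega
  rw [himage, card_image_of_injective _ fun x y hxy ↦ (Prod.mk.inj hxy).1, Int.card_Ico]
  omega

lemma two_mul_card_filter_add_lt {w h s : ℤ} (hs : 0 ≤ s) (hsw : s ≤ w) (hsh : s ≤ h) :
    2 * (#{p ∈ Ico 0 w ×ˢ Ico 0 h | p.1 + p.2 < s} : ℤ) = s * (s + 1) := by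
  lift s to ℕ using hs
  induction s with
  | zero =>
    simp only [Nat.cast_zero, zero_mul, mul_eq_zero, OfNat.ofNat_ne_zero, false_or,
      Nat.cast_eq_zero, card_eq_zero, filter_eq_empty_iff, mem_product, mem_Ico]
    omega
  | succ s ih =>
    push_cast at hsw hsh ⊢
    have hsplit : {p ∈ Ico 0 w ×ˢ Ico 0 h | p.1 + p.2 < (s : ℤ) + 1} =
        {p ∈ Ico 0 w ×ˢ Ico 0 h | p.1 + p.2 < (s : ℤ)} ∪
          {p ∈ Ico 0 w ×ˢ Ico 0 h | p.1 + p.2 = (s : ℤ) ∧ p.1 < (s : ℤ) + 1} := by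
      ext ⟨x, y⟩
      simp only [mem_filter, mem_product, mem_Ico, mem_union]
      omega
    have hdisj : Disjoint {p ∈ Ico 0 w ×ˢ Ico 0 h | p.1 + p.2 < (s : ℤ)}
        {p ∈ Ico 0 w ×ˢ Ico 0 h | p.1 + p.2 = (s : ℤ) ∧ p.1 < (s : ℤ) + 1} :=
      disjoint_filter.2 fun p _ hlt h ↦ hlt.ne h.1
    rw [hsplit, card_union_of_disjoint hdisj, Nat.cast_add,
      card_filter_add_eq_and_lt (by omega) le_rfl hsw (by omega), mul_add,
      ih (by omega) (by omega)]
    ring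

lemma card_filter_sub_le_add (w h t : ℤ) :
    #{p ∈ Ico 0 w ×ˢ Ico 0 h | w + h - 1 - t ≤ p.1 + p.2} =
      #{p ∈ Ico 0 w ×ˢ Ico 0 h | p.1 + p.2 < t} := by
  refine card_nbij' (fun p ↦ (w - 1 - p.1, h - 1 - p.2)) (fun p ↦ (w - 1 - p.1, h - 1 - p.2))
    ?_ ?_ ?_ ?_
  iterate 2
    rintro ⟨x, y⟩ hp
    simp only [coe_filter, mem_product, mem_Ico, Set.mem_ofPred_eq] at hp ⊢
    omega
  iterate 2 exact fun p _ ↦ by simp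

/-- The hexagon obtained from a `w × h` parallelogram of the triangular lattice by cutting off `s`
complete diagonals at the acute corner `(0, 0)` and `t` at the opposite one, and then the first `r`
points of the next diagonal at `(0, 0)`. -/
def cutHexagon (w h s t r : ℤ) : Finset (ℤ × ℤ) :=
  {p ∈ Ico 0 w ×ˢ Ico 0 h |
    (s < p.1 + p.2 ∨ p.1 + p.2 = s ∧ r ≤ p.1) ∧ p.1 + p.2 < w + h - 1 - t}

variable {w h s t r : ℤ}

lemma mem_cutHexagon {p : ℤ × ℤ} : p ∈ cutHexagon w h s t r ↔
    ((0 ≤ p.1 ∧ p.1 < w) ∧ 0 ≤ p.2 ∧ p.2 < h) ∧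
      (s < p.1 + p.2 ∨ p.1 + p.2 = s ∧ r ≤ p.1) ∧ p.1 + p.2 < w + h - 1 - t := by
  simp only [cutHexagon, mem_filter, mem_product, mem_Ico]

lemma isConvexAlong_cutHexagon :
    ∀ v ∈ latticeDirections, IsConvexAlong v (cutHexagon w h s t r) := by
  intro v hv p hp k hk
  simp only [latticeDirections, mem_insert, mem_singleton] at hv
  rcases hv with rfl | rfl | rfl <;>
  · simp only [mem_cutHexagon, Prod.smul_mk, Prod.fst_add, Prod.snd_add, nsmul_eq_mul, Nat.cast_add,
      Nat.cast_one] at hp hk ⊢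
    omega

/-- Bounds on the cuts under which `cutHexagon w h s t r` still meets every row and every column of
the `w × h` parallelogram and every diagonal between the two corners cut off. -/
structure IsProperCut (w h s t r : ℤ) : Prop where
  nonneg_r : 0 ≤ r
  r_le : r ≤ s
  s_lt : s < w
  s_add_r_lt : s + r < h
  nonneg_t : 0 ≤ t
  t_lt_w : t < w
  t_lt_h : t < h

lemma two_mul_card_cutHexagon (hc : IsProperCut w h s t r) :
    2 * (#(cutHexagon w h s t r) : ℤ) = 2 * (w * h - r) - s * (s + 1) - t * (t + 1) := by
  obtain ⟨hr, hrs, hsw, hsh, ht, htw, hth⟩ := hc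
  let box : Finset (ℤ × ℤ) := Ico 0 w ×ˢ Ico 0 h
  have hbox : (#box : ℤ) = w * h := by
    rw [card_product, Int.card_Ico, Int.card_Ico, Nat.cast_mul, Int.toNat_of_nonneg (by omega),
      Int.toNat_of_nonneg (by omega), sub_zero, sub_zero]
  have hpartition : #box = #(cutHexagon w h s t r) + #{p ∈ box | p.1 + p.2 < s} +
      #{p ∈ box | p.1 + p.2 = s ∧ p.1 < r} + #{p ∈ box | w + h - 1 - t ≤ p.1 + p.2} := by
    rw [card_eq_sum_ones, cutHexagon]
    simp only [card_filter, ← sum_add_distrib, box]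
    refine sum_congr rfl fun p _ ↦ ?_
    split_ifs <;> omega
  have hs := two_mul_card_filter_add_lt (hr.trans hrs) hsw.le (by omega : s ≤ h)
  have hd := card_filter_add_eq_and_lt hr (by omega) (by omega : r ≤ w) (by omega : s < h)
  have ht := two_mul_card_filter_add_lt ht htw.le hth.le
  rw [← card_filter_sub_le_add] at ht
  zify at hpartition
  linarith

lemma image_fst_cutHexagon (hc : IsProperCut w h s t r) :
    (cutHexagon w h s t r).image (AddMonoidHom.fst ℤ ℤ) = Ico 0 w := by
  obtain ⟨hr, hrs, -, hsh, -, htw, hth⟩ := hc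
  ext x
  simp only [mem_image, mem_cutHexagon, Prod.exists, AddMonoidHom.coe_fst, mem_Ico]
  constructor
  · rintro ⟨x, y, h, rfl⟩
    exact h.1.1
  · intro hx
    rcases lt_or_ge x r with hxr | hrx
    · exact ⟨x, s + 1 - x, by omega, rfl⟩
    · exact ⟨x, max 0 (s - x), by omega, rfl⟩

lemma image_snd_cutHexagon (hc : IsProperCut w h s t r) :
    (cutHexagon w h s t r).image (AddMonoidHom.snd ℤ ℤ) = Ico 0 h := by
  obtain ⟨hr, hrs, hsw, hsh, ht, htw, hth⟩ := hc
  ext y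
  simp only [mem_image, mem_cutHexagon, Prod.exists, AddMonoidHom.coe_snd, mem_Ico]
  constructor
  · rintro ⟨x, y, h, rfl⟩
    exact h.1.2
  · intro hy
    rcases lt_or_ge (s - r) y with hyr | hry
    · exact ⟨max 0 (s + 1 - y), y, by omega, rfl⟩
    · exact ⟨s - y, y, by omega, rfl⟩

lemma image_add_cutHexagon (hc : IsProperCut w h s t r) :
    (cutHexagon w h s t r).image (AddMonoidHom.fst ℤ ℤ + AddMonoidHom.snd ℤ ℤ) =
      Ico s (w + h - 1 - t) := by
  obtain ⟨hr, hrs, hsw, -, ht, -, hth⟩ := hc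
  ext d
  simp only [mem_image, mem_cutHexagon, Prod.exists, AddMonoidHom.add_apply, AddMonoidHom.coe_fst,
    AddMonoidHom.coe_snd, mem_Ico]
  constructor
  · rintro ⟨x, y, h, rfl⟩
    omega
  · intro hd
    exact ⟨min d (w - 1), d - min d (w - 1), by omega, by omega⟩

lemma contactsOrdered_image_cutHexagon (hc : IsProperCut w h s t r) :
    (contactsOrdered ((cutHexagon w h s t r).image latticePoint) : ℤ) =
      2 * (3 * #(cutHexagon w h s t r) - (2 * w + 2 * h - 1 - s - t)) := by
  have hcount := contactsOrdered_add_card_images (isConvexAlong_cutHexagon (w := w) (h := h)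
    (s := s) (t := t) (r := r))
  rw [image_fst_cutHexagon hc, image_snd_cutHexagon hc, image_add_cutHexagon hc, Int.card_Ico,
    Int.card_Ico, Int.card_Ico] at hcount
  obtain ⟨hr, hrs, hsw, hsh, -, -, hth⟩ := hc
  omega

lemma exists_card_cutHexagon_eq {n m : ℤ} (hm : 5 ≤ m) (hlo : (m - 1) ^ 2 < 12 * n - 3)
    (hhi : 12 * n - 3 ≤ m ^ 2) :
    ∃ w h s t r : ℤ, IsProperCut w h s t r ∧ #(cutHexagon w h s t r) = n ∧
      2 * w + 2 * h - 1 - s - t = m := by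
  -- The three widths of the hexagon are `m / 3` up to rounding and the two cuts are as equal as
  -- possible. Then the hexagon has `⌊(m ^ 2 + 3) / 12⌋` points for `r = 0`, and `r` is the excess.
  suffices ∃ w h s t N : ℤ, 2 * N = 2 * (w * h) - s * (s + 1) - t * (t + 1) ∧
      IsProperCut w h s t (N - n) ∧ 2 * w + 2 * h - 1 - s - t = m by
    obtain ⟨w, h, s, t, N, hN, hc, hsum⟩ := this
    exact ⟨w, h, s, t, N - n, hc, by linarith [two_mul_card_cutHexagon hc], hsum⟩
  obtain ⟨j, hj | hj | hj | hj | hj | hj⟩ : ∃ j : ℤ, m = 6 * j ∨ m = 6 * j + 1 ∨ m = 6 * j + 2 ∨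
      m = 6 * j + 3 ∨ m = 6 * j + 4 ∨ m = 6 * j + 5 := ⟨m / 6, by omega⟩
  all_goals
    subst hj
    ring_nf at hlo hhi
  · exact ⟨2 * j, 2 * j, j, j - 1, 3 * j ^ 2, by ring, by constructor <;> omega, by ring⟩
  · exact ⟨2 * j, 2 * j, j - 1, j - 1, 3 * j ^ 2 + j, by ring, by constructor <;> omega, by ring⟩
  · exact ⟨2 * j, 2 * j + 1, j, j - 1, 3 * j ^ 2 + 2 * j, by ring, by constructor <;> omega,
      by ring⟩
  · exact ⟨2 * j + 1, 2 * j + 1, j, j, 3 * j ^ 2 + 3 * j + 1, by ring, by constructor <;> omega,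
      by ring⟩
  · exact ⟨2 * j + 1, 2 * j + 1, j, j - 1, 3 * j ^ 2 + 4 * j + 1, by ring,
      by constructor <;> omega, by ring⟩
  · exact ⟨2 * j + 1, 2 * j + 2, j, j, 3 * j ^ 2 + 5 * j + 2, by ring, by constructor <;> omega,
      by ring⟩

end Hexagon

lemma floor_intCast_sub_eq_sub_ceil (a : ℤ) (x : ℝ) : ⌊a - x⌋ = a - ⌈x⌉ := by
  rw [sub_eq_add_neg, Int.floor_intCast_add, Int.floor_neg, ← sub_eq_add_neg]

lemma le_sq_ceil_sqrt (x : ℝ) : x ≤ (⌈√x⌉ : ℝ) ^ 2 :=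
  (Real.sqrt_le_iff.1 (Int.le_ceil √x)).2

lemma sq_ceil_sqrt_sub_one_lt {x : ℝ} (hx : 0 < x) : (⌈√x⌉ - 1 : ℝ) ^ 2 < x := by
  have hpos : (1 : ℝ) ≤ ⌈√x⌉ := mod_cast Int.one_le_ceil_iff.2 (Real.sqrt_pos.2 hx)
  rw [← Real.lt_sqrt (sub_nonneg.2 hpos), sub_lt_iff_lt_add]
  exact Int.ceil_lt_add_one √x

/-- Harborth's theorem (sharpness): for every `n ≥ 2` there is a packing of `n` unit
disks in the plane with exactly `⌊3n - √(12n - 3)⌋` touching pairs. -/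
theorem contact_bound_plane_attained (n : ℕ) (hn : 2 ≤ n) :
    ∃ P : Finset (EuclideanSpace ℝ (Fin 2)), P.card = n ∧
      (∀ x ∈ P, ∀ y ∈ P, x ≠ y → 2 ≤ dist x y) ∧
      (contactsOrdered P : ℤ) = 2 * ⌊(3 * n - Real.sqrt (12 * n - 3) : ℝ)⌋ := by
  have hn' : (2 : ℝ) ≤ n := mod_cast hn
  have hm : 5 ≤ ⌈√(12 * n - 3 : ℝ)⌉ :=
    Int.lt_ceil (z := 4).2 (Real.lt_sqrt_of_sq_lt (by push_cast; linarith))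
  have hlo : (⌈√(12 * n - 3 : ℝ)⌉ - 1) ^ 2 < 12 * (n : ℤ) - 3 :=
    mod_cast sq_ceil_sqrt_sub_one_lt (x := 12 * n - 3) (by linarith)
  have hhi : 12 * (n : ℤ) - 3 ≤ ⌈√(12 * n - 3 : ℝ)⌉ ^ 2 := mod_cast le_sq_ceil_sqrt (12 * n - 3)
  obtain ⟨w, h, s, t, r, hc, hcard, hsum⟩ := exists_card_cutHexagon_eq hm hlo hhi
  refine ⟨(cutHexagon w h s t r).image latticePoint, ?_, ?_, ?_⟩
  · rw [Finset.card_image_of_injective _ latticePoint_injective]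
    exact mod_cast hcard
  · simp only [Finset.forall_mem_image]
    exact fun p _ q _ hpq ↦ two_le_dist_latticePoint (ne_of_apply_ne latticePoint hpq)
  · rw [contactsOrdered_image_cutHexagon hc, hcard, hsum]
    exact_mod_cast congrArg (2 * ·) (floor_intCast_sub_eq_sub_ceil (3 * n) √(12 * n - 3)).symm
end
end

section
/- In any finite packing of unit balls in ℝ³, each ball touches at most 12 other balls of the packing. -/
open scoped Classical

noncomputable section

/-!
The proof is Delsarte's linear programming method in Musin's form. By Schoenberg, Gegenbauer
polynomials are positive definite on the sphere, because up to a positive factor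
`C_n(⟪x, y⟫)` is the Fischer product of two harmonic zonal polynomials. Hence a polynomial
`f = 1 + ∑ cₙ Pₙ` with `cₙ ≥ 0` satisfies `|S|² ≤ ∑ x ∈ S, ∑ y ∈ S, f ⟪x, y⟫` for a finite set `S`
of unit vectors. Let the angles in `S` be at least `60°`. If `f ≤ 0` on `[-29 / 41, 1 / 2]`, then
besides `f 1` only the points within `arccos (29 / 41) < 45°` of `-x` make a positive contribution
to the row of `x`. There are at most three of them, and their Gram matrix bounds how close
to `-x` they can be, so that each row sums to less than `13`.
-/

open Finset Module

/-- The Gegenbauer polynomial `C_n^{(a)}`, by its three-term recurrence. For unit vectors of `ℝᵈ`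
the relevant parameter is `a = (d - 2) / 2`; in particular `a = 1 / 2` gives the Legendre
polynomials. -/
def gegenbauer (a : ℝ) : ℕ → Polynomial ℝ
  | 0 => 1
  | 1 => .C (2 * a) * .X
  | n + 2 => .C (n + 2 : ℝ)⁻¹ * (.C (2 * (n + 1 + a)) * .X * gegenbauer a (n + 1)
      - .C (n + 2 * a) * gegenbauer a n)

section Fischer

open MvPolynomial

variable {σ : Type*} [Fintype σ]

/-- The Fischer inner product, for which monomials are orthogonal and `X ^ α` has square norm
`α!`. Its role is to make multiplication by `X i` adjoint to `pderiv i`. -/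
def fischerForm : LinearMap.BilinForm ℝ (MvPolynomial σ ℝ) :=
  (basisMonomials σ ℝ).constr ℝ fun α => (∏ i, (α i).factorial : ℝ) • lcoeff ℝ α

lemma fischerForm_monomial (α : σ →₀ ℕ) (a : ℝ) (q : MvPolynomial σ ℝ) :
    fischerForm (monomial α a) q = a * (∏ i, (α i).factorial : ℝ) * coeff α q := by
  have h : monomial α a = a • basisMonomials σ ℝ α := by simp [smul_monomial]
  rw [h, fischerForm, map_smul, Basis.constr_basis]
  simp [mul_assoc]

lemma fischerForm_self_nonneg (p : MvPolynomial σ ℝ) : 0 ≤ fischerForm p p := by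
  have h : fischerForm p p
      = ∑ α ∈ p.support, fischerForm (monomial α (coeff α p)) p := by
    rw [← LinearMap.sum_apply, ← map_sum, support_sum_monomial_coeff]
  rw [h]
  refine sum_nonneg fun α _ => ?_
  rw [fischerForm_monomial, mul_right_comm]
  exact mul_nonneg (mul_self_nonneg _) (prod_nonneg fun _ _ => Nat.cast_nonneg _)

lemma fischerForm_X_mul (i : σ) (p q : MvPolynomial σ ℝ) :
    fischerForm (X i * p) q = fischerForm p (pderiv i q) := by
  induction p using MvPolynomial.induction_on' with
  | monomial α a =>
    have hfactor (j : σ) : (((α + Finsupp.single i 1 : σ →₀ ℕ) j).factorial : ℝ)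
        = (if i = j then (α i + 1 : ℝ) else 1) * (α j).factorial := by
      obtain rfl | hij := eq_or_ne i j
      · simp [Nat.factorial_succ]
      · simp [hij]
    have hprod : ∏ j, (((α + Finsupp.single i 1 : σ →₀ ℕ) j).factorial : ℝ)
        = (α i + 1) * ∏ j, ((α j).factorial : ℝ) := by
      simp only [hfactor, prod_mul_distrib, prod_ite_eq, mem_univ, if_true]
    rw [mul_comm, X, monomial_mul, fischerForm_monomial, fischerForm_monomial, coeff_pderiv, hprod]
    ring
  | add p q hp hq => simp only [mul_add, map_add, LinearMap.add_apply, hp, hq]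

/-- The linear form `⟨x, ·⟩` as a polynomial. -/
def linearPoly (x : σ → ℝ) : MvPolynomial σ ℝ := ∑ i, x i • X i

/-- The squared Euclidean norm as a polynomial. -/
def sqNormPoly (σ : Type*) [Fintype σ] : MvPolynomial σ ℝ := ∑ i : σ, X i ^ 2

/-- The derivative of a polynomial in the direction `x`, the Fischer adjoint of multiplication by
`linearPoly x`. -/
def dirDeriv (x : σ → ℝ) : Derivation ℝ (MvPolynomial σ ℝ) (MvPolynomial σ ℝ) :=
  ∑ i, x i • pderiv i

/-- The Laplacian on polynomials, the Fischer adjoint of multiplication by `sqNormPoly σ`. -/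
def polyLaplacian : MvPolynomial σ ℝ →ₗ[ℝ] MvPolynomial σ ℝ :=
  ∑ i, (pderiv i).toLinearMap ∘ₗ (pderiv i).toLinearMap

lemma dirDeriv_apply (x : σ → ℝ) (p : MvPolynomial σ ℝ) :
    dirDeriv x p = ∑ i, x i • pderiv i p := by
  rw [dirDeriv, ← Derivation.coeFnAddMonoidHom_apply, map_sum, Finset.sum_apply]
  rfl

lemma polyLaplacian_apply (p : MvPolynomial σ ℝ) :
    polyLaplacian p = ∑ i, pderiv i (pderiv i p) := by
  simp [polyLaplacian]

lemma fischerForm_linearPoly_mul (x : σ → ℝ) (p q : MvPolynomial σ ℝ) :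
    fischerForm (linearPoly x * p) q = fischerForm p (dirDeriv x q) := by
  simp only [linearPoly, dirDeriv_apply, sum_mul, smul_mul_assoc, map_sum, map_smul,
    LinearMap.sum_apply, LinearMap.smul_apply, fischerForm_X_mul]

lemma fischerForm_sqNormPoly_mul (p q : MvPolynomial σ ℝ) :
    fischerForm (sqNormPoly σ * p) q = fischerForm p (polyLaplacian q) := by
  simp only [sqNormPoly, polyLaplacian_apply, sum_mul, map_sum, LinearMap.sum_apply, sq, mul_assoc,
    fischerForm_X_mul]

lemma eval_linearPoly (x y : σ → ℝ) : eval y (linearPoly x) = x ⬝ᵥ y := by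
  simp [linearPoly, dotProduct, smul_eval]

lemma eval_sqNormPoly (y : σ → ℝ) : eval y (sqNormPoly σ) = y ⬝ᵥ y := by
  simp [sqNormPoly, dotProduct, sq]

lemma linearPoly_isHomogeneous (x : σ → ℝ) : (linearPoly x).IsHomogeneous 1 :=
  IsHomogeneous.sum _ _ _ fun i _ => by
    simpa [C_mul'] using (isHomogeneous_C_mul_X (x i) i)

lemma sqNormPoly_isHomogeneous : (sqNormPoly σ).IsHomogeneous 2 :=
  IsHomogeneous.sum _ _ _ fun i _ => isHomogeneous_X_pow i 2

lemma dirDeriv_isHomogeneous (x : σ → ℝ) {n : ℕ} {p : MvPolynomial σ ℝ}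
    (hp : p.IsHomogeneous n) : (dirDeriv x p).IsHomogeneous (n - 1) := by
  rw [dirDeriv_apply]
  exact IsHomogeneous.sum _ _ _ fun i _ => by
    simpa [C_mul'] using hp.pderiv.C_mul (x i)

lemma eval_dirDeriv_self (x : σ → ℝ) {n : ℕ} {p : MvPolynomial σ ℝ} (hp : p.IsHomogeneous n) :
    eval x (dirDeriv x p) = n * eval x p := by
  simpa [dirDeriv_apply, smul_eval] using congrArg (eval x) hp.sum_X_mul_pderiv

lemma fischerForm_linearPoly_pow (x : σ → ℝ) {n : ℕ} {q : MvPolynomial σ ℝ}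
    (hq : q.IsHomogeneous n) :
    fischerForm (linearPoly x ^ n) q = n.factorial * eval x q := by
  induction n generalizing q with
  | zero =>
    rw [totalDegree_eq_zero_iff_eq_C.mp ((totalDegree_zero_iff_isHomogeneous σ).2 hq), pow_zero,
      ← C_1, C_apply, fischerForm_monomial]
    simp
  | succ n ih =>
    rw [pow_succ', fischerForm_linearPoly_mul, ih (dirDeriv_isHomogeneous x hq),
      eval_dirDeriv_self x hq, Nat.factorial_succ]
    push_cast
    ring

lemma pderiv_linearPoly (x : σ → ℝ) (i : σ) : pderiv i (linearPoly x) = C (x i) := by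
  simp [linearPoly, pderiv_X, Pi.single_apply, smul_eq_C_mul]

lemma pderiv_sqNormPoly (i : σ) : pderiv i (sqNormPoly σ) = 2 * X i := by
  simp [sqNormPoly, pderiv_X, Pi.single_apply]

lemma dirDeriv_linearPoly (x y : σ → ℝ) : dirDeriv x (linearPoly y) = C (x ⬝ᵥ y) := by
  simp [dirDeriv_apply, pderiv_linearPoly, dotProduct, smul_eq_C_mul]

lemma dirDeriv_sqNormPoly (x : σ → ℝ) : dirDeriv x (sqNormPoly σ) = 2 * linearPoly x := by
  simp [dirDeriv_apply, pderiv_sqNormPoly, linearPoly, mul_sum]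

lemma polyLaplacian_linearPoly_mul (x : σ → ℝ) (p : MvPolynomial σ ℝ) :
    polyLaplacian (linearPoly x * p) = linearPoly x * polyLaplacian p + 2 * dirDeriv x p := by
  simp only [polyLaplacian_apply, dirDeriv_apply, Derivation.leibniz, map_add, pderiv_linearPoly,
    pderiv_C, smul_eq_mul, smul_eq_C_mul, mul_zero, mul_sum, ← sum_add_distrib]
  refine sum_congr rfl fun i _ => ?_
  ring

lemma polyLaplacian_sqNormPoly_mul {n : ℕ} {p : MvPolynomial σ ℝ} (hp : p.IsHomogeneous n) :
    polyLaplacian (sqNormPoly σ * p)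
      = sqNormPoly σ * polyLaplacian p + (2 * Fintype.card σ + 4 * n : ℕ) * p := by
  have euler := hp.sum_X_mul_pderiv
  have hcard : (Fintype.card σ : MvPolynomial σ ℝ) * p = ∑ _i : σ, p := by simp
  have hterm (i : σ) : pderiv i (pderiv i (sqNormPoly σ * p))
      = sqNormPoly σ * pderiv i (pderiv i p) + (2 * p + 4 * (X i * pderiv i p)) := by
    simp only [Derivation.leibniz, map_add, pderiv_sqNormPoly, smul_eq_mul, pderiv_X_self,
     ← Nat.cast_ofNat (R := MvPolynomial σ ℝ), Derivation.map_natCast]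
    ring
  simp only [polyLaplacian_apply, hterm, sum_add_distrib, ← mul_sum, euler, ← hcard]
  push_cast
  simp only [nsmul_eq_mul]
  ring

/-- The homogeneous polynomial of degree `n` in `y` that restricts to `C_n^{(a)}(⟨x, y⟩)` on the
unit sphere: the Gegenbauer recurrence homogenized by powers of `|y|²`. -/
def zonalPoly (a : ℝ) (x : σ → ℝ) : ℕ → MvPolynomial σ ℝ
  | 0 => 1
  | 1 => C (2 * a) * linearPoly x
  | n + 2 => C (n + 2 : ℝ)⁻¹ * (C (2 * (n + 1 + a)) * linearPoly x * zonalPoly a x (n + 1)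
      - C (n + 2 * a) * sqNormPoly σ * zonalPoly a x n)

lemma C_mul_zonalPoly_add_two (a : ℝ) (x : σ → ℝ) (n : ℕ) :
    C (n + 2 : ℝ) * zonalPoly a x (n + 2)
      = C (2 * (n + 1 + a)) * linearPoly x * zonalPoly a x (n + 1)
        - C (n + 2 * a) * sqNormPoly σ * zonalPoly a x n := by
  have hn : (n + 2 : ℝ) ≠ 0 := by positivity
  rw [zonalPoly, ← mul_assoc, ← C_mul, mul_inv_cancel₀ hn, C_1, one_mul]

lemma zonalPoly_isHomogeneous (a : ℝ) (x : σ → ℝ) (n : ℕ) : (zonalPoly a x n).IsHomogeneous n := by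
  induction n using Nat.twoStepInduction with
  | zero => exact isHomogeneous_one σ ℝ
  | one => exact (linearPoly_isHomogeneous x).C_mul _
  | more n ih₀ ih₁ =>
    have h₁ := ((linearPoly_isHomogeneous x).C_mul (2 * (n + 1 + a))).mul ih₁
    have h₀ := ((sqNormPoly_isHomogeneous (σ := σ)).C_mul (n + 2 * a)).mul ih₀
    rw [show 1 + (n + 1) = n + 2 by ring] at h₁
    rw [add_comm 2 n] at h₀
    exact (h₁.sub h₀).C_mul _

lemma eval_zonalPoly (a : ℝ) (x : σ → ℝ) {y : σ → ℝ} (hy : y ⬝ᵥ y = 1) (n : ℕ) :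
    eval y (zonalPoly a x n) = (gegenbauer a n).eval (x ⬝ᵥ y) := by
  induction n using Nat.twoStepInduction with
  | zero => simp [zonalPoly, gegenbauer]
  | one => simp [zonalPoly, gegenbauer, eval_linearPoly]
  | more n ih₀ ih₁ => simp [zonalPoly, gegenbauer, eval_linearPoly, eval_sqNormPoly, hy, ih₀, ih₁]

lemma dirDeriv_zonalPoly_succ (a : ℝ) {x : σ → ℝ} (hx : x ⬝ᵥ x = 1) (n : ℕ) :
    dirDeriv x (zonalPoly a x (n + 1)) = C (n + 2 * a) * zonalPoly a x n := by
  have hC (c : ℝ) : dirDeriv x (C c) = 0 := (dirDeriv x).map_algebraMap c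
  have step (n : ℕ) : C (n + 2 : ℝ) * dirDeriv x (zonalPoly a x (n + 2))
      = C (2 * (n + 1 + a)) * (zonalPoly a x (n + 1)
          + linearPoly x * dirDeriv x (zonalPoly a x (n + 1)))
        - C (n + 2 * a) * (2 * linearPoly x * zonalPoly a x n
          + sqNormPoly σ * dirDeriv x (zonalPoly a x n)) := by
    have h := congrArg (dirDeriv x) (C_mul_zonalPoly_add_two a x n)
    simp only [map_sub, Derivation.leibniz, hC, dirDeriv_linearPoly, hx, dirDeriv_sqNormPoly, C_1,
      smul_eq_mul] at h
    linear_combination h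
  induction n using Nat.twoStepInduction with
  | zero => simp [zonalPoly, Derivation.leibniz, hC, dirDeriv_linearPoly, hx]
  | one =>
    have hD₀ : dirDeriv x (zonalPoly a x 0) = 0 := (dirDeriv x).map_one_eq_zero
    have hD₁ : dirDeriv x (zonalPoly a x 1) = C (2 * a) := by
      simp [zonalPoly, Derivation.leibniz, hC, dirDeriv_linearPoly, hx]
    refine mul_left_cancel₀ (C_ne_zero.2 (by positivity : ((0 : ℕ) + 2 : ℝ) ≠ 0)) ?_
    rw [step, hD₀, hD₁]
    simp only [zonalPoly, Nat.cast_zero, Nat.cast_one, map_add, map_mul, map_ofNat, map_one,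
      map_zero]
    ring
  | more n ih₀ ih₁ =>
    refine mul_left_cancel₀ (C_ne_zero.2 (by positivity : ((n + 1 : ℕ) + 2 : ℝ) ≠ 0)) ?_
    have hrec := C_mul_zonalPoly_add_two a x n
    rw [step, ih₀, ih₁]
    simp only [Nat.cast_add, Nat.cast_one, Nat.cast_ofNat, map_add, map_mul, map_natCast,
      map_ofNat, map_one] at hrec ⊢
    linear_combination -(n + 1 + 2 * C a) * hrec

lemma polyLaplacian_zonalPoly {a : ℝ} (ha : (Fintype.card σ : ℝ) = 2 * a + 2) {x : σ → ℝ}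
    (hx : x ⬝ᵥ x = 1) (n : ℕ) : polyLaplacian (zonalPoly a x n) = 0 := by
  have hC (c : ℝ) (p : MvPolynomial σ ℝ) : polyLaplacian (C c * p) = C c * polyLaplacian p := by
    rw [C_mul', C_mul', map_smul]
  induction n using Nat.twoStepInduction with
  | zero => simp [zonalPoly, polyLaplacian_apply]
  | one => simp [zonalPoly, polyLaplacian_apply, pderiv_linearPoly]
  | more n ih₀ ih₁ =>
    rw [zonalPoly, hC, map_sub, mul_assoc, mul_assoc, hC, hC, polyLaplacian_linearPoly_mul,
      polyLaplacian_sqNormPoly_mul (zonalPoly_isHomogeneous a x n), ih₀, ih₁,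
      dirDeriv_zonalPoly_succ a hx]
    have hd : (Fintype.card σ : MvPolynomial σ ℝ) = 2 * C a + 2 := by
      rw [← map_natCast C, ha, map_add, map_mul, map_ofNat]
    simp only [Nat.cast_add, Nat.cast_mul, Nat.cast_ofNat, map_add, map_mul, map_natCast,
      map_ofNat, map_one, hd]
    ring

lemma exists_sqNormPoly_dvd_zonalPoly_sub {a : ℝ} (ha : 0 < a) (n : ℕ) :
    ∃ c > 0, ∀ x : σ → ℝ, sqNormPoly σ ∣ zonalPoly a x n - C c * linearPoly x ^ n := by
  induction n using Nat.twoStepInduction with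
  | zero => exact ⟨1, one_pos, fun x => by simp [zonalPoly]⟩
  | one => exact ⟨2 * a, by positivity, fun x => by simp [zonalPoly]⟩
  | more n _ ih =>
    obtain ⟨c, hc, h⟩ := ih
    refine ⟨(n + 2 : ℝ)⁻¹ * (2 * (n + 1 + a)) * c, by positivity, fun x => ?_⟩
    obtain ⟨q, hq⟩ := h x
    refine ⟨C (n + 2 : ℝ)⁻¹ * (C (2 * (n + 1 + a)) * linearPoly x * q
      - C (n + 2 * a) * zonalPoly a x n), ?_⟩
    rw [C_mul, C_mul, zonalPoly]
    linear_combination C (n + 2 : ℝ)⁻¹ * C (2 * (n + 1 + a)) * linearPoly x * hq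

lemma exists_fischerForm_zonalPoly_eq {a : ℝ} (ha : 0 < a)
    (hd : (Fintype.card σ : ℝ) = 2 * a + 2) (n : ℕ) :
    ∃ c > 0, ∀ x y : σ → ℝ, x ⬝ᵥ x = 1 → y ⬝ᵥ y = 1 →
      fischerForm (zonalPoly a x n) (zonalPoly a y n) = c * (gegenbauer a n).eval (x ⬝ᵥ y) := by
  obtain ⟨c, hc, h⟩ := exists_sqNormPoly_dvd_zonalPoly_sub (σ := σ) ha n
  refine ⟨c * n.factorial, by positivity, fun x y hx hy => ?_⟩
  obtain ⟨q, hq⟩ := h x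
  rw [sub_eq_iff_eq_add'.1 hq, map_add, LinearMap.add_apply, C_mul', map_smul,
    LinearMap.smul_apply, fischerForm_linearPoly_pow x (zonalPoly_isHomogeneous a y n),
    fischerForm_sqNormPoly_mul, polyLaplacian_zonalPoly hd hy, map_zero,
    eval_zonalPoly a y hx, dotProduct_comm y, smul_eq_mul]
  ring

end Fischer

section Schoenberg

variable {E : Type*} [NormedAddCommGroup E] [InnerProductSpace ℝ E]

lemma sum_gegenbauer_inner_nonneg {d : ℕ} (hd : 3 ≤ d) (hE : finrank ℝ E = d) (n : ℕ)
    {S : Finset E} (hS : ∀ x ∈ S, ‖x‖ = 1) (w : E → ℝ) :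
    0 ≤ ∑ x ∈ S, ∑ y ∈ S, w x * w y * (gegenbauer ((d - 2) / 2) n).eval (inner ℝ x y) := by
  have : FiniteDimensional ℝ E := .of_finrank_pos (by omega)
  have hd' : (3 : ℝ) ≤ d := by exact_mod_cast hd
  let v (x : E) : Fin (finrank ℝ E) → ℝ := (stdOrthonormalBasis ℝ E).repr x
  have hv (x y : E) : v x ⬝ᵥ v y = inner ℝ x y := by
    rw [← (stdOrthonormalBasis ℝ E).repr.inner_map_map, PiLp.inner_apply]
    exact sum_congr rfl fun i _ => mul_comm _ _
  have hunit {x : E} (hx : x ∈ S) : v x ⬝ᵥ v x = 1 := by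
    rw [hv, real_inner_self_eq_norm_sq, hS x hx, one_pow]
  obtain ⟨c, hc, hzonal⟩ := exists_fischerForm_zonalPoly_eq (σ := Fin (finrank ℝ E))
    (a := (d - 2) / 2) (by linarith) (by rw [Fintype.card_fin, hE]; ring) n
  refine nonneg_of_mul_nonneg_right (a := c) (b := _) ?_ hc
  calc
    0 ≤ fischerForm (∑ x ∈ S, w x • zonalPoly ((d - 2) / 2) (v x) n)
          (∑ x ∈ S, w x • zonalPoly ((d - 2) / 2) (v x) n) := fischerForm_self_nonneg _
    _ = ∑ x ∈ S, ∑ y ∈ S, w x * w y *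
          fischerForm (zonalPoly ((d - 2) / 2) (v x) n) (zonalPoly ((d - 2) / 2) (v y) n) := by
      simp only [map_sum, map_smul, LinearMap.sum_apply, LinearMap.smul_apply, smul_eq_mul,
        mul_sum, mul_assoc]
      exact sum_comm.trans (sum_congr rfl fun x _ => sum_congr rfl fun y _ => by ring)
    _ = c * _ := by
      rw [mul_sum]
      refine sum_congr rfl fun x hx => ?_
      rw [mul_sum]
      refine sum_congr rfl fun y hy => ?_
      rw [hzonal _ _ (hunit hx) (hunit hy), hv]
      ring

end Schoenberg

section Certificates

/-- Musin's test function in dimension three: a nonnegative combination of the constant `1` and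
Legendre polynomials. It is positive at `1` and near `-1`, but nonpositive on `[-29 / 41, 1 / 2]`,
which takes in most inner products of a spherical code of angle `60°`. -/
def kissingPoly (t : ℝ) : ℝ :=
  1 + 177 / 100 * (gegenbauer (1 / 2) 1).eval t + 701 / 200 * (gegenbauer (1 / 2) 2).eval t
    + 173 / 100 * (gegenbauer (1 / 2) 3).eval t + 199 / 100 * (gegenbauer (1 / 2) 4).eval t
    + 43 / 100 * (gegenbauer (1 / 2) 9).eval t

lemma kissingPoly_eq (t : ℝ) :
    kissingPoly t = -1 / 160 + 597 / 2560 * t - 441 / 200 * t ^ 2 - 1433 / 128 * t ^ 3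
      + 1393 / 160 * t ^ 4 + 387387 / 6400 * t ^ 5 - 55341 / 640 * t ^ 7
      + 104533 / 2560 * t ^ 9 := by
  simp [kissingPoly, gegenbauer]
  ring

/-- Inserting powers of `p + q = 1` puts the difference in Bernstein form on `[a, b]`,
where it is enough that all the coefficients are nonnegative. -/
lemma kissingPoly_le_of_bernstein {a b c₀ c₁ c₂ : ℝ}
    (h : ∀ p ≥ 0, ∀ q ≥ 0, 0 ≤ (c₀ + 1 / 160) * (p + q) ^ 9
      + (c₁ - 597 / 2560) * (a * p + b * q) * (p + q) ^ 8
      + (c₂ + 441 / 200) * (a * p + b * q) ^ 2 * (p + q) ^ 7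
      + 1433 / 128 * (a * p + b * q) ^ 3 * (p + q) ^ 6
      - 1393 / 160 * (a * p + b * q) ^ 4 * (p + q) ^ 5
      - 387387 / 6400 * (a * p + b * q) ^ 5 * (p + q) ^ 4
      + 55341 / 640 * (a * p + b * q) ^ 7 * (p + q) ^ 2
      - 104533 / 2560 * (a * p + b * q) ^ 9)
    {t : ℝ} (ht : t ∈ Set.Icc a b) : kissingPoly t ≤ c₀ + c₁ * t + c₂ * t ^ 2 := by
  obtain ⟨p, q, hp, hq, hpq, rfl⟩ := Icc_subset_segment (𝕜 := ℝ) ht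
  have := h p hp q hq
  rw [hpq] at this
  rw [kissingPoly_eq, smul_eq_mul, smul_eq_mul, mul_comm p, mul_comm q]
  linarith

/-- A quadratic upper bound for `s ↦ kissingPoly (-s)` on the cap `29 / 41 ≤ s ≤ 1`, whose sum
over a cap depends on the points `s` only through their first two moments. -/
def capMajorant (s : ℝ) : ℝ := 103 / 20 * (s - 29 / 41) + 37 / 2 * (s - 29 / 41) ^ 2

lemma kissingPoly_nonpos {t : ℝ} (ht : t ∈ Set.Icc (-29 / 41) (1 / 2)) : kissingPoly t ≤ 0 := by
  suffices kissingPoly t ≤ 0 + 0 * t + 0 * t ^ 2 by simpa using this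
  obtain h₁ | h₁ := le_total t (-41 / 100)
  · refine kissingPoly_le_of_bernstein (fun p hp q hq => ?_) ⟨ht.1, h₁⟩
    ring_nf
    positivity
  obtain h₂ | h₂ := le_total t (1 / 25)
  · refine kissingPoly_le_of_bernstein (fun p hp q hq => ?_) ⟨h₁, h₂⟩
    ring_nf
    positivity
  · refine kissingPoly_le_of_bernstein (fun p hp q hq => ?_) ⟨h₂, ht.2⟩
    ring_nf
    positivity

lemma kissingPoly_le_const {t : ℝ} (ht : t ∈ Set.Icc (-1) (-29 / 41)) :
    kissingPoly t ≤ 1287 / 500 := by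
  suffices kissingPoly t ≤ 1287 / 500 + 0 * t + 0 * t ^ 2 by simpa using this
  obtain h₁ | h₁ := le_total t (-19 / 20)
  · refine kissingPoly_le_of_bernstein (fun p hp q hq => ?_) ⟨ht.1, h₁⟩
    ring_nf
    positivity
  · refine kissingPoly_le_of_bernstein (fun p hp q hq => ?_) ⟨h₁, ht.2⟩
    ring_nf
    positivity

lemma kissingPoly_le_capMajorant_neg {t : ℝ} (ht : t ∈ Set.Icc (-1) (-29 / 41)) :
    kissingPoly t ≤ capMajorant (-t) := by
  rw [capMajorant]
  suffices kissingPoly t ≤ (103 / 20 * (-29 / 41) + 37 / 2 * (-29 / 41) ^ 2)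
      + (-103 / 20 + 37 * (29 / 41)) * t + 37 / 2 * t ^ 2 by linarith
  obtain h₁ | h₁ := le_total t (-23 / 25)
  · refine kissingPoly_le_of_bernstein (fun p hp q hq => ?_) ⟨ht.1, h₁⟩
    ring_nf
    positivity
  obtain h₂ | h₂ := le_total t (-22 / 25)
  · refine kissingPoly_le_of_bernstein (fun p hp q hq => ?_) ⟨h₁, h₂⟩
    ring_nf
    positivity
  · refine kissingPoly_le_of_bernstein (fun p hp q hq => ?_) ⟨h₂, ht.2⟩
    ring_nf
    positivity

end Certificates

section Cap

variable {E : Type*} [NormedAddCommGroup E] [InnerProductSpace ℝ E]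

lemma norm_sum_smul_sq_le {C : Finset E} {c : ℝ} {w : E → ℝ} (hC : ∀ x ∈ C, ‖x‖ = 1)
    (hc : ∀ x ∈ C, ∀ y ∈ C, x ≠ y → inner ℝ x y ≤ c) (hw : ∀ x ∈ C, 0 ≤ w x) :
    ‖∑ x ∈ C, w x • x‖ ^ 2 ≤ (1 - c) * ∑ x ∈ C, w x ^ 2 + c * (∑ x ∈ C, w x) ^ 2 := by
  have hinner {x y : E} (hx : x ∈ C) (hy : y ∈ C) :
      inner ℝ x y ≤ c + if x = y then 1 - c else 0 := by
    split_ifs with h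
    · simp [← h, hC x hx]
    · simpa using hc x hx y hy h
  calc
    ‖∑ x ∈ C, w x • x‖ ^ 2 = ∑ x ∈ C, ∑ y ∈ C, w x * w y * inner ℝ x y := by
      simp only [← real_inner_self_eq_norm_sq, sum_inner, inner_sum, real_inner_smul_left,
        real_inner_smul_right, mul_assoc]
      exact sum_congr rfl fun x _ => sum_congr rfl fun y _ => by rw [real_inner_comm]
    _ ≤ ∑ x ∈ C, ∑ y ∈ C, w x * w y * (c + if x = y then 1 - c else 0) :=
      sum_le_sum fun x hx => sum_le_sum fun y hy =>
        mul_le_mul_of_nonneg_left (hinner hx hy) (mul_nonneg (hw x hx) (hw y hy))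
    _ = (1 - c) * ∑ x ∈ C, w x ^ 2 + c * (∑ x ∈ C, w x) ^ 2 := by
      simp only [mul_add, sum_add_distrib, mul_ite, mul_zero, ← sum_mul, ← mul_sum, sum_ite_eq]
      rw [sum_congr rfl fun x hx => if_pos hx, ← sum_mul]
      simp only [sq]
      ring

lemma sq_inner_le_sq_norm_of_norm_le_one {e : E} (he : ‖e‖ ≤ 1) (x : E) :
    (inner ℝ e x) ^ 2 ≤ ‖x‖ ^ 2 :=
  sq_le_sq.2 <| by
    simpa using (abs_real_inner_le_norm e x).trans (mul_le_of_le_one_left (norm_nonneg x) he)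

lemma sum_sq_inner_sub_le {e : E} (he : ‖e‖ ≤ 1) {C : Finset E} {c : ℝ} (hc₀ : 0 ≤ c)
    (hc₁ : c < 1) (hC : ∀ x ∈ C, ‖x‖ = 1) (hc : ∀ x ∈ C, ∀ y ∈ C, x ≠ y → inner ℝ x y ≤ c)
    (hbal : ∀ x ∈ C, c * ∑ y ∈ C, inner ℝ e y ≤ (1 - c + c * #C) * inner ℝ e x) :
    ∑ x ∈ C, (inner ℝ e x) ^ 2 - c * (∑ x ∈ C, inner ℝ e x) ^ 2 / (1 - c + c * #C) ≤ 1 - c := by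
  set T := ∑ x ∈ C, inner ℝ e x
  set A := ∑ x ∈ C, (inner ℝ e x) ^ 2
  set N := 1 - c + c * #C with hN
  -- If all inner products within `C` equal `c`, then with the weights `⟪e, x⟫ - m` the vector
  -- `∑ w x • x` is `1 - c` times the projection of `e` to the span of `C`.
  set m := c * T / N
  set Q := A - c * T ^ 2 / N
  let w (x : E) : ℝ := inner ℝ e x - m
  have hN₀ : 0 < N := by
    have : 0 ≤ c * #C := by positivity
    linarith
  have hm : N * m = c * T := mul_div_cancel₀ _ hN₀.ne'
  have hQ : Q = A - m * T := by ring
  have hw (x : E) (hx : x ∈ C) : 0 ≤ w x := sub_nonneg.2 ((div_le_iff₀' hN₀).2 (hbal x hx))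
  have hw₁ : ∑ x ∈ C, w x = T - #C * m := by simp [w, T]
  have hw₂ : ∑ x ∈ C, w x ^ 2 = A - 2 * m * T + #C * m ^ 2 := by
    simp only [w, A, T, sub_sq, sum_add_distrib, sum_sub_distrib, ← sum_mul, ← mul_sum, sum_const,
      nsmul_eq_mul]
    ring
  have hproj : inner ℝ e (∑ x ∈ C, w x • x) = Q := by
    rw [hQ, inner_sum, mul_sum, ← sum_sub_distrib]
    exact sum_congr rfl fun x _ => by rw [real_inner_smul_right]; ring
  have hnorm : ‖∑ x ∈ C, w x • x‖ ^ 2 ≤ (1 - c) * Q := by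
    refine (norm_sum_smul_sq_le hC hc hw).trans_eq ?_
    rw [hw₁, hw₂, hQ]
    linear_combination (#C * m - T) * hm - (#C * m ^ 2 - T * m) * hN
  have hQsq : Q ^ 2 ≤ (1 - c) * Q :=
    calc
      Q ^ 2 = inner ℝ e (∑ x ∈ C, w x • x) ^ 2 := by rw [hproj]
      _ ≤ ‖∑ x ∈ C, w x • x‖ ^ 2 := sq_inner_le_sq_norm_of_norm_le_one he _
      _ ≤ (1 - c) * Q := hnorm
  by_contra! hlt
  nlinarith

lemma linearIndepOn_id_of_inner_le {e : E} (he : ‖e‖ ≤ 1) {κ : ℝ} (hκ : κ < 1) {C : Set E}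
    (hpos : ∀ x ∈ C, 0 < inner ℝ e x)
    (hC : C.Pairwise fun x y => inner ℝ x y ≤ κ * (inner ℝ e x * inner ℝ e y)) :
    LinearIndepOn ℝ id C := by
  let B : LinearMap.BilinForm ℝ E :=
    innerₗ E - κ • (LinearMap.mul ℝ ℝ).compl₁₂ (innerₗ E e) (innerₗ E e)
  have hB (x y : E) : B x y = inner ℝ x y - κ * (inner ℝ e x * inner ℝ e y) := by simp [B]
  refine LinearMap.BilinForm.linearIndependent_of_pairwise_le_zero B ?_ (innerₗ E e) _
    (fun x => hpos x x.2) fun x y hxy => ?_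
  · intro x hx
    have hcs := sq_inner_le_sq_norm_of_norm_le_one he x
    rw [LinearMap.BilinMap.toQuadraticMap_apply, hB, real_inner_self_eq_norm_sq]
    have hx₀ : 0 < ‖x‖ ^ 2 := by positivity
    obtain hκ₀ | hκ₀ := le_total κ 0 <;> nlinarith [sq_nonneg (inner ℝ e x)]
  · change B x y ≤ 0
    rw [hB, sub_nonpos]
    exact hC x.2 y.2 (Subtype.coe_ne_coe.2 hxy)

lemma card_le_finrank_of_le_inner [FiniteDimensional ℝ E] {e : E} (he : ‖e‖ ≤ 1) {b c : ℝ}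
    (hb : 0 < b) (hc₀ : 0 ≤ c) (hcb : c < b ^ 2) {C : Finset E} (hcap : ∀ x ∈ C, b ≤ inner ℝ e x)
    (hC : ∀ x ∈ C, ∀ y ∈ C, x ≠ y → inner ℝ x y ≤ c) : #C ≤ finrank ℝ E := by
  refine LinearIndependent.finset_card_le_finrank (R := ℝ) (M := E)
    (linearIndepOn_id_of_inner_le (C := C) he ((div_lt_one (pow_pos hb 2)).2 hcb)
      (fun x hx => hb.trans_le (hcap x hx)) fun x hx y hy hxy => ?_)
  calc
    inner ℝ x y ≤ c := hC x hx y hy hxy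
    _ = c / b ^ 2 * (b * b) := by field_simp
    _ ≤ c / b ^ 2 * (inner ℝ e x * inner ℝ e y) :=
      mul_le_mul_of_nonneg_left (mul_le_mul (hcap x hx) (hcap y hy) hb.le
        (hb.le.trans (hcap x hx))) (by positivity)

end Cap

section Numeric

variable {ι : Type*}

lemma sum_capMajorant_le {C : Finset ι} {s : ι → ℝ} (hcard : #C = 2 ∨ #C = 3)
    (hs : ∀ i ∈ C, 29 / 41 ≤ s i)
    (hQ : ∑ i ∈ C, s i ^ 2 - (∑ i ∈ C, s i) ^ 2 / (#C + 1) ≤ 1 / 2) :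
    ∑ i ∈ C, capMajorant (s i) ≤ 1287 / 500 := by
  set D := ∑ i ∈ C, (s i - 29 / 41) with hD
  set R := ∑ i ∈ C, (s i - 29 / 41) ^ 2 with hR
  have hD₀ : 0 ≤ D := sum_nonneg fun i hi => sub_nonneg.2 (hs i hi)
  have hRD : R ≤ D ^ 2 := sum_sq_le_sq_sum_of_nonneg fun i hi => sub_nonneg.2 (hs i hi)
  have hDR : D ^ 2 ≤ #C * R := sq_sum_le_card_mul_sum_sq
  have hsum : ∑ i ∈ C, s i = D + #C * (29 / 41) := by simp [hD]
  have hsq : ∑ i ∈ C, s i ^ 2 = R + 2 * (29 / 41) * D + #C * (29 / 41) ^ 2 := by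
    simp only [hD, hR, sub_sq, sum_add_distrib, sum_sub_distrib, ← sum_mul, ← mul_sum, sum_const,
      nsmul_eq_mul]
    ring
  rw [hsum, hsq] at hQ
  simp only [capMajorant]
  rw [sum_add_distrib, ← mul_sum, ← mul_sum, ← hD, ← hR]
  obtain h | h := hcard <;> rw [h] at hQ hDR <;> norm_num at hQ hDR
  · obtain hsmall | _ := le_total D (517 / 2000)
    · nlinarith
    · have : D ≤ 8 / 25 := by nlinarith
      nlinarith
  · obtain hsmall | _ := le_total D (1 / 4)
    · nlinarith
    · have : D ≤ 1 / 3 := by nlinarith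
      nlinarith

end Numeric

section SphericalCode

variable {E : Type*} [NormedAddCommGroup E] [InnerProductSpace ℝ E]

lemma sq_card_le_sum_kissingPoly_inner (hE : finrank ℝ E = 3) {S : Finset E}
    (hS : ∀ x ∈ S, ‖x‖ = 1) :
    (#S : ℝ) ^ 2 ≤ ∑ x ∈ S, ∑ y ∈ S, kissingPoly (inner ℝ x y) := by
  have hpos (n : ℕ) : 0 ≤ ∑ x ∈ S, ∑ y ∈ S, (gegenbauer (1 / 2) n).eval (inner ℝ x y) := by
    have h := sum_gegenbauer_inner_nonneg le_rfl hE n hS 1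
    norm_num at h
    simpa using h
  simp only [kissingPoly, sum_add_distrib, ← mul_sum, sum_const, nsmul_eq_mul, mul_one, ← sq]
  linarith [hpos 1, hpos 2, hpos 3, hpos 4, hpos 9]

lemma sum_kissingPoly_inner_le_of_cap (hE : finrank ℝ E = 3) {e : E} (he : ‖e‖ = 1) {C : Finset E}
    (hC : ∀ x ∈ C, ‖x‖ = 1) (hsep : ∀ x ∈ C, ∀ y ∈ C, x ≠ y → inner ℝ x y ≤ 1 / 2)
    (hcap : ∀ x ∈ C, inner ℝ e x ≤ -29 / 41) :
    ∑ x ∈ C, kissingPoly (inner ℝ e x) ≤ 1287 / 500 := by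
  have : FiniteDimensional ℝ E := .of_finrank_pos (by omega)
  have hcap' (x : E) (hx : x ∈ C) : 29 / 41 ≤ inner ℝ (-e) x := by
    rw [inner_neg_left]
    linarith [hcap x hx]
  have hle_one (x : E) (hx : x ∈ C) : inner ℝ (-e) x ≤ 1 := by
    simpa [he, hC x hx] using real_inner_le_norm (-e) x
  have hmem (x : E) (hx : x ∈ C) : inner ℝ e x ∈ Set.Icc (-1) (-29 / 41) :=
    ⟨by simpa [neg_le] using hle_one x hx, hcap x hx⟩
  have hcard : #C ≤ 3 := hE ▸ card_le_finrank_of_le_inner (e := -e) (by simp [he])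
    (by norm_num) (by norm_num) (by norm_num) hcap' hsep
  obtain hC₀ | hC₁ | hC₂₃ : #C = 0 ∨ #C = 1 ∨ (#C = 2 ∨ #C = 3) := by omega
  · norm_num [card_eq_zero.1 hC₀]
  · obtain ⟨x, rfl⟩ := card_eq_one.1 hC₁
    simpa using kissingPoly_le_const (hmem x (mem_singleton_self x))
  · have hbal (x : E) (hx : x ∈ C) :
        1 / 2 * ∑ y ∈ C, inner ℝ (-e) y ≤ (1 - 1 / 2 + 1 / 2 * #C) * inner ℝ (-e) x := by
      have hsum : 1 - inner ℝ (-e) x ≤ #C - ∑ y ∈ C, inner ℝ (-e) y := by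
        simpa [sum_add_distrib] using single_le_sum (f := fun y => 1 - inner ℝ (-e) y)
          (fun y hy => sub_nonneg.2 (hle_one y hy)) hx
      have : (2 : ℝ) ≤ #C ∧ (#C : ℝ) ≤ 3 := by norm_cast; omega
      nlinarith [hcap' x hx]
    have hQ := sum_sq_inner_sub_le (e := -e) (by simp [he]) (by norm_num) (by norm_num) hC hsep hbal
    calc
      ∑ x ∈ C, kissingPoly (inner ℝ e x) ≤ ∑ x ∈ C, capMajorant (inner ℝ (-e) x) :=
        sum_le_sum fun x hx => by
          simpa using kissingPoly_le_capMajorant_neg (hmem x hx)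
      _ ≤ 1287 / 500 := by
        refine sum_capMajorant_le hC₂₃ hcap' (le_trans (le_of_eq ?_) (hQ.trans_eq ?_))
        · field_simp
          ring
        · norm_num

lemma sum_kissingPoly_inner_le (hE : finrank ℝ E = 3) {e : E} (he : ‖e‖ = 1) {S : Finset E}
    (hS : ∀ x ∈ S, ‖x‖ = 1) (hsep : ∀ x ∈ S, ∀ y ∈ S, x ≠ y → inner ℝ x y ≤ 1 / 2)
    (heS : ∀ x ∈ S, inner ℝ e x ≤ 1 / 2) :
    ∑ x ∈ S, kissingPoly (inner ℝ e x) ≤ 1287 / 500 := by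
  rw [← sum_filter_add_sum_filter_not S fun x => inner ℝ e x ≤ -29 / 41]
  have hcap := sum_kissingPoly_inner_le_of_cap hE he (C := {x ∈ S | inner ℝ e x ≤ -29 / 41})
    (fun x hx => hS x (mem_filter.1 hx).1)
    (fun x hx y hy => hsep x (mem_filter.1 hx).1 y (mem_filter.1 hy).1)
    (fun x hx => (mem_filter.1 hx).2)
  have hrest : ∑ x ∈ S with ¬inner ℝ e x ≤ -29 / 41, kissingPoly (inner ℝ e x) ≤ 0 :=
    sum_nonpos fun x hx =>
      have hx := mem_filter.1 hx
      kissingPoly_nonpos ⟨(not_le.1 hx.2).le, heS x hx.1⟩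
  linarith

lemma card_le_twelve_of_inner_le (hE : finrank ℝ E = 3) {S : Finset E} (hS : ∀ x ∈ S, ‖x‖ = 1)
    (hsep : ∀ x ∈ S, ∀ y ∈ S, x ≠ y → inner ℝ x y ≤ 1 / 2) : #S ≤ 12 := by
  have hrow (x : E) (hx : x ∈ S) : ∑ y ∈ S, kissingPoly (inner ℝ x y) ≤ 12999 / 1000 := by
    have hself : kissingPoly (inner ℝ x x) = 417 / 40 := by
      rw [real_inner_self_eq_norm_sq, hS x hx, kissingPoly_eq]
      norm_num
    have hrest := sum_kissingPoly_inner_le hE (hS x hx) (S := S.erase x)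
      (fun y hy => hS y (mem_of_mem_erase hy))
      (fun y hy z hz => hsep y (mem_of_mem_erase hy) z (mem_of_mem_erase hz))
      (fun y hy => hsep x hx y (mem_of_mem_erase hy) (ne_of_mem_erase hy).symm)
    rw [← add_sum_erase S _ hx, hself]
    linarith
  have hsq : (#S : ℝ) * #S ≤ #S * (12999 / 1000) := by
    rw [← sq]
    exact (sq_card_le_sum_kissingPoly_inner hE hS).trans (by simpa using sum_le_sum hrow)
  by_contra! hcard
  have hcard : (13 : ℝ) ≤ #S := by exact_mod_cast hcard
  nlinarith

theorem kissing_bound_space_general (hE : finrank ℝ E = 3) {P : Set E}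
    (hP : P.Pairwise fun y z => 2 ≤ dist y z) (x : E) : {y ∈ P | dist x y = 2}.encard ≤ 12 := by
  by_contra! hlt
  obtain ⟨N, hN, hcard⟩ := Set.exists_subset_encard_eq (Order.add_one_le_of_lt hlt)
  lift N to Finset E using Set.finite_of_encard_eq_coe (k := 13) hcard
  have hN₁₃ : #N = 13 := by rw [Set.encard_coe_eq_coe_finsetCard] at hcard; exact_mod_cast hcard
  let u (y : E) : E := (2 : ℝ)⁻¹ • (y - x)
  have hu : Function.Injective u := fun y z h => by simpa [u] using h
  have hnorm (y : E) (hy : y ∈ N) : ‖u y‖ = 1 := by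
    rw [norm_smul, ← dist_eq_norm, dist_comm, (hN hy).2]
    norm_num
  have hcode := card_le_twelve_of_inner_le hE (S := N.image u) (by simpa using hnorm) <| by
    simp only [forall_mem_image]
    intro y hy z hz hyz
    have hdist : 1 ≤ ‖u y - u z‖ := by
      have := hP (hN hy).1 (hN hz).1 (ne_of_apply_ne u hyz)
      rw [← smul_sub, sub_sub_sub_cancel_right, norm_smul, ← dist_eq_norm]
      norm_num
      linarith
    have := norm_sub_sq_real (u y) (u z)
    rw [hnorm y hy, hnorm z hz] at this
    nlinarith
  rw [card_image_of_injective N hu] at hcode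
  omega

end SphericalCode

/-- The kissing number bound in `ℝ³`: in any finite packing of unit balls, each ball
touches at most `12` other balls of the packing. -/
theorem kissing_bound_space (P : Finset (EuclideanSpace ℝ (Fin 3)))
    (hpack : ∀ x ∈ P, ∀ y ∈ P, x ≠ y → 2 ≤ dist x y) :
    ∀ x ∈ P, (P.filter fun y => dist x y = 2).card ≤ 12 := by
  intro x _
  rw [← Nat.cast_le (α := ℕ∞), ← Set.encard_coe_eq_coe_finsetCard, Finset.coe_filter]
  exact kissing_bound_space_general finrank_euclideanSpace_fin (fun y hy z hz => hpack y hy z hz) x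
end
end

section
/- Let K be an o-symmetric convex body in ℝ^d (d ≥ 2) and let c₁+K, …, c_n+K be a packing of n > 1 translates of K (pairwise disjoint interiors). Then n·vol_d(K) ≤ δ(K) · vol_d(⋃_{i=1}^n (c_i + 2K)), where δ(K) is the supremal density of packings of translates of K in ℝ^d. -/
open scoped Classical ENNReal Pointwise
open MeasureTheory

noncomputable section

/-- A family of translates of `K` by the set of vectors `C` is a packing if distinct
translates have disjoint interiors. -/
def IsTranslatePacking {d : ℕ} (K : Set (EuclideanSpace ℝ (Fin d)))
    (C : Set (EuclideanSpace ℝ (Fin d))) : Prop :=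
  ∀ c ∈ C, ∀ c' ∈ C, c ≠ c' → Disjoint (interior (c +ᵥ K)) (interior (c' +ᵥ K))

/-- The packing density `δ(K)` of a convex body `K ⊆ ℝ^d`: the supremum, over all
packings of translates of `K`, of the upper density of the packing. -/
def packingDensity {d : ℕ} (K : Set (EuclideanSpace ℝ (Fin d))) : ℝ≥0∞ :=
  ⨆ (C : Set (EuclideanSpace ℝ (Fin d))) (_ : IsTranslatePacking K C),
    Filter.limsup
      (fun R : ℝ =>
        volume ((⋃ c ∈ C, c +ᵥ K) ∩ Metric.ball (0 : EuclideanSpace ℝ (Fin d)) R) /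
          volume (Metric.ball (0 : EuclideanSpace ℝ (Fin d)) R))
      Filter.atTop

/-!
Write `U` for the interior of `K`. Take a lattice `L` with fundamental domain `F`, so sparse that
the `L`-translates of the cluster `⋃ i, c i +ᵥ U` are disjoint, and a set `X` of maximum size such
that the sets `x + L + U`, `x ∈ X`, are disjoint. The packing by `X + L` has density
`|X| vol U / vol F`, which is therefore at most `δ(K)`.

Any shift `t` of the cluster gives an `L`-periodic packing too. Exchanging it for the points of `X`
whose translates it meets yields a packing again, so by maximality it meets those of at least `n`
points of `X`. Averaging over `t ∈ F` gives `n vol F ≤ |X| vol (⋃ i, c i +ᵥ (U - U))`. Multiplying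
the two bounds eliminates `|X|` and `vol F`, and `U - U ⊆ 2K` when `K` is convex and symmetric.
-/

open Filter Metric Function Topology Bornology

section FundamentalDomain

variable {G α : Type*} [AddGroup G] [AddAction G α]

variable (G) in
/-- The union of all translates of `s` under the action of `G`, i.e. the smallest `G`-invariant
set containing `s`. -/
def periodization (s : Set α) : Set α := ⋃ g : G, g +ᵥ s

lemma mem_periodization {s : Set α} {x : α} :
    x ∈ periodization G s ↔ ∃ g : G, ∃ y ∈ s, g +ᵥ y = x := by
  simp only [periodization, Set.mem_iUnion, Set.mem_vadd_set]

lemma vadd_periodization (g : G) (s : Set α) : g +ᵥ periodization G s = periodization G s := by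
  simp only [periodization, Set.vadd_set_iUnion, vadd_vadd]
  exact (Equiv.addLeft g).iSup_comp (g := fun h : G => h +ᵥ s)

lemma vadd_periodization_comm {M : Type*} [VAdd M α] [VAddCommClass M G α] (m : M) (s : Set α) :
    m +ᵥ periodization G s = periodization G (m +ᵥ s) := by
  simp only [periodization, Set.vadd_set_iUnion, vadd_comm m]

lemma pairwise_disjoint_periodization {ι : Type*} {s : ι → Set α}
    (hs : Pairwise (Disjoint on s))
    (hdisj : Pairwise (Disjoint on fun g : G => g +ᵥ ⋃ i, s i)) :
    Pairwise (Disjoint on fun i => periodization G (s i)) := by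
  intro i j hij
  refine Set.disjoint_iUnion_left.2 fun g => Set.disjoint_iUnion_right.2 fun h => ?_
  obtain rfl | hgh := eq_or_ne g h
  · exact Set.disjoint_vadd_set.2 (hs hij)
  · exact (hdisj hgh).mono (Set.vadd_set_mono (Set.subset_iUnion s i))
      (Set.vadd_set_mono (Set.subset_iUnion s j))

variable [Countable G] [MeasurableSpace α] [MeasurableConstVAdd G α] {μ : Measure α}
  [VAddInvariantMeasure G α μ] {F s : Set α}

lemma measurableSet_periodization (hs : MeasurableSet s) : MeasurableSet (periodization G s) :=
  .iUnion fun g => hs.const_vadd g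

lemma measure_periodization_inter_le (hF : IsAddFundamentalDomain G F μ) :
    μ (periodization G s ∩ F) ≤ μ s := by
  rw [hF.measure_eq_tsum s, periodization, Set.iUnion_inter]
  exact measure_iUnion_le _

lemma measure_periodization_inter (hF : IsAddFundamentalDomain G F μ) (hs : MeasurableSet s)
    (hdisj : Pairwise (Disjoint on fun g : G => g +ᵥ s)) :
    μ (periodization G s ∩ F) = μ s := by
  rw [hF.measure_eq_tsum s, periodization, Set.iUnion_inter]
  refine measure_iUnion₀ (fun g h hgh => ?_) fun g =>
    (hs.const_vadd g).nullMeasurableSet.inter hF.nullMeasurableSet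
  exact ((hdisj hgh).mono Set.inter_subset_left Set.inter_subset_left).aedisjoint

end FundamentalDomain

section Density

instance isIsometricVAdd_addSubgroup {G α : Type*} [AddGroup G] [PseudoEMetricSpace α]
    [AddAction G α] [IsIsometricVAdd G α] (H : AddSubgroup G) : IsIsometricVAdd H α :=
  ⟨fun h => isometry_vadd α (h : G)⟩

lemma measure_inter_mul_measure_ball_le {G α : Type*} [AddGroup G] [Countable G]
    [PseudoMetricSpace α] [AddAction G α] [IsIsometricVAdd G α] [MeasurableSpace α]
    [MeasurableConstVAdd G α] {μ : Measure α} [VAddInvariantMeasure G α μ] {F P : Set α}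
    (hF : IsAddFundamentalDomain G F μ) (hFb : IsBounded F) (hP : ∀ g : G, g +ᵥ P = P)
    (x : α) (R : ℝ) :
    μ (P ∩ F) * μ (ball x (R - diam F)) ≤ μ F * μ (P ∩ ball x R) := by
  rw [hF.measure_eq_tsum' (ball x (R - diam F)), hF.measure_eq_tsum' (P ∩ ball x R),
    ← ENNReal.tsum_mul_left, ← ENNReal.tsum_mul_left]
  -- A translate of `F` meeting the smaller ball lies in the larger one, so the bound holds on each
  -- translate of `F` separately.
  refine ENNReal.tsum_le_tsum fun g => ?_
  rcases (ball x (R - diam F) ∩ (g +ᵥ F)).eq_empty_or_nonempty with h | ⟨y, hy, hyF⟩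
  · simp [h]
  have hsub : g +ᵥ F ⊆ ball x R := fun z hz => by
    have hzy : dist z y ≤ diam F := by
      simpa only [diam_vadd] using dist_le_diam_of_mem (hFb.vadd g) hz hyF
    have := dist_triangle z y x
    rw [mem_ball] at hy ⊢
    linarith
  calc μ (P ∩ F) * μ (ball x (R - diam F) ∩ (g +ᵥ F))
      ≤ μ (P ∩ F) * μ (g +ᵥ F) := by gcongr; exact Set.inter_subset_right
    _ = μ F * μ (g +ᵥ (P ∩ F)) := by rw [measure_vadd, measure_vadd, mul_comm]
    _ = μ F * μ (P ∩ ball x R ∩ (g +ᵥ F)) := by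
      rw [Set.vadd_set_inter, hP, Set.inter_assoc, Set.inter_eq_right.2 hsub]

variable {E : Type*} [NormedAddCommGroup E] [NormedSpace ℝ E] [FiniteDimensional ℝ E]
  [MeasurableSpace E] [BorelSpace E]

lemma tendsto_addHaar_ball_sub_div_addHaar_ball (μ : Measure E) [μ.IsAddHaarMeasure] (x : E)
    (D : ℝ) :
    Tendsto (fun R : ℝ => μ (ball x (R - D)) / μ (ball x R)) atTop (𝓝 1) := by
  have hratio : Tendsto (fun R : ℝ => (R - D) / R) atTop (𝓝 1) := by
    have : Tendsto (fun R : ℝ => 1 - D / R) atTop (𝓝 (1 - 0)) :=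
      tendsto_const_nhds.sub (tendsto_const_nhds.div_atTop tendsto_id)
    rw [sub_zero] at this
    refine this.congr' ?_
    filter_upwards [eventually_ne_atTop 0] with R hR
    rw [sub_div, div_self hR]
  have hpow := ENNReal.tendsto_ofReal (hratio.pow (Module.finrank ℝ E))
  rw [one_pow, ENNReal.ofReal_one] at hpow
  refine hpow.congr' ?_
  filter_upwards [eventually_gt_atTop 0, eventually_gt_atTop D] with R hR hRD
  have hball := Measure.addHaar_ball_mul_of_pos μ x (div_pos (sub_pos.2 hRD) hR) R
  rw [div_mul_cancel₀ _ hR.ne', ← Measure.addHaar_ball_center μ x R] at hball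
  rw [hball, ENNReal.mul_div_cancel_right (measure_ball_pos μ x hR).ne' measure_ball_lt_top.ne]

lemma measure_inter_le_mul_limsup {G : Type*} [AddGroup G] [Countable G] [AddAction G E]
    [IsIsometricVAdd G E] {μ : Measure E} [μ.IsAddHaarMeasure] [VAddInvariantMeasure G E μ]
    {F P : Set E} (hF : IsAddFundamentalDomain G F μ) (hFb : IsBounded F)
    (hP : ∀ g : G, g +ᵥ P = P) (x : E) :
    μ (P ∩ F) ≤ μ F * limsup (fun R : ℝ => μ (P ∩ ball x R) / μ (ball x R)) atTop := by
  have hlim : Tendsto (fun R : ℝ => μ (P ∩ F) * (μ (ball x (R - diam F)) / μ (ball x R))) atTop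
      (𝓝 (μ (P ∩ F))) := by
    simpa only [mul_one] using ENNReal.Tendsto.const_mul
      (tendsto_addHaar_ball_sub_div_addHaar_ball μ x (diam F)) (.inl one_ne_zero)
  rw [← hlim.limsup_eq, ← ENNReal.limsup_const_mul_of_ne_top hFb.measure_lt_top.ne]
  refine limsup_le_limsup (.of_forall fun R => ?_)
  simp only [← mul_div_assoc]
  exact ENNReal.div_le_div_right (measure_inter_mul_measure_ball_le hF hFb hP x R) _

end Density

section Lattice

variable {E : Type*} [NormedAddCommGroup E] [NormedSpace ℝ E] [FiniteDimensional ℝ E]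

lemma exists_basis_forall_mem_span_int_le_norm (r : ℝ) :
    ∃ b : Module.Basis (Fin (Module.finrank ℝ E)) ℝ E,
      ∀ v ∈ Submodule.span ℤ (Set.range b), v ≠ 0 → r ≤ ‖v‖ := by
  let b := Module.finBasis ℝ E
  obtain ⟨ε, hε, hball⟩ := exists_ball_inter_eq_singleton_of_mem_discrete
    (s := (Submodule.span ℤ (Set.range b) : Set E))
    ⟨inferInstanceAs (DiscreteTopology (Submodule.span ℤ (Set.range b)))⟩ (zero_mem _)
  have hmin : ∀ v ∈ Submodule.span ℤ (Set.range b), v ≠ 0 → ε ≤ ‖v‖ := fun v hv hv0 => by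
    by_contra! hlt
    exact hv0 (hball.subset ⟨mem_ball_zero_iff.2 hlt, hv⟩)
  obtain ⟨k, hk, hrk⟩ : ∃ k : ℝ, 0 < k ∧ r ≤ k * ε :=
    ⟨max 1 (r / ε), by positivity, (div_le_iff₀ hε).1 (le_max_right _ _)⟩
  refine ⟨b.isUnitSMul fun _ => hk.ne'.isUnit, ?_⟩
  rw [← ZSpan.smul b hk.ne']
  rintro _ ⟨v, hv, rfl⟩ hne
  calc r ≤ k * ε := hrk
    _ ≤ k * ‖v‖ := by
      gcongr
      exact hmin v hv fun h => hne (by simp [h])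
    _ = ‖k • v‖ := by rw [norm_smul, Real.norm_of_nonneg hk.le]

lemma exists_lattice_pairwise_disjoint_vadd [MeasurableSpace E] [OpensMeasurableSpace E]
    (μ : Measure E) {A : Set E} (hA : IsBounded A) :
    ∃ (L : AddSubgroup E) (F : Set E), Countable L ∧ IsAddFundamentalDomain L F μ ∧
      IsBounded F ∧ Pairwise (Disjoint on fun g : L => g +ᵥ A) := by
  obtain ⟨r, hr⟩ := (hA.sub hA).subset_ball (0 : E)
  obtain ⟨b, hb⟩ := exists_basis_forall_mem_span_int_le_norm (E := E) r
  let L := (Submodule.span ℤ (Set.range b)).toAddSubgroup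
  refine ⟨L, ZSpan.fundamentalDomain b,
    inferInstanceAs (Countable (Submodule.span ℤ (Set.range b))),
    ZSpan.isAddFundamentalDomain' b μ, ZSpan.fundamentalDomain_isBounded b, fun g h hgh => ?_⟩
  refine Set.disjoint_left.2 ?_
  rintro _ ⟨a, ha, rfl⟩ ⟨a', ha', heq⟩
  have hdiff : ((g - h : L) : E) = a' - a := by
    have hsum : (h : E) + a' = g + a := heq
    rw [AddSubgroup.coe_sub, sub_eq_sub_iff_add_eq_add, ← hsum, add_comm]
  have hlt : ‖a' - a‖ < r := mem_ball_zero_iff.1 (hr (Set.sub_mem_sub ha' ha))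
  exact hlt.not_ge (hdiff ▸ hb _ (g - h).2 (by simpa [sub_eq_zero] using hgh))

end Lattice

section MaximumPacking

lemma card_le_card_filter_not_disjoint {ι κ β : Type*} [Fintype κ] [PartialOrder β] [OrderBot β]
    {f : ι → β} {X : Finset ι} (hX : (X : Set ι).PairwiseDisjoint f)
    (hmax : ∀ Y : Finset ι, (Y : Set ι).PairwiseDisjoint f → Y.card ≤ X.card)
    {c : κ → ι} (hc : Pairwise (Disjoint on f ∘ c)) (hne : ∀ k, f (c k) ≠ ⊥) :
    Fintype.card κ ≤ {x ∈ X | ∃ k, ¬ Disjoint (f x) (f (c k))}.card := by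
  -- Replacing the members of `X` that meet the new family by that family cannot enlarge `X`.
  let Y := {x ∈ X | ¬ ∃ k, ¬ Disjoint (f x) (f (c k))}
  let Z := Finset.univ.image c
  have hYc : ∀ y ∈ Y, ∀ k, Disjoint (f y) (f (c k)) := fun y hy => by
    simpa only [not_exists, not_not] using (Finset.mem_filter.1 hy).2
  have hcinj : Injective c := fun k l hkl => by
    by_contra hne'
    have hdisj : Disjoint (f (c k)) (f (c l)) := hc hne'
    rw [← hkl, disjoint_self] at hdisj
    exact hne k hdisj
  have hYZ : Disjoint Y Z := Finset.disjoint_left.2 fun y hy hz => by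
    obtain ⟨k, -, rfl⟩ := Finset.mem_image.1 hz
    exact hne k (disjoint_self.1 (hYc _ hy k))
  have hpack : ((Y ∪ Z : Finset ι) : Set ι).PairwiseDisjoint f := by
    rw [Finset.coe_union, Set.pairwiseDisjoint_union]
    refine ⟨hX.subset (Finset.coe_subset.2 (Finset.filter_subset _ _)), ?_, ?_⟩
    · rw [Finset.coe_image, Finset.coe_univ, Set.image_univ]
      rintro _ ⟨k, rfl⟩ _ ⟨l, rfl⟩ hkl
      exact hc (ne_of_apply_ne c hkl)
    · intro y hy z hz _
      obtain ⟨k, -, rfl⟩ := Finset.mem_image.1 hz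
      exact hYc y hy k
  have hcard := hmax _ hpack
  rw [Finset.card_union_of_disjoint hYZ, Finset.card_image_of_injective _ hcinj,
    Finset.card_univ] at hcard
  have hsplit : {x ∈ X | ∃ k, ¬ Disjoint (f x) (f (c k))}.card + Y.card = X.card :=
    Finset.card_filter_add_card_filter_not _
  omega

lemma mul_measure_univ_le_sum_measure {ι α : Type*} [MeasurableSpace α] (μ : Measure α)
    (X : Finset ι) (T : ι → Set α) (n : ℕ) (hT : ∀ t, n ≤ {x ∈ X | t ∈ T x}.card) :
    n * μ Set.univ ≤ ∑ x ∈ X, μ (T x) := by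
  let T' x := toMeasurable μ (T x)
  have hT' : ∀ x, MeasurableSet (T' x) := fun x => measurableSet_toMeasurable μ (T x)
  have hcount : ∀ t, (n : ℝ≥0∞) ≤ ∑ x ∈ X, (T' x).indicator 1 t := fun t => by
    calc (n : ℝ≥0∞) ≤ {x ∈ X | t ∈ T x}.card := by exact_mod_cast hT t
      _ = ∑ x ∈ X, (T x).indicator 1 t := by
        simp only [Finset.card_filter, Nat.cast_sum, Nat.cast_ite, Nat.cast_one, Nat.cast_zero,
          Set.indicator_apply, Pi.one_apply]
      _ ≤ ∑ x ∈ X, (T' x).indicator 1 t := by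
        gcongr with x
        exact subset_toMeasurable μ (T x)
  calc n * μ Set.univ = ∫⁻ _, n ∂μ := (lintegral_const _).symm
    _ ≤ ∫⁻ t, ∑ x ∈ X, (T' x).indicator 1 t ∂μ := lintegral_mono hcount
    _ = ∑ x ∈ X, ∫⁻ t, (T' x).indicator 1 t ∂μ :=
      lintegral_finsetSum _ fun x _ => measurable_one.indicator (hT' x)
    _ = ∑ x ∈ X, μ (T x) := by
      simp only [lintegral_indicator_one (hT' _), T', measure_toMeasurable]

end MaximumPacking

section PeriodicPacking

variable {E : Type*} [AddCommGroup E] {L : AddSubgroup E} {F U : Set E}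

/-- The translates of `U` by the cosets `x + L`, for `x ∈ X`, are disjoint for distinct `x`.
That the translates of `U` within one coset are disjoint does not depend on `X`; it is a separate
condition on `L`. -/
def IsPeriodicPacking (L : AddSubgroup E) (U X : Set E) : Prop :=
  X.PairwiseDisjoint (· +ᵥ periodization L U)

lemma not_disjoint_vadd_periodization_iff {x y : E} :
    ¬ Disjoint (x +ᵥ periodization L U) (y +ᵥ periodization L U) ↔
      x - y ∈ periodization L (U - U) := by
  simp only [vadd_periodization_comm, Set.not_disjoint_iff, mem_periodization]
  constructor
  · rintro ⟨_, ⟨g, _, ⟨u, hu, rfl⟩, rfl⟩, h, _, ⟨v, hv, rfl⟩, heq⟩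
    refine ⟨h - g, v - u, Set.sub_mem_sub hv hu, ?_⟩
    have hsum : (h : E) + (y + v) = g + (x + u) := heq
    simp only [AddSubgroup.vadd_def, vadd_eq_add, AddSubgroup.coe_sub]
    linear_combination (norm := module) hsum
  · rintro ⟨g, _, ⟨u, hu, v, hv, rfl⟩, heq⟩
    refine ⟨x + v, ⟨0, _, ⟨v, hv, rfl⟩, zero_vadd _ _⟩, g, _, ⟨u, hu, rfl⟩, ?_⟩
    have hsum : (g : E) + (u - v) = x - y := heq
    simp only [AddSubgroup.vadd_def, vadd_eq_add]
    linear_combination (norm := module) hsum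

variable [MeasurableSpace E] [MeasurableAdd E] {μ : Measure E} [μ.IsAddLeftInvariant] [Countable L]

lemma IsPeriodicPacking.measure_inter {X : Finset E} (hX : IsPeriodicPacking L U X)
    (hF : IsAddFundamentalDomain L F μ) (hU : MeasurableSet U)
    (hLU : Pairwise (Disjoint on fun g : L => g +ᵥ U)) :
    μ ((⋃ x ∈ X, x +ᵥ periodization L U) ∩ F) = X.card * μ U := by
  have htranslate : ∀ x : E, μ ((x +ᵥ periodization L U) ∩ F) = μ U := fun x => by
    rw [vadd_periodization_comm, measure_periodization_inter hF (hU.const_vadd x), measure_vadd]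
    intro g h hgh
    simpa only [onFun, vadd_comm _ x, Set.disjoint_vadd_set] using hLU hgh
  rw [Set.iUnion₂_inter, measure_biUnion_finset₀]
  · simp only [htranslate, Finset.sum_const, nsmul_eq_mul]
  · intro x hx y hy hxy
    exact ((hX hx hy hxy).mono Set.inter_subset_left Set.inter_subset_left).aedisjoint
  · intro x _
    exact ((measurableSet_periodization hU).const_vadd x).nullMeasurableSet.inter
      hF.nullMeasurableSet

lemma exists_maximum_isPeriodicPacking (hF : IsAddFundamentalDomain L F μ) (hFt : μ F ≠ ⊤)
    (hU : MeasurableSet U) (hU0 : μ U ≠ 0) (hLU : Pairwise (Disjoint on fun g : L => g +ᵥ U)) :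
    ∃ X : Finset E, IsPeriodicPacking L U X ∧
      ∀ Y : Finset E, IsPeriodicPacking L U Y → Y.card ≤ X.card := by
  let N : Set ℕ := {m | ∃ X : Finset E, IsPeriodicPacking L U X ∧ X.card = m}
  have hbdd : BddAbove N := by
    obtain ⟨B, hB⟩ := ENNReal.exists_nat_gt (ENNReal.div_ne_top hFt hU0)
    refine ⟨B, ?_⟩
    rintro _ ⟨X, hX, rfl⟩
    have hvol : X.card * μ U ≤ μ F :=
      (hX.measure_inter hF hU hLU).symm.trans_le (measure_mono Set.inter_subset_right)
    exact_mod_cast (ENNReal.le_div_iff_mul_le (.inl hU0) (.inr hFt)).2 hvol |>.trans hB.le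
  have hne : N.Nonempty := ⟨0, ∅, by simp [IsPeriodicPacking], rfl⟩
  obtain ⟨X, hX, hXN⟩ := Nat.sSup_mem hne hbdd
  exact ⟨X, hX, fun Y hY => hXN ▸ le_csSup hbdd ⟨Y, hY, rfl⟩⟩

lemma IsPeriodicPacking.card_mul_measure_le {ι : Type*} [Fintype ι] {X : Finset E}
    (hX : IsPeriodicPacking L U X)
    (hmax : ∀ Y : Finset E, IsPeriodicPacking L U Y → Y.card ≤ X.card)
    (hF : IsAddFundamentalDomain L F μ) (hU : U.Nonempty) {c : ι → E}
    (hc : Pairwise (Disjoint on fun i => c i +ᵥ periodization L U)) :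
    Fintype.card ι * μ F ≤ X.card * μ (⋃ i, c i +ᵥ (U - U)) := by
  let T (x : E) : Set E := periodization L (-x +ᵥ ⋃ i, c i +ᵥ (U - U))
  have hT : ∀ t, Fintype.card ι ≤ {x ∈ X | t ∈ T x}.card := fun t => by
    have hne : ∀ x : E, (x +ᵥ periodization L U).Nonempty := fun x =>
      (Set.nonempty_iUnion.2 ⟨0, hU.vadd_set⟩).vadd_set
    have hct : Pairwise (Disjoint on (· +ᵥ periodization L U) ∘ fun i => -t + c i) :=
      fun i j hij => by
        simpa only [onFun, comp_apply, add_vadd, Set.disjoint_vadd_set] using hc hij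
    refine (card_le_card_filter_not_disjoint hX hmax hct fun i => (hne _).ne_empty).trans
      (Finset.card_le_card (Finset.monotone_filter_right X ?_))
    rintro x - ⟨i, hi⟩
    obtain ⟨g, w, hw, hgw⟩ := mem_periodization.1 (not_disjoint_vadd_periodization_iff.1 hi)
    have hsum : (g : E) + w = x - (-t + c i) := hgw
    refine mem_periodization.2
      ⟨g, -x + (c i + w), Set.vadd_mem_vadd_set (Set.mem_iUnion.2 ⟨i, w, hw, rfl⟩), ?_⟩
    simp only [AddSubgroup.vadd_def, vadd_eq_add]
    linear_combination (norm := module) hsum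
  have hsum := mul_measure_univ_le_sum_measure (μ.restrict F) X T (Fintype.card ι) hT
  rw [Measure.restrict_apply_univ] at hsum
  calc Fintype.card ι * μ F ≤ ∑ x ∈ X, μ.restrict F (T x) := hsum
    _ = ∑ x ∈ X, μ (T x ∩ F) := by simp only [Measure.restrict_apply₀' hF.nullMeasurableSet]
    _ ≤ ∑ _x ∈ X, μ (⋃ i, c i +ᵥ (U - U)) := Finset.sum_le_sum fun x _ =>
      (measure_periodization_inter_le hF).trans_eq (measure_vadd μ (-x) _)
    _ = X.card * μ (⋃ i, c i +ᵥ (U - U)) := by rw [Finset.sum_const, nsmul_eq_mul]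

end PeriodicPacking

lemma sub_subset_two_smul_of_convex_of_eq_neg {E : Type*} [AddCommGroup E] [Module ℝ E] {K : Set E}
    (hK : Convex ℝ K) (hsymm : K = -K) : K - K ⊆ (2 : ℝ) • K := by
  rw [sub_eq_add_neg, ← hsymm, ← one_add_one_eq_two, hK.add_smul zero_le_one zero_le_one, one_smul]

section PackingDensity

variable {d : ℕ} {K : Set (EuclideanSpace ℝ (Fin d))}

lemma IsTranslatePacking.limsup_le_packingDensity {C : Set (EuclideanSpace ℝ (Fin d))}
    (hC : IsTranslatePacking K C) :
    limsup (fun R : ℝ => volume ((⋃ c ∈ C, c +ᵥ K) ∩ ball 0 R) /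
      volume (ball (0 : EuclideanSpace ℝ (Fin d)) R)) atTop ≤ packingDensity K :=
  le_iSup₂_of_le C hC le_rfl

lemma IsPeriodicPacking.isTranslatePacking {L : AddSubgroup (EuclideanSpace ℝ (Fin d))}
    {X : Set (EuclideanSpace ℝ (Fin d))} (hX : IsPeriodicPacking L (interior K) X)
    (hLK : Pairwise (Disjoint on fun g : L => g +ᵥ interior K)) :
    IsTranslatePacking K (X + L) := by
  rintro _ ⟨x, hx, g, hg, rfl⟩ _ ⟨y, hy, h, hh, rfl⟩ hne
  simp only [interior_vadd, add_vadd]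
  obtain rfl | hxy := eq_or_ne x y
  · exact Set.disjoint_vadd_set.2
      (@hLK ⟨g, hg⟩ ⟨h, hh⟩ fun hgh => hne (by rw [Subtype.mk.inj hgh]))
  · exact (hX hx hy hxy).mono
      (Set.vadd_set_mono (Set.subset_iUnion (fun g : L => g +ᵥ interior K) ⟨g, hg⟩))
      (Set.vadd_set_mono (Set.subset_iUnion (fun g : L => g +ᵥ interior K) ⟨h, hh⟩))

lemma IsPeriodicPacking.card_mul_volume_interior_le
    {L : AddSubgroup (EuclideanSpace ℝ (Fin d))} [Countable L]
    {F : Set (EuclideanSpace ℝ (Fin d))} {X : Finset (EuclideanSpace ℝ (Fin d))}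
    (hX : IsPeriodicPacking L (interior K) X) (hF : IsAddFundamentalDomain L F volume)
    (hFb : IsBounded F) (hLK : Pairwise (Disjoint on fun g : L => g +ᵥ interior K)) :
    X.card * volume (interior K) ≤ packingDensity K * volume F := by
  let P := ⋃ x ∈ X, x +ᵥ periodization L (interior K)
  have hP : ∀ g : L, g +ᵥ P = P := fun g => by
    simp only [P, Set.vadd_set_iUnion, vadd_comm g, vadd_periodization]
  have hPK : P ⊆ ⋃ c ∈ (X : Set (EuclideanSpace ℝ (Fin d))) + L, c +ᵥ K := by
    refine Set.iUnion₂_subset fun x hx => ?_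
    rintro _ ⟨_, hz, rfl⟩
    obtain ⟨g, u, hu, rfl⟩ := mem_periodization.1 hz
    exact Set.mem_biUnion (Set.add_mem_add hx g.2) ⟨u, interior_subset hu, add_assoc _ _ _⟩
  calc X.card * volume (interior K) = volume (P ∩ F) :=
        (hX.measure_inter hF isOpen_interior.measurableSet hLK).symm
    _ ≤ volume F * limsup (fun R : ℝ => volume (P ∩ ball 0 R) /
          volume (ball (0 : EuclideanSpace ℝ (Fin d)) R)) atTop :=
        measure_inter_le_mul_limsup hF hFb hP 0
    _ ≤ volume F * packingDensity K := by
        gcongr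
        refine le_trans (limsup_le_limsup (.of_forall fun R => ?_))
          (hX.isTranslatePacking hLK).limsup_le_packingDensity
        exact ENNReal.div_le_div_right (measure_mono (Set.inter_subset_inter_left _ hPK)) _
    _ = packingDensity K * volume F := mul_comm _ _

theorem translate_packing_density_bound_general {ι : Type*} [Fintype ι] (hK : IsBounded K)
    (c : ι → EuclideanSpace ℝ (Fin d))
    (hpack : Pairwise (Disjoint on fun i => interior (c i +ᵥ K))) :
    Fintype.card ι * volume (interior K) ≤
      packingDensity K * volume (⋃ i, c i +ᵥ (interior K - interior K)) := by
  let U := interior K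
  change Fintype.card ι * volume U ≤ packingDensity K * volume (⋃ i, c i +ᵥ (U - U))
  obtain hU | hU := U.eq_empty_or_nonempty
  · simp [hU]
  have hUb : IsBounded U := hK.subset interior_subset
  have hA : IsBounded (U ∪ ⋃ i, c i +ᵥ U) :=
    hUb.union (isBounded_iUnion.2 fun i => hUb.vadd (c i))
  obtain ⟨L, F, _, hF, hFb, hLA⟩ := exists_lattice_pairwise_disjoint_vadd volume hA
  have hLU : Pairwise (Disjoint on fun g : L => g +ᵥ U) := hLA.mono fun g h hgh =>
    hgh.mono (Set.vadd_set_mono Set.subset_union_left) (Set.vadd_set_mono Set.subset_union_left)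
  have hc : Pairwise (Disjoint on fun i => c i +ᵥ periodization L U) := by
    simp only [vadd_periodization_comm]
    simp only [interior_vadd] at hpack
    exact pairwise_disjoint_periodization hpack (hLA.mono fun g h hgh => hgh.mono
      (Set.vadd_set_mono Set.subset_union_right) (Set.vadd_set_mono Set.subset_union_right))
  have hFt : volume F ≠ ⊤ := hFb.measure_lt_top.ne
  obtain ⟨X, hX, hmax⟩ := exists_maximum_isPeriodicPacking hF hFt isOpen_interior.measurableSet
    (isOpen_interior.measure_pos volume hU).ne' hLU
  rw [← ENNReal.mul_le_mul_iff_left (hF.measure_ne_zero (NeZero.ne volume)) hFt]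
  calc Fintype.card ι * volume U * volume F
      = Fintype.card ι * volume F * volume U := mul_right_comm _ _ _
    _ ≤ X.card * volume (⋃ i, c i +ᵥ (U - U)) * volume U :=
      mul_le_mul_left (hX.card_mul_measure_le hmax hF hU hc) _
    _ = X.card * volume U * volume (⋃ i, c i +ᵥ (U - U)) := mul_right_comm _ _ _
    _ ≤ packingDensity K * volume F * volume (⋃ i, c i +ᵥ (U - U)) :=
      mul_le_mul_left (hX.card_mul_volume_interior_le hF hFb hLU) _
    _ = packingDensity K * volume (⋃ i, c i +ᵥ (U - U)) * volume F := mul_right_comm _ _ _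

end PackingDensity

/-- For an `o`-symmetric convex body `K ⊆ ℝ^d` (`d ≥ 2`) and any packing
`c₁+K, …, c_n+K` of `n > 1` translates of `K`, one has
`n·vol_d(K) ≤ δ(K)·vol_d(⋃ᵢ (cᵢ + 2K))`. -/
theorem translate_packing_density_bound (d n : ℕ) (hd : 2 ≤ d) (hn : 1 < n)
    (K : Set (EuclideanSpace ℝ (Fin d))) (hKconv : Convex ℝ K) (hKcomp : IsCompact K)
    (hKint : (interior K).Nonempty) (hKsymm : K = -K)
    (c : Fin n → EuclideanSpace ℝ (Fin d))
    (hpack : ∀ i j, i ≠ j → Disjoint (interior (c i +ᵥ K)) (interior (c j +ᵥ K))) :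
    (n : ℝ≥0∞) * volume K ≤
      packingDensity K * volume (⋃ i, c i +ᵥ (2 : ℝ) • K) := by
  have hbound := translate_packing_density_bound_general hKcomp.isBounded c hpack
  rw [Fintype.card_fin, measure_interior_of_null_frontier (hKconv.addHaar_frontier volume)]
    at hbound
  grw [hbound, interior_subset, sub_subset_two_smul_of_convex_of_eq_neg hKconv hKsymm]
end
end
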